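/- Markov property: under the boundedness and Lipschitz assumptions on $\alpha$ and $\widetilde\beta$, the strong solution $\{x(t,x)\}$ of the SDE $x(t)=x+\int_0^t(q\nu+\alpha(x^S(\tau)))d\eta_\tau+\int_0^t\widetilde\beta(x^S(\tau))d\widetilde w(\eta_\tau)+w(t)$ is a Markov process with respect to the filtration $(\mathcal M_t)$: for all $0\le s\le t$ and Borel $\Gamma\subseteq\mathbb R^d$ there is a measurable function $\Phi_{t-s}(\cdot,\Gamma):\mathbb R^d\to\mathbb R$ such that $\mathbb E[\mathbf 1_{\{x(t,x)\in\Gamma\}}\,\xi]=\mathbb E[\Phi_{t-s}(x(s,x),\Gamma)\,\xi]$ for every bounded $\mathcal M_s$-measurable $\xi$. -/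

import Mathlib

/-!
Fix the starting point, write `X` for the solution, `x¹ = ⟪X, ν⟫`, `η` for the local time and
`ζ = w̃(η)`. A bounded variable `ξ` is called orthogonal to `V` (`Orth P ξ V`) when `E[ξ g(V)] = 0`
for all bounded measurable `g`. The Markov property follows from one statement, `Ctx.orth_sol`: a
bounded `M_s`-measurable variable that is orthogonal to `X_s` is orthogonal to `X_t`. Indeed, with
bounded regression functions `Φ(X_s)` of `1_Γ(X_t)` and `h(X_s)` of `ξ`, the variable `ξ - h(X_s)` is
orthogonal to `X_s`, hence to `X_t`, and
`E[1_Γ(X_t) ξ] = E[1_Γ(X_t) h(X_s)] = E[Φ(X_s) h(X_s)] = E[Φ(X_s) ξ]`.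

Orthogonality is propagated in three stages.

* Dimension one (`Setup.markov`). Along a fine grid, `cos (θ x¹ + φ)` is a martingale part plus a
  reflection term `- θ sin φ ∫ q dη`, because `η` only grows at the zeros of `x¹`. For even characters
  the reflection term is absent, so orthogonality to `|x¹_u|` passes to `|x¹_v|`, then to the additive
  functionals of `|x¹|`, and to `η`, which is a limit of such functionals. With the reflection term
  under control all characters can be treated. The argument allows the past to be enlarged by the path
  of `w̃` and by a transversal component of an increment of `w` (`twist`), since these are independent
  of the normal component of `w`.

* Increments of the noise (`Ctx.orth_incr`). Given the whole path of `w` and the past, `ζ_v - ζ_u` is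
  Gaussian with a covariance proportional to `η_v - η_u` (`Ctx.freeze`). Hence a bounded
  `M_u`-measurable variable orthogonal to `x¹_u` is orthogonal to the increment of `(η, ζ, w)` over
  `[u, v]`.

* The Euler scheme. One step is a function of the current state and of such an increment, so the
  scheme started on the solution stays orthogonal (`Ctx.orth_scheme`). It converges to the solution in
  probability (`Ctx.scheme_tendsto`): on `{η_T ≤ R}` the squared error weighted by `exp (-λ η)` grows
  in each step only by the squared modulus of continuity of `X` times the increment of `η`.
  Orthogonality passes to the limit.
-/

open MeasureTheory ProbabilityTheory Filter
open scoped RealInnerProductSpace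

noncomputable section

variable {Ω : Type} [MeasurableSpace Ω]

/-- A standard one-dimensional Wiener process on `(Ω, P)`. -/
structure IsWiener1 (P : Measure Ω) (w : ℝ → Ω → ℝ) : Prop where
  meas : ∀ t, Measurable (w t)
  start : ∀ᵐ ω ∂P, w 0 ω = 0
  cont : ∀ᵐ ω ∂P, Continuous fun t => w t ω
  incr_indep : ∀ s t : ℝ, 0 ≤ s → s ≤ t →
    IndepFun (fun ω => w t ω - w s ω) (fun ω (u : Set.Icc (0:ℝ) s) => w u ω) P
  incr_law : ∀ s t : ℝ, 0 ≤ s → s ≤ t →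
    Measure.map (fun ω => w t ω - w s ω) P = gaussianReal 0 (Real.toNNReal (t - s))

/-- A standard Wiener process with values in a Euclidean space `E`:
every projection on a unit vector of an increment is a centered Gaussian of
variance `t - s`, and increments are independent of the past. -/
structure IsWiener {E : Type} [NormedAddCommGroup E] [InnerProductSpace ℝ E]
    [MeasurableSpace E] [BorelSpace E] (P : Measure Ω) (w : ℝ → Ω → E) : Prop where
  meas : ∀ t, Measurable (w t)
  start : ∀ᵐ ω ∂P, w 0 ω = 0
  cont : ∀ᵐ ω ∂P, Continuous fun t => w t ω
  incr_indep : ∀ s t : ℝ, 0 ≤ s → s ≤ t →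
    IndepFun (fun ω => w t ω - w s ω) (fun ω (u : Set.Icc (0:ℝ) s) => w u ω) P
  incr_law : ∀ θ : E, ‖θ‖ = 1 → ∀ s t : ℝ, 0 ≤ s → s ≤ t →
    Measure.map (fun ω => ⟪w t ω - w s ω, θ⟫) P = gaussianReal 0 (Real.toNNReal (t - s))

/-- A standard Wiener process taking values in the hyperplane `S` orthogonal to `ν`. -/
structure IsWienerIn {E : Type} [NormedAddCommGroup E] [InnerProductSpace ℝ E]
    [MeasurableSpace E] [BorelSpace E] (P : Measure Ω) (ν : E) (w : ℝ → Ω → E) : Prop where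
  meas : ∀ t, Measurable (w t)
  start : ∀ᵐ ω ∂P, w 0 ω = 0
  cont : ∀ᵐ ω ∂P, Continuous fun t => w t ω
  mem : ∀ t ω, ⟪w t ω, ν⟫ = 0
  incr_indep : ∀ s t : ℝ, 0 ≤ s → s ≤ t →
    IndepFun (fun ω => w t ω - w s ω) (fun ω (u : Set.Icc (0:ℝ) s) => w u ω) P
  incr_law : ∀ θ : E, ‖θ‖ = 1 → ⟪θ, ν⟫ = 0 → ∀ s t : ℝ, 0 ≤ s → s ≤ t →
    Measure.map (fun ω => ⟪w t ω - w s ω, θ⟫) P = gaussianReal 0 (Real.toNNReal (t - s))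

/-- Two processes are independent (as path-valued random variables). -/
def IndepProc {E F : Type} [MeasurableSpace E] [MeasurableSpace F]
    (P : Measure Ω) (w : ℝ → Ω → E) (w' : ℝ → Ω → F) : Prop :=
  IndepFun (fun ω (t : ℝ) => w t ω) (fun ω (t : ℝ) => w' t ω) P

/-- The natural filtration `F^w_t = σ{w(u), 0 ≤ u ≤ t}` of a process `w`. -/
def natFilt {E : Type} [MeasurableSpace E] (w : ℝ → Ω → E) (t : ℝ) : MeasurableSpace Ω :=
  ⨆ u ∈ Set.Icc (0:ℝ) t, MeasurableSpace.comap (w u) inferInstance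

/-- The σ-algebra `F̃_t = σ{ {w̃(s) ∈ Γ} ∩ {η_t ≥ s} : s ≥ 0, Γ Borel }`. -/
def tildeFilt {E : Type} [MeasurableSpace E] (wt : ℝ → Ω → E) (η : ℝ → Ω → ℝ) (t : ℝ) :
    MeasurableSpace Ω :=
  MeasurableSpace.generateFrom
    {A | ∃ s : ℝ, 0 ≤ s ∧ ∃ Γ : Set E, MeasurableSet Γ ∧
      A = {ω | wt s ω ∈ Γ ∧ s ≤ η t ω}}

/-- The enlarged filtration `M_t = F^w_t ∨ F̃_t`. -/
def MFilt {E F : Type} [MeasurableSpace E] [MeasurableSpace F]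
    (w : ℝ → Ω → E) (wt : ℝ → Ω → F) (η : ℝ → Ω → ℝ) (t : ℝ) : MeasurableSpace Ω :=
  natFilt w t ⊔ tildeFilt wt η t

/-- `η` is a continuous nondecreasing process, adapted to the natural filtration of `w`,
starting at `0`. -/
structure NiceEta {E : Type} [MeasurableSpace E] (P : Measure Ω) (w : ℝ → Ω → E)
    (η : ℝ → Ω → ℝ) : Prop where
  adapted : ∀ t : ℝ, 0 ≤ t → Measurable[natFilt w t] (η t)
  cont : ∀ᵐ ω ∂P, Continuous fun t => η t ω
  mono : ∀ᵐ ω ∂P, Monotone fun t => η t ω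
  zero : ∀ᵐ ω ∂P, η 0 ω = 0

/-- `(x¹, η)` is a skew Brownian motion pair with parameter `q`, driven by the
one-dimensional Wiener process `w1` and started at `a`: `x¹(t) = a + q η_t + w¹(t)`
and `η` is the symmetric local time of `x¹` at `0`. -/
structure IsSkewLT (P : Measure Ω) (q : ℝ) (w1 : ℝ → Ω → ℝ) (a : ℝ)
    (x1 : ℝ → Ω → ℝ) (η : ℝ → Ω → ℝ) : Prop where
  adapted_x : ∀ t : ℝ, 0 ≤ t → Measurable[natFilt w1 t] (x1 t)
  adapted_eta : ∀ t : ℝ, 0 ≤ t → Measurable[natFilt w1 t] (η t)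
  cont : ∀ᵐ ω ∂P, Continuous fun t => η t ω
  mono : ∀ᵐ ω ∂P, Monotone fun t => η t ω
  zero : ∀ᵐ ω ∂P, η 0 ω = 0
  eqn : ∀ t : ℝ, 0 ≤ t → ∀ᵐ ω ∂P, x1 t ω = a + q * η t ω + w1 t ω
  localTime : ∀ t : ℝ, 0 ≤ t → ∀ᵐ ω ∂P,
    Tendsto (fun ε : ℝ =>
        (1 / (2 * ε)) * ∫ τ in (0:ℝ)..t, (if |x1 τ ω| ≤ ε then (1:ℝ) else 0))
      (nhdsWithin 0 (Set.Ioi 0)) (nhds (η t ω))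

/-- Orthogonal projection on the hyperplane orthogonal to the unit vector `ν`. -/
def projS {E : Type} [NormedAddCommGroup E] [InnerProductSpace ℝ E] (ν : E) (v : E) : E :=
  v - ⟪v, ν⟫ • ν

/-- `x` solves, on `[s, ∞)`, the SDE
`x(t) = ξ + ∫_s^t (qν + α(xˢ(τ))) dη_τ + ∫_s^t β̃(xˢ(τ)) dζ_τ + w(t) - w(s)`,
the two integrals being understood as limits in probability of left Riemann sums
(Lebesgue–Stieltjes resp. Itô integrals). -/
structure SolvesFrom {E : Type} [NormedAddCommGroup E] [InnerProductSpace ℝ E]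
    [MeasurableSpace E] [BorelSpace E]
    (P : Measure Ω) (Mfil : ℝ → MeasurableSpace Ω) (ν : E) (q : ℝ)
    (α : E → E) (βt : E → E →L[ℝ] E)
    (w : ℝ → Ω → E) (η : ℝ → Ω → ℝ) (ζ : ℝ → Ω → E)
    (s : ℝ) (ξ : Ω → E) (x : ℝ → Ω → E) : Prop where
  init : ∀ᵐ ω ∂P, x s ω = ξ ω
  adapted : ∀ t : ℝ, s ≤ t → Measurable[Mfil t] (x t)
  cont : ∀ᵐ ω ∂P, ContinuousOn (fun t => x t ω) (Set.Ici s)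
  eqn : ∀ t : ℝ, s ≤ t → ∃ A M : Ω → E,
    TendstoInMeasure P
      (fun n ω => ∑ k ∈ Finset.range n,
        (η (s + ((k:ℝ)+1) * (t - s) / n) ω - η (s + (k:ℝ) * (t - s) / n) ω) •
          (q • ν + α (projS ν (x (s + (k:ℝ) * (t - s) / n) ω)))) atTop A ∧
    TendstoInMeasure P
      (fun n ω => ∑ k ∈ Finset.range n,
        (βt (projS ν (x (s + (k:ℝ) * (t - s) / n) ω)))
          (ζ (s + ((k:ℝ)+1) * (t - s) / n) ω - ζ (s + (k:ℝ) * (t - s) / n) ω)) atTop M ∧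
    ∀ᵐ ω ∂P, x t ω = ξ ω + A ω + M ω + (w t ω - w s ω)

set_option linter.unusedSectionVars false

/-! ### Orthogonality to functions of a random variable -/

/-- `f` is bounded and measurable with respect to the σ-algebra `m`. -/
def BM {A : Type*} (m : MeasurableSpace A) (f : A → ℝ) : Prop :=
  Measurable[m] f ∧ ∃ C, ∀ a, |f a| ≤ C

namespace BM
variable {A : Type*} {m m' : MeasurableSpace A} {f g : A → ℝ}

theorem le (hf : BM m f) (h : m ≤ m') : BM m' f := ⟨hf.1.mono h le_rfl, hf.2⟩

theorem const (c : ℝ) : BM m (fun _ => c) := ⟨measurable_const, |c|, fun _ => le_rfl⟩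

theorem mul (hf : BM m f) (hg : BM m g) : BM m (fun a => f a * g a) := by
  obtain ⟨hf, C, hC⟩ := hf
  obtain ⟨hg, D, hD⟩ := hg
  refine ⟨hf.mul hg, C * D, fun a => ?_⟩
  rw [abs_mul]
  exact mul_le_mul (hC a) (hD a) (abs_nonneg _) ((abs_nonneg _).trans (hC a))

theorem add (hf : BM m f) (hg : BM m g) : BM m (fun a => f a + g a) := by
  obtain ⟨hf, C, hC⟩ := hf
  obtain ⟨hg, D, hD⟩ := hg
  exact ⟨hf.add hg, C + D, fun a => (abs_add_le _ _).trans (add_le_add (hC a) (hD a))⟩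

theorem sub (hf : BM m f) (hg : BM m g) : BM m (fun a => f a - g a) := by
  obtain ⟨hf, C, hC⟩ := hf
  obtain ⟨hg, D, hD⟩ := hg
  exact ⟨hf.sub hg, C + D, fun a => (abs_sub _ _).trans (add_le_add (hC a) (hD a))⟩

theorem neg (hf : BM m f) : BM m (fun a => - f a) := by
  simpa using (const 0).sub hf

theorem abs (hf : BM m f) : BM m (fun a => |f a|) := by
  obtain ⟨hf, C, hC⟩ := hf
  exact ⟨_root_.measurable_abs.comp hf, C, fun a => by simpa using hC a⟩

theorem comp {B : Type*} {mB : MeasurableSpace B} (hf : BM m f) {V : B → A}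
    (hV : @Measurable B A mB m V) : BM mB (fun b => f (V b)) :=
  ⟨hf.1.comp hV, hf.2.imp fun _ h _ => h _⟩

theorem cos (hf : Measurable[m] f) : BM m (fun a => Real.cos (f a)) :=
  ⟨Real.measurable_cos.comp hf, 1, fun _ => Real.abs_cos_le_one _⟩

theorem sin (hf : Measurable[m] f) : BM m (fun a => Real.sin (f a)) :=
  ⟨Real.measurable_sin.comp hf, 1, fun _ => Real.abs_sin_le_one _⟩

theorem indicator {s : Set A} (hs : MeasurableSet[m] s) :
    BM m (s.indicator (fun _ => (1:ℝ))) := by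
  refine ⟨measurable_const.indicator hs, 1, fun a => ?_⟩
  by_cases h : a ∈ s <;> simp [h]

theorem exp_neg (hf : Measurable[m] f) (h0 : ∀ a, 0 ≤ f a) : BM m (fun a => Real.exp (- f a)) :=
  ⟨Real.measurable_exp.comp hf.neg, 1, fun a => by
    rw [abs_of_pos (Real.exp_pos _)]; exact Real.exp_le_one_iff.2 (by linarith [h0 a])⟩

theorem finset_sum {ι : Type*} (s : Finset ι) {F : ι → A → ℝ} (h : ∀ i ∈ s, BM m (F i)) :
    BM m (fun a => ∑ i ∈ s, F i a) := by
  classical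
  induction s using Finset.induction_on with
  | empty => simpa using const 0
  | insert i s hi ih =>
    simp only [Finset.sum_insert hi]
    exact (h i (by simp)).add (ih fun j hj => h j (by simp [hj]))

end BM

theorem BM.integrable {A : Type*} {m m0 : MeasurableSpace A} {P : Measure A} [IsFiniteMeasure P]
    {f : A → ℝ} (hf : BM m f) (hm : m ≤ m0) : Integrable f P := by
  obtain ⟨C, hC⟩ := hf.2
  exact Integrable.of_bound (hf.1.mono hm le_rfl).aestronglyMeasurable C
    (Eventually.of_forall fun ω => by simpa using hC ω)

theorem BM.int {A : Type*} {m0 : MeasurableSpace A} {P : Measure A} [IsFiniteMeasure P]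
    {f : A → ℝ} (hf : BM m0 f) : Integrable f P := hf.integrable le_rfl

/-- `ξ` is orthogonal to every bounded function of `V`, that is `E[ξ | V] = 0`. -/
def Orth {F : Type*} [MeasurableSpace F] (P : Measure Ω) (ξ : Ω → ℝ) (V : Ω → F) : Prop :=
  ∀ g : F → ℝ, BM inferInstance g → ∫ ω, ξ ω * g (V ω) ∂P = 0

/-- The law of `V` under the measure with density `ξ⁺`. -/
def mp {F : Type*} [MeasurableSpace F] (P : Measure Ω) (ξ : Ω → ℝ) (V : Ω → F) : Measure F :=
  Measure.map V (P.withDensity fun ω => ENNReal.ofReal (ξ ω))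

section OrthLemmas

variable {P : Measure Ω} [IsFiniteMeasure P] {ξ : Ω → ℝ}

theorem isFinite_mp {F : Type*} [MeasurableSpace F] (hξ : BM inferInstance ξ) (V : Ω → F) :
    IsFiniteMeasure (mp P ξ V) := by
  have := isFiniteMeasure_withDensity_ofReal (μ := P) (f := ξ) hξ.int.2
  unfold mp
  infer_instance

theorem integral_mp {F : Type*} [MeasurableSpace F] (hξ : BM inferInstance ξ) {V : Ω → F}
    (hV : Measurable V) {g : F → ℝ} (hg : BM inferInstance g) :
    ∫ y, g y ∂(mp P ξ V) = ∫ ω, max (ξ ω) 0 * g (V ω) ∂P := by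
  unfold mp
  rw [integral_map hV.aemeasurable hg.1.aestronglyMeasurable,
    integral_withDensity_eq_integral_toReal_smul hξ.1.ennreal_ofReal
      (Eventually.of_forall fun _ => ENNReal.ofReal_lt_top)]
  simp [ENNReal.toReal_ofReal']

theorem BM.max_zero {A : Type*} {m : MeasurableSpace A} {f : A → ℝ} (hf : BM m f) :
    BM m (fun a => max (f a) 0) := by
  obtain ⟨hf, C, hC⟩ := hf
  refine ⟨hf.max measurable_const, C, fun a => ?_⟩
  rw [abs_of_nonneg (le_max_right _ _)]
  exact max_le ((le_abs_self _).trans (hC a)) ((abs_nonneg _).trans (hC a))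

theorem integral_mp_sub {F : Type*} [MeasurableSpace F] (hξ : BM inferInstance ξ) {V : Ω → F}
    (hV : Measurable V) {g : F → ℝ} (hg : BM inferInstance g) :
    ∫ y, g y ∂(mp P ξ V) - ∫ y, g y ∂(mp P (fun ω => - ξ ω) V) = ∫ ω, ξ ω * g (V ω) ∂P := by
  rw [integral_mp hξ hV hg, integral_mp hξ.neg hV hg, ← integral_sub]
  · refine integral_congr_ae (Eventually.of_forall fun ω => ?_)
    dsimp only
    rw [← sub_mul]
    congr 1
    rcases le_total 0 (ξ ω) with h | h
    · rw [max_eq_left h, max_eq_right (by linarith), sub_zero]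
    · rw [max_eq_right h, max_eq_left (by linarith)]; ring
  · exact (hξ.max_zero.mul (hg.comp hV)).int
  · exact (hξ.neg.max_zero.mul (hg.comp hV)).int

/-- Orthogonality is equality of the laws of `V` under the densities `ξ⁺` and `ξ⁻`. -/
theorem Orth.of_mp_eq {F : Type*} [MeasurableSpace F] (hξ : BM inferInstance ξ) {V : Ω → F}
    (hV : Measurable V) (h : mp P ξ V = mp P (fun ω => - ξ ω) V) : Orth P ξ V := by
  intro g hg
  rw [← integral_mp_sub hξ hV hg, h, sub_self]

theorem mp_real_sub {F : Type*} [MeasurableSpace F] (hξ : BM inferInstance ξ) {V : Ω → F}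
    (hV : Measurable V) {A : Set F} (hA : MeasurableSet A) :
    (mp P ξ V).real A - (mp P (fun ω => - ξ ω) V).real A
      = ∫ ω, ξ ω * A.indicator (fun _ => (1:ℝ)) (V ω) ∂P := by
  rw [← integral_mp_sub hξ hV (BM.indicator hA), integral_indicator_const _ hA,
    integral_indicator_const _ hA]
  simp

theorem Orth.comp {F G : Type*} [MeasurableSpace F] [MeasurableSpace G] {V : Ω → F}
    (h : Orth P ξ V) {g : F → G} (hg : Measurable g) : Orth P ξ (fun ω => g (V ω)) :=
  fun φ hφ => h (fun y => φ (g y)) (hφ.comp hg)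

theorem Orth.mul {F : Type*} [MeasurableSpace F] {V : Ω → F}
    (h : Orth P ξ V) {φ : F → ℝ} (hφ : BM inferInstance φ) :
    Orth P (fun ω => ξ ω * φ (V ω)) V := fun g hg => by
  simpa [mul_assoc] using h _ (hφ.mul hg)

theorem Orth.congr {F : Type*} [MeasurableSpace F] {V V' : Ω → F}
    (h : Orth P ξ V) (hV : ∀ᵐ ω ∂P, V ω = V' ω) : Orth P ξ V' := fun g hg => by
  rw [← h g hg]
  refine integral_congr_ae ?_
  filter_upwards [hV] with ω hω
  rw [hω]

theorem Orth.congr_left {F : Type*} [MeasurableSpace F] {V : Ω → F} {ξ' : Ω → ℝ}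
    (h : Orth P ξ V) (hV : ∀ᵐ ω ∂P, ξ ω = ξ' ω) : Orth P ξ' V := fun g hg => by
  rw [← h g hg]
  refine integral_congr_ae ?_
  filter_upwards [hV] with ω hω
  rw [hω]

theorem mp_eq_iff {F : Type*} [MeasurableSpace F] (hξ : BM inferInstance ξ) {V : Ω → F} {A : Set F}
     : mp P ξ V A = mp P (fun ω => - ξ ω) V A ↔
      (mp P ξ V).real A - (mp P (fun ω => - ξ ω) V).real A = 0 := by
  have := isFinite_mp (P := P) hξ V
  have := isFinite_mp (P := P) hξ.neg V
  rw [sub_eq_zero, measureReal_def, measureReal_def,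
    ENNReal.toReal_eq_toReal_iff' (measure_ne_top _ _) (measure_ne_top _ _)]

theorem Orth.mp_eq {F : Type*} [MeasurableSpace F] (hξ : BM inferInstance ξ) {V : Ω → F}
    (hV : Measurable V) (h : Orth P ξ V) : mp P ξ V = mp P (fun ω => - ξ ω) V := by
  ext A hA
  rw [mp_eq_iff hξ, mp_real_sub hξ hV hA]
  exact h _ (BM.indicator hA)

/-- Orthogonality to a pair `(H, N)`: it suffices that `ξ 1_A(H)` is orthogonal to `N` for all `A`,
since product sets form a π-system on which the laws under `ξ⁺` and `ξ⁻` then agree. -/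
theorem Orth.pair {F G : Type*} [MeasurableSpace F] [MeasurableSpace G] (hξ : BM inferInstance ξ)
    {H : Ω → F} {N : Ω → G} (hH : Measurable H) (hN : Measurable N)
    (h : ∀ A : Set F, MeasurableSet A →
      Orth P (fun ω => ξ ω * A.indicator (fun _ => (1:ℝ)) (H ω)) N) :
    Orth P ξ (fun ω => (H ω, N ω)) := by
  refine Orth.of_mp_eq hξ (hH.prodMk hN) ?_
  have := isFinite_mp (P := P) hξ (fun ω => (H ω, N ω))
  have := isFinite_mp (P := P) hξ.neg (fun ω => (H ω, N ω))
  refine Measure.ext_prod fun {A B} hA hB => ?_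
  rw [mp_eq_iff hξ, mp_real_sub hξ (hH.prodMk hN) (hA.prod hB)]
  rw [← h A hA _ (BM.indicator hB)]
  refine integral_congr_ae (Eventually.of_forall fun ω => ?_)
  dsimp only
  by_cases h1 : H ω ∈ A <;> by_cases h2 : N ω ∈ B <;> simp [h1, h2]

/-- Orthogonality passes to almost sure limits, since it can be tested on bounded
continuous functions. -/
theorem Orth.of_tendsto_ae {F : Type*} [MeasurableSpace F] [PseudoMetricSpace F] [BorelSpace F]
    (hξ : BM inferInstance ξ) {V : ℕ → Ω → F} {W : Ω → F} (hV : ∀ n, Measurable (V n))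
    (hW : Measurable W) (h : ∀ n, Orth P ξ (V n))
    (hlim : ∀ᵐ ω ∂P, Tendsto (fun n => V n ω) atTop (nhds (W ω))) : Orth P ξ W := by
  refine Orth.of_mp_eq hξ hW ?_
  have := isFinite_mp (P := P) hξ W
  have := isFinite_mp (P := P) hξ.neg W
  refine ext_of_forall_integral_eq_of_IsFiniteMeasure fun g => ?_
  have hg : BM inferInstance (g : F → ℝ) :=
    ⟨g.continuous.measurable, ‖g‖, fun y => g.norm_coe_le_norm y⟩
  rw [← sub_eq_zero, integral_mp_sub hξ hW hg]
  have hlim2 : Tendsto (fun n => ∫ ω, ξ ω * g (V n ω) ∂P) atTop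
      (nhds (∫ ω, ξ ω * g (W ω) ∂P)) := by
    obtain ⟨C, hC⟩ := hξ.2
    refine tendsto_integral_of_dominated_convergence (fun _ => C * ‖g‖) (fun n => ?_)
      (integrable_const _) (fun n => Eventually.of_forall fun ω => ?_) ?_
    · exact (hξ.mul (hg.comp (hV n))).1.aestronglyMeasurable
    · rw [Real.norm_eq_abs, abs_mul]
      exact mul_le_mul (hC ω) (g.norm_coe_le_norm _) (abs_nonneg _) ((abs_nonneg _).trans (hC ω))
    · filter_upwards [hlim] with ω hω
      exact ((g.continuous.tendsto _).comp hω).const_mul _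
  have : ∀ n, ∫ ω, ξ ω * g (V n ω) ∂P = 0 := fun n => h n _ hg
  simp only [this] at hlim2
  exact (tendsto_nhds_unique hlim2 tendsto_const_nhds)

theorem Orth.of_tendstoInMeasure {F : Type*} [MeasurableSpace F] [PseudoMetricSpace F]
    [BorelSpace F]
    (hξ : BM inferInstance ξ) {V : ℕ → Ω → F} {W : Ω → F} (hV : ∀ n, Measurable (V n))
    (hW : Measurable W) (h : ∀ n, Orth P ξ (V n))
    (hlim : TendstoInMeasure P V atTop W) : Orth P ξ W := by
  obtain ⟨ns, -, hns⟩ := hlim.exists_seq_tendsto_ae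
  exact Orth.of_tendsto_ae hξ (fun n => hV (ns n)) hW (fun n => h _) hns

/-- Orthogonality can be tested on characters. -/
theorem Orth.of_cos {F : Type*} [NormedAddCommGroup F] [NormedSpace ℝ F] [MeasurableSpace F]
    [BorelSpace F] [SecondCountableTopology F] [CompleteSpace F]
    (hξ : BM inferInstance ξ) {V : Ω → F} (hV : Measurable V)
    (h : ∀ (L : F →L[ℝ] ℝ) (c : ℝ), ∫ ω, ξ ω * Real.cos (L (V ω) + c) ∂P = 0) :
    Orth P ξ V := by
  refine Orth.of_mp_eq hξ hV ?_
  have := isFinite_mp (P := P) hξ V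
  have := isFinite_mp (P := P) hξ.neg V
  refine Measure.ext_of_charFunDual ?_
  ext L
  have key : ∀ c : ℝ, ∫ y, Real.cos (L y + c) ∂(mp P ξ V)
      = ∫ y, Real.cos (L y + c) ∂(mp P (fun ω => - ξ ω) V) := fun c => by
    rw [← sub_eq_zero, integral_mp_sub hξ hV (BM.cos (by fun_prop))]
    exact h L c
  have expand : ∀ (μ : Measure F) [IsFiniteMeasure μ], charFunDual μ L
      = ((∫ y, Real.cos (L y + 0) ∂μ : ℝ) : ℂ)
        - ((∫ y, Real.cos (L y + Real.pi / 2) ∂μ : ℝ) : ℂ) * Complex.I := by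
    intro μ _
    rw [charFunDual_apply, ← integral_complex_ofReal, ← integral_complex_ofReal,
      ← integral_mul_const, ← integral_sub]
    · refine integral_congr_ae (Eventually.of_forall fun y => ?_)
      dsimp only
      rw [Complex.exp_mul_I, Real.cos_add_pi_div_two, add_zero]
      push_cast
      ring
    · exact (BM.cos (f := fun y => L y + 0) (by fun_prop)).int.ofReal
    · exact (BM.cos (f := fun y => L y + Real.pi / 2) (by fun_prop)).int.ofReal.mul_const _
  rw [expand, expand, key, key]

/-- Orthogonality to `|V|` can be tested on the even characters of `V`. -/
theorem Orth.abs_of_cos (hξ : BM inferInstance ξ) {V : Ω → ℝ} (hV : Measurable V)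
    (h : ∀ θ : ℝ, ∫ ω, ξ ω * Real.cos (θ * V ω) ∂P = 0) :
    Orth P ξ (fun ω => |V ω|) := by
  -- compare the symmetrised laws of `V`
  have hf1 := isFinite_mp (P := P) hξ V
  have hf2 := isFinite_mp (P := P) hξ.neg V
  have hsym : mp P ξ V + (mp P ξ V).map (fun y => -y)
      = mp P (fun ω => - ξ ω) V + (mp P (fun ω => - ξ ω) V).map (fun y => -y) := by
    refine Measure.ext_of_charFunDual ?_
    ext L
    have hL : ∀ y, L y = L 1 * y := fun y => by
      have := L.map_smul y (1:ℝ)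
      simp only [smul_eq_mul, mul_one] at this
      rw [this, mul_comm]
    have key : ∫ y, Real.cos (L y) ∂(mp P ξ V)
        = ∫ y, Real.cos (L y) ∂(mp P (fun ω => - ξ ω) V) := by
      rw [← sub_eq_zero, integral_mp_sub hξ hV (BM.cos (by fun_prop))]
      simpa only [← hL] using h (L 1)
    have expand : ∀ (μ : Measure ℝ) [IsFiniteMeasure μ],
        charFunDual (μ + μ.map (fun y => -y)) L = 2 * ((∫ y, Real.cos (L y) ∂μ : ℝ) : ℂ) := by
      intro μ _
      have hi : ∀ μ : Measure ℝ, IsFiniteMeasure μ →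
          Integrable (fun y => Complex.exp (L y * Complex.I)) μ := fun μ _ => by
        refine Integrable.of_bound (by fun_prop) 1 (Eventually.of_forall fun y => ?_)
        rw [Complex.norm_exp_ofReal_mul_I]
      rw [charFunDual_apply, integral_add_measure (hi _ inferInstance) (hi _ inferInstance),
        integral_map (by fun_prop) (by fun_prop), ← integral_complex_ofReal,
        ← integral_const_mul, ← integral_add (hi _ inferInstance)]
      · refine integral_congr_ae (Eventually.of_forall fun y => ?_)
        dsimp only
        rw [Complex.exp_mul_I, Complex.exp_mul_I, map_neg]
        push_cast
        rw [Complex.cos_neg, Complex.sin_neg]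
        ring
      · refine Integrable.of_bound (by fun_prop) 1 (Eventually.of_forall fun y => ?_)
        rw [Complex.norm_exp_ofReal_mul_I]
    rw [expand, expand, key]
  intro g hg
  have hg' : BM inferInstance (fun y : ℝ => g |y|) := hg.comp _root_.measurable_abs
  have e : ∀ (μ : Measure ℝ) [IsFiniteMeasure μ],
      ∫ y, g |y| ∂(μ + μ.map (fun y => -y)) = 2 * ∫ y, g |y| ∂μ := by
    intro μ _
    rw [integral_add_measure hg'.int hg'.int, integral_map (by fun_prop)
      hg'.1.aestronglyMeasurable]
    simp only [abs_neg]
    ring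
  have h1 := e (mp P ξ V)
  rw [hsym, e] at h1
  have h2 := integral_mp_sub (P := P) hξ hV hg'
  rw [← h2]
  linarith

end OrthLemmas

/-- Almost sure limits, without measurability of the limit. -/
theorem Orth.of_tendsto_ae' {P : Measure Ω} [IsFiniteMeasure P] {ξ : Ω → ℝ}
    {F : Type*} [MeasurableSpace F] [PseudoMetricSpace F] [BorelSpace F]
    (hξ : BM inferInstance ξ) {V : ℕ → Ω → F} {W : Ω → F} (hV : ∀ n, AEMeasurable (V n) P)
    (h : ∀ n, Orth P ξ (V n))
    (hlim : ∀ᵐ ω ∂P, Tendsto (fun n => V n ω) atTop (nhds (W ω))) : Orth P ξ W := by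
  have hW : AEMeasurable W P := aemeasurable_of_tendsto_metrizable_ae' hV hlim
  refine Orth.congr ?_ (hW.ae_eq_mk.mono fun ω hω => hω.symm)
  refine Orth.of_tendsto_ae (V := fun n => (hV n).mk) hξ (fun n => (hV n).measurable_mk)
    hW.measurable_mk (fun n => (h n).congr (hV n).ae_eq_mk) ?_
  filter_upwards [hlim, hW.ae_eq_mk, ae_all_iff.2 fun n => (hV n).ae_eq_mk] with ω h1 h2 h3
  rw [← h2]
  exact h1.congr h3

/-! ### Grids and Taylor errors along a path -/

/-- The `k`-th point of the uniform grid with `n` steps on `[u, v]`. -/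
def grid (u v : ℝ) (n k : ℕ) : ℝ := u + k * ((v - u) / n)

section Grid
variable {u v : ℝ} {n k : ℕ}

theorem grid_zero : grid u v n 0 = u := by simp [grid]

theorem grid_last (hn : 0 < n) : grid u v n n = v := by
  have : (n:ℝ) ≠ 0 := by positivity
  unfold grid; field_simp; ring

theorem grid_succ : grid u v n (k + 1) = grid u v n k + (v - u) / n := by
  unfold grid; push_cast; ring

theorem grid_le_succ (huv : u ≤ v) : grid u v n k ≤ grid u v n (k + 1) := by
  rw [grid_succ]
  have : 0 ≤ (v - u) / n := div_nonneg (by linarith) (by positivity)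
  linarith

theorem grid_mono (huv : u ≤ v) : Monotone (grid u v n) :=
  monotone_nat_of_le_succ fun _ => grid_le_succ huv

theorem le_grid (huv : u ≤ v) : u ≤ grid u v n k := by
  simpa [grid_zero] using grid_mono (n := n) huv (Nat.zero_le k)

theorem grid_le (huv : u ≤ v) (hk : k ≤ n) : grid u v n k ≤ v := by
  rcases Nat.eq_zero_or_pos n with rfl | hn
  · simp only [Nat.le_zero] at hk; subst hk; simpa [grid_zero] using huv
  · simpa [grid_last hn] using grid_mono (n := n) huv hk

theorem grid_mem (huv : u ≤ v) (hk : k ≤ n) : grid u v n k ∈ Set.Icc u v :=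
  ⟨le_grid huv, grid_le huv hk⟩

theorem grid_step_tendsto : Tendsto (fun n : ℕ => (v - u) / n) atTop (nhds 0) :=
  tendsto_const_div_atTop_nhds_zero_nat _

/-- Uniform continuity along the grids. -/
theorem osc_small {g : ℝ → ℝ} (hg : ContinuousOn g (Set.Icc u v)) {ε : ℝ} (hε : 0 < ε) :
    ∀ᶠ n : ℕ in atTop, ∀ a ∈ Set.Icc u v, ∀ b ∈ Set.Icc u v, |a - b| ≤ (v - u) / n →
      |g a - g b| ≤ ε := by
  have huc := isCompact_Icc.uniformContinuousOn_of_continuous hg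
  rw [Metric.uniformContinuousOn_iff] at huc
  obtain ⟨δ, hδ, h⟩ := huc ε hε
  filter_upwards [(grid_step_tendsto (u := u) (v := v)).eventually (gt_mem_nhds hδ)]
    with n hn a ha b hb hab
  exact (h a ha b hb (lt_of_le_of_lt hab hn)).le

theorem riemann_tendsto {g : ℝ → ℝ} (huv : u ≤ v) (hg : ContinuousOn g (Set.Icc u v)) :
    Tendsto (fun n : ℕ => ∑ i ∈ Finset.range n, (v - u) / n * g (grid u v n i)) atTop
      (nhds (∫ τ in u..v, g τ)) := by
  rw [Metric.tendsto_atTop']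
  intro ε hε
  obtain ⟨δ, hδ, hδε⟩ : ∃ δ > 0, δ * (v - u) < ε :=
    ⟨ε / (v - u + 1) , by have : 0 < v - u + 1 := by linarith
                          positivity, by
      rw [div_mul_eq_mul_div, div_lt_iff₀ (by linarith)]; nlinarith⟩
  obtain ⟨n0, hn0⟩ := eventually_atTop.1 (osc_small (u := u) (v := v) hg hδ)
  refine ⟨n0, fun n hn => ?_⟩
  have hnpos : 0 < n := lt_of_le_of_lt (Nat.zero_le _) hn
  have hosc := hn0 n hn.le
  have hstep : 0 ≤ (v - u) / n := div_nonneg (by linarith) (by positivity)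
  have hii : ∀ k < n, IntervalIntegrable g volume (grid u v n k) (grid u v n (k+1)) :=
    fun k hk => (hg.mono (by
      rw [Set.uIcc_of_le (grid_le_succ huv)]
      exact Set.Icc_subset_Icc (le_grid huv) (grid_le huv hk))).intervalIntegrable
  have hsum : ∫ τ in u..v, g τ
      = ∑ i ∈ Finset.range n, ∫ τ in (grid u v n i)..(grid u v n (i+1)), g τ := by
    rw [intervalIntegral.sum_integral_adjacent_intervals hii, grid_zero, grid_last hnpos]
  rw [hsum, dist_eq_norm, ← Finset.sum_sub_distrib]
  calc ‖∑ i ∈ Finset.range n, ((v - u) / n * g (grid u v n i)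
          - ∫ τ in (grid u v n i)..(grid u v n (i+1)), g τ)‖
      ≤ ∑ i ∈ Finset.range n, δ * ((v - u) / n) := by
        refine norm_sum_le_of_le _ fun i hi => ?_
        have hi' : i < n := Finset.mem_range.1 hi
        have e1 : (v - u) / n * g (grid u v n i)
            = ∫ τ in (grid u v n i)..(grid u v n (i+1)), g (grid u v n i) := by
          rw [intervalIntegral.integral_const, smul_eq_mul, grid_succ]; ring
        rw [e1, ← intervalIntegral.integral_sub (by simp) (hii i hi')]
        have e2 := intervalIntegral.norm_integral_le_of_norm_le_const
          (f := fun τ => g (grid u v n i) - g τ) (a := grid u v n i) (b := grid u v n (i+1))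
          (C := δ) (fun τ hτ => by
            rw [Set.uIoc_of_le (grid_le_succ huv)] at hτ
            refine hosc _ (grid_mem huv hi'.le) τ
              ⟨(le_grid huv).trans hτ.1.le, hτ.2.trans (grid_le huv hi')⟩ ?_
            rw [abs_le, ← neg_le_neg_iff]
            have := hτ.1; have h2 := hτ.2
            rw [grid_succ] at h2
            constructor <;> linarith)
        refine e2.trans_eq ?_
        rw [grid_succ, add_sub_cancel_left, abs_of_nonneg hstep]
    _ = δ * (v - u) := by
        rw [Finset.sum_const, Finset.card_range, nsmul_eq_mul]
        field_simp
    _ < ε := hδε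

end Grid

/-- The first order error of `y ↦ cos (θ y + φ)`, where the derivative is taken at `0`. -/
def taylorErr (θ φ y d : ℝ) : ℝ :=
  Real.cos (θ * y + φ) - Real.cos (θ * (y - d) + φ) + θ * Real.sin φ * d

theorem abs_cos_sub_cos_le (a b : ℝ) : |Real.cos a - Real.cos b| ≤ |a - b| := by
  have := Convex.norm_image_sub_le_of_norm_hasDerivWithin_le (f := Real.cos)
    (f' := fun x => - Real.sin x) (s := Set.univ) (C := 1) (x := b) (y := a)
    (fun x _ => (Real.hasDerivAt_cos x).hasDerivWithinAt)
    (fun x _ => by simpa using Real.abs_sin_le_one x) convex_univ trivial trivial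
  simpa using this

theorem cos_incr_le (θ φ y d : ℝ) :
    |Real.cos (θ * y + φ) - Real.cos (θ * (y - d) + φ)| ≤ |θ| * |d| := by
  refine (abs_cos_sub_cos_le _ _).trans_eq ?_
  rw [← abs_mul]; congr 1; ring

theorem taylorErr_le (θ φ y d : ℝ) : |taylorErr θ φ y d| ≤ 2 * |θ| * |d| := by
  unfold taylorErr
  refine (abs_add_le _ _).trans ?_
  have h1 := cos_incr_le θ φ y d
  have h2 : |θ * Real.sin φ * d| ≤ |θ| * |d| := by
    rw [abs_mul, abs_mul]
    have := Real.abs_sin_le_one φ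
    have h3 : |θ| * |Real.sin φ| ≤ |θ| := by nlinarith [abs_nonneg θ]
    nlinarith [abs_nonneg d]
  linarith

/-- The error is quadratic when `y` is as small as `d`, which is the case near the zeros of the path. -/
theorem taylorErr_le' (θ φ y d : ℝ) : |taylorErr θ φ y d| ≤ θ ^ 2 * (|y| + |d|) * |d| := by
  have hder : ∀ z : ℝ, HasDerivAt (fun z => Real.cos (θ * z + φ) + θ * Real.sin φ * z)
      (- Real.sin (θ * z + φ) * θ + θ * Real.sin φ) z := fun z => by
    have h1 : HasDerivAt (fun z : ℝ => θ * z + φ) θ z := by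
      simpa using ((hasDerivAt_id z).const_mul θ).add_const φ
    have h2 : HasDerivAt (fun z : ℝ => θ * Real.sin φ * z) (θ * Real.sin φ) z := by
      simpa using (hasDerivAt_id z).const_mul (θ * Real.sin φ)
    exact h1.cos.add h2
  have := Convex.norm_image_sub_le_of_norm_hasDerivWithin_le
    (f := fun z => Real.cos (θ * z + φ) + θ * Real.sin φ * z)
    (f' := fun z => - Real.sin (θ * z + φ) * θ + θ * Real.sin φ)
    (s := Metric.closedBall 0 (|y| + |d|)) (C := θ ^ 2 * (|y| + |d|)) (x := y - d) (y := y)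
    (fun x _ => (hder x).hasDerivWithinAt)
    (fun z hz => by
      have hz' : |z| ≤ |y| + |d| := by simpa using hz
      have e : - Real.sin (θ * z + φ) * θ + θ * Real.sin φ
          = θ * (Real.cos (φ + Real.pi / 2 + θ * z) - Real.cos (φ + Real.pi / 2)) := by
        rw [show φ + Real.pi / 2 + θ * z = (θ * z + φ) + Real.pi / 2 by ring,
          Real.cos_add_pi_div_two, Real.cos_add_pi_div_two]; ring
      rw [e, Real.norm_eq_abs, abs_mul]
      have h1 := abs_cos_sub_cos_le (φ + Real.pi / 2 + θ * z) (φ + Real.pi / 2)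
      rw [add_sub_cancel_left, abs_mul] at h1
      calc |θ| * _ ≤ |θ| * (|θ| * |z|) := by gcongr
        _ = θ ^ 2 * |z| := by rw [← mul_assoc, ← abs_mul, ← sq, abs_sq]
        _ ≤ _ := by gcongr)
    (convex_closedBall _ _)
    (by simpa using abs_sub y d)
    (by simp)
  rw [Real.norm_eq_abs, Real.norm_eq_abs, sub_sub_cancel] at this
  refine le_trans (le_of_eq ?_) this
  unfold taylorErr
  congr 1; ring

section Path

/-- The sum of the weighted first order errors along the grid. -/
def errSum (q u v θ φ : ℝ) (x N : ℝ → ℝ) (n : ℕ) : ℝ :=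
  ∑ k ∈ Finset.range n, Real.exp (θ ^ 2 / 2 * ((k + 1) * ((v - u) / n))) *
    taylorErr θ φ (x (grid u v n (k + 1))) (q * (N (grid u v n (k + 1)) - N (grid u v n k)))

variable {q u v : ℝ} {x N : ℝ → ℝ}

theorem weight_le (huv : u ≤ v) (θ : ℝ) {n k : ℕ} (hk : k < n) :
    Real.exp (θ ^ 2 / 2 * ((k + 1) * ((v - u) / n))) ≤ Real.exp (θ ^ 2 / 2 * (v - u)) := by
  have hn : (0:ℝ) < n := by exact_mod_cast lt_of_le_of_lt (Nat.zero_le _) hk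
  have hk' : (k:ℝ) + 1 ≤ n := by exact_mod_cast hk
  have : ((k:ℝ) + 1) * ((v - u) / n) ≤ v - u := by
    rw [mul_div_assoc', div_le_iff₀ hn, mul_comm]
    exact mul_le_mul_of_nonneg_left hk' (by linarith)
  gcongr

theorem sum_incr {n : ℕ} (hn : 0 < n) :
    ∑ k ∈ Finset.range n, (N (grid u v n (k + 1)) - N (grid u v n k)) = N v - N u := by
  rw [Finset.sum_range_sub (fun k => N (grid u v n k)), grid_zero, grid_last hn]

theorem incr_nonneg (huv : u ≤ v) (hN : MonotoneOn N (Set.Icc u v)) {n k : ℕ} (hk : k < n) :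
    0 ≤ N (grid u v n (k + 1)) - N (grid u v n k) :=
  sub_nonneg.2 (hN (grid_mem huv hk.le) (grid_mem huv hk) (grid_le_succ huv))

/-- A bound on the error sum that is uniform in `n`, for dominated convergence. -/
theorem errSum_le (huv : u ≤ v) (hN : MonotoneOn N (Set.Icc u v)) (θ φ : ℝ) (n : ℕ) :
    |errSum q u v θ φ x N n|
      ≤ Real.exp (θ ^ 2 / 2 * (v - u)) * (2 * |θ|) * (|q| * (N v - N u)) := by
  rcases Nat.eq_zero_or_pos n with rfl | hn
  · have : 0 ≤ N v - N u := sub_nonneg.2 (hN ⟨le_rfl, huv⟩ ⟨huv, le_rfl⟩ huv)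
    simp only [errSum, Finset.range_zero, Finset.sum_empty, abs_zero]
    positivity
  rw [← sum_incr hn, Finset.mul_sum, Finset.mul_sum]
  refine (Finset.abs_sum_le_sum_abs _ _).trans (Finset.sum_le_sum fun k hk => ?_)
  have hk := Finset.mem_range.1 hk
  have h0 := incr_nonneg huv hN hk
  rw [abs_mul, abs_of_pos (Real.exp_pos _)]
  have h1 := taylorErr_le θ φ (x (grid u v n (k + 1)))
    (q * (N (grid u v n (k + 1)) - N (grid u v n k)))
  rw [abs_mul q, abs_of_nonneg h0] at h1
  rw [mul_assoc]
  exact mul_le_mul (weight_le huv θ hk) h1 (abs_nonneg _) (Real.exp_pos _).le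

/-- The error sum vanishes in the limit: `N` only increases on cells containing a zero of `x`, and on
such a cell `|x|` is small by uniform continuity. -/
theorem errSum_tendsto (huv : u ≤ v) (hN : MonotoneOn N (Set.Icc u v))
    (hNc : ContinuousOn N (Set.Icc u v)) (hx : ContinuousOn x (Set.Icc u v))
    (hz : ∀ r r', u ≤ r → r ≤ r' → r' ≤ v → N r ≠ N r' → ∃ τ ∈ Set.Icc r r', x τ = 0)
    (θ φ : ℝ) :
    Tendsto (fun n => errSum q u v θ φ x N n) atTop (nhds 0) := by
  set C := Real.exp (θ ^ 2 / 2 * (v - u)) * (θ ^ 2 * (1 + |q|)) * (|q| * (N v - N u)) with hC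
  have hNn : 0 ≤ N v - N u := sub_nonneg.2 (hN ⟨le_rfl, huv⟩ ⟨huv, le_rfl⟩ huv)
  have hC0 : 0 ≤ C := by positivity
  rw [Metric.tendsto_atTop']
  intro ε hε
  obtain ⟨δ, hδ, hδε⟩ : ∃ δ > 0, C * δ < ε :=
    ⟨ε / (C + 1), by positivity, by
      rw [mul_div_assoc', div_lt_iff₀ (by linarith)]; nlinarith⟩
  obtain ⟨n0, hn0⟩ := eventually_atTop.1 ((osc_small (u := u) (v := v) hx hδ).and
    (osc_small (u := u) (v := v) hNc hδ))
  refine ⟨n0, fun n hn => ?_⟩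
  have hnpos : 0 < n := lt_of_le_of_lt (Nat.zero_le _) hn
  obtain ⟨ox, oN⟩ := hn0 n hn.le
  rw [Real.dist_eq, sub_zero]
  refine lt_of_le_of_lt ?_ hδε
  have : C * δ = Real.exp (θ ^ 2 / 2 * (v - u)) * (θ ^ 2 * ((1 + |q|) * δ)) *
      (|q| * (N v - N u)) := by rw [hC]; ring
  rw [this, ← sum_incr hnpos, Finset.mul_sum, Finset.mul_sum]
  refine (Finset.abs_sum_le_sum_abs _ _).trans (Finset.sum_le_sum fun k hk => ?_)
  have hk := Finset.mem_range.1 hk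
  have h0 := incr_nonneg huv hN hk
  rw [abs_mul, abs_of_pos (Real.exp_pos _), mul_assoc]
  refine mul_le_mul (weight_le huv θ hk) ?_ (abs_nonneg _) (Real.exp_pos _).le
  refine (taylorErr_le' _ _ _ _).trans ?_
  rw [abs_mul q, abs_of_nonneg h0]
  by_cases hne : N (grid u v n k) = N (grid u v n (k + 1))
  · simp [hne]
  obtain ⟨τ, hτ, hτ0⟩ := hz _ _ (le_grid huv) (grid_le_succ huv) (grid_le huv hk) hne
  have hstep := grid_succ (u := u) (v := v) (n := n) (k := k)
  have h1 : |x (grid u v n (k + 1))| ≤ δ := by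
    have := ox _ (grid_mem huv hk) τ ⟨(le_grid huv).trans hτ.1, hτ.2.trans (grid_le huv hk)⟩
      (by rw [abs_of_nonneg (by linarith [hτ.2])]; linarith [hτ.1])
    simpa [hτ0] using this
  have h2 : N (grid u v n (k + 1)) - N (grid u v n k) ≤ δ := by
    refine (le_abs_self _).trans (oN _ (grid_mem huv hk) _ (grid_mem huv hk.le) ?_)
    rw [hstep, add_sub_cancel_left, abs_of_nonneg]
    exact div_nonneg (by linarith) (by positivity)
  have h3 : |x (grid u v n (k + 1))| + |q| * (N (grid u v n (k + 1)) - N (grid u v n k))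
      ≤ (1 + |q|) * δ := by
    nlinarith [mul_le_mul_of_nonneg_left h2 (abs_nonneg q)]
  gcongr

end Path

/-! ### Characters of the one-dimensional process -/

/-- The one-dimensional situation on a time interval `[u, v]`: `B` has Gaussian increments
independent of the past of the filtration `𝓗`, `X = X u + q (N - N u) + B - B u`, the
nondecreasing process `N` increases only when `X` vanishes, and `N` is the limit of the additive
functionals `∫ k m (X τ) dτ`. -/
structure Setup (P : Measure Ω) (q u v : ℝ) (𝓗 : ℝ → MeasurableSpace Ω) (k : ℕ → ℝ → ℝ)
    (B X N : ℝ → Ω → ℝ) : Prop where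
  huv : u ≤ v
  hmono : ∀ r r', u ≤ r → r ≤ r' → r' ≤ v → 𝓗 r ≤ 𝓗 r'
  hle : ∀ r, u ≤ r → r ≤ v → 𝓗 r ≤ ‹MeasurableSpace Ω›
  mB : ∀ r r', u ≤ r → r ≤ r' → r' ≤ v → Measurable[𝓗 r'] (fun ω => B r' ω - B r ω)
  mX : ∀ r, u ≤ r → r ≤ v → Measurable[𝓗 r] (X r)
  mN : ∀ r, u ≤ r → r ≤ v → Measurable[𝓗 r] (N r)
  hcos : ∀ r r', u ≤ r → r ≤ r' → r' ≤ v → ∀ Z, BM (𝓗 r) Z → ∀ θ : ℝ,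
    ∫ ω, Z ω * Real.cos (θ * (B r' ω - B r ω)) ∂P
      = Real.exp (-(θ ^ 2 / 2 * (r' - r))) * ∫ ω, Z ω ∂P
  hsin : ∀ r r', u ≤ r → r ≤ r' → r' ≤ v → ∀ Z, BM (𝓗 r) Z → ∀ θ : ℝ,
    ∫ ω, Z ω * Real.sin (θ * (B r' ω - B r ω)) ∂P = 0
  cX : ∀ᵐ ω ∂P, ContinuousOn (fun r => X r ω) (Set.Icc u v)
  cN : ∀ᵐ ω ∂P, ContinuousOn (fun r => N r ω) (Set.Icc u v)
  monoN : ∀ᵐ ω ∂P, MonotoneOn (fun r => N r ω) (Set.Icc u v)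
  eqn : ∀ r r', u ≤ r → r ≤ r' → r' ≤ v →
    ∀ᵐ ω ∂P, X r' ω = X r ω + q * (N r' ω - N r ω) + (B r' ω - B r ω)
  zero : ∀ᵐ ω ∂P, ∀ r r', u ≤ r → r ≤ r' → r' ≤ v → N r ω ≠ N r' ω →
    ∃ τ ∈ Set.Icc r r', X τ ω = 0
  kcont : ∀ m, Continuous (k m)
  keven : ∀ m y, k m |y| = k m y
  klim : ∀ r r', u ≤ r → r ≤ r' → r' ≤ v → ∀ᵐ ω ∂P,
    Tendsto (fun m => ∫ τ in r..r', k m (X τ ω)) atTop (nhds (N r' ω - N r ω))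

namespace Setup

variable {P : Measure Ω} [IsProbabilityMeasure P] {q u v : ℝ} {𝓗 : ℝ → MeasurableSpace Ω}
  {k : ℕ → ℝ → ℝ} {B X N : ℝ → Ω → ℝ} {ξ : Ω → ℝ}

theorem sub (S : Setup P q u v 𝓗 k B X N) {u' v' : ℝ} (hu : u ≤ u') (huv' : u' ≤ v')
    (hv : v' ≤ v) : Setup P q u' v' 𝓗 k B X N where
  huv := huv'
  hmono r r' h1 h2 h3 := S.hmono r r' (hu.trans h1) h2 (h3.trans hv)
  hle r h1 h3 := S.hle r (hu.trans h1) (h3.trans hv)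
  mB r r' h1 h2 h3 := S.mB r r' (hu.trans h1) h2 (h3.trans hv)
  mX r h1 h3 := S.mX r (hu.trans h1) (h3.trans hv)
  mN r h1 h3 := S.mN r (hu.trans h1) (h3.trans hv)
  hcos r r' h1 h2 h3 := S.hcos r r' (hu.trans h1) h2 (h3.trans hv)
  hsin r r' h1 h2 h3 := S.hsin r r' (hu.trans h1) h2 (h3.trans hv)
  cX := S.cX.mono fun _ h => h.mono (Set.Icc_subset_Icc hu hv)
  cN := S.cN.mono fun _ h => h.mono (Set.Icc_subset_Icc hu hv)
  monoN := S.monoN.mono fun _ h => h.mono (Set.Icc_subset_Icc hu hv)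
  eqn r r' h1 h2 h3 := S.eqn r r' (hu.trans h1) h2 (h3.trans hv)
  zero := S.zero.mono fun _ h r r' h1 h2 h3 => h r r' (hu.trans h1) h2 (h3.trans hv)
  kcont := S.kcont
  keven := S.keven
  klim r r' h1 h2 h3 := S.klim r r' (hu.trans h1) h2 (h3.trans hv)

theorem mX' (S : Setup P q u v 𝓗 k B X N) {r : ℝ} (h1 : u ≤ r) (h2 : r ≤ v) : Measurable (X r) :=
  (S.mX r h1 h2).mono (S.hle r h1 h2) le_rfl

theorem mN' (S : Setup P q u v 𝓗 k B X N) {r : ℝ} (h1 : u ≤ r) (h2 : r ≤ v) : Measurable (N r) :=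
  (S.mN r h1 h2).mono (S.hle r h1 h2) le_rfl

theorem mB' (S : Setup P q u v 𝓗 k B X N) {r r' : ℝ} (h1 : u ≤ r) (h2 : r ≤ r') (h3 : r' ≤ v) :
    Measurable (fun ω => B r' ω - B r ω) :=
  (S.mB r r' h1 h2 h3).mono (S.hle r' (h1.trans h2) h3) le_rfl

/-- Characters of `X` with the increment of `B` added evolve by a deterministic factor. -/
theorem char_step (S : Setup P q u v 𝓗 k B X N) {r r' : ℝ} (h1 : u ≤ r) (h2 : r ≤ r')
    (h3 : r' ≤ v) {Z : Ω → ℝ} (hZ : BM (𝓗 r) Z) (θ φ : ℝ) :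
    ∫ ω, Z ω * Real.cos (θ * (X r ω + (B r' ω - B r ω)) + φ) ∂P
      = Real.exp (-(θ ^ 2 / 2 * (r' - r))) * ∫ ω, Z ω * Real.cos (θ * X r ω + φ) ∂P := by
  have hr := S.hle r h1 (h2.trans h3)
  have mA : Measurable[𝓗 r] (fun ω => θ * X r ω + φ) :=
    ((S.mX r h1 (h2.trans h3)).const_mul θ).add_const φ
  have c1 := hZ.mul (BM.cos mA)
  have c2 := hZ.mul (BM.sin mA)
  have mD : Measurable (fun ω => θ * (B r' ω - B r ω)) := (S.mB' h1 h2 h3).const_mul θ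
  have e : ∀ ω, Z ω * Real.cos (θ * (X r ω + (B r' ω - B r ω)) + φ)
      = Z ω * Real.cos (θ * X r ω + φ) * Real.cos (θ * (B r' ω - B r ω))
        - Z ω * Real.sin (θ * X r ω + φ) * Real.sin (θ * (B r' ω - B r ω)) := fun ω => by
    rw [show θ * (X r ω + (B r' ω - B r ω)) + φ
      = (θ * X r ω + φ) + θ * (B r' ω - B r ω) by ring, Real.cos_add]
    ring
  simp only [e]
  rw [integral_sub ((c1.le hr).mul (BM.cos mD)).int ((c2.le hr).mul (BM.sin mD)).int,
    S.hcos r r' h1 h2 h3 _ c1, S.hsin r r' h1 h2 h3 _ c2, sub_zero]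

/-- The martingale differences attached to the character `cos (θ y + φ)`. -/
def md (u v : ℝ) (B X : ℝ → Ω → ℝ) (θ φ : ℝ) (n j : ℕ) (ω : Ω) : ℝ :=
  Real.cos (θ * (X (grid u v n j) ω
      + (B (grid u v n (j+1)) ω - B (grid u v n j) ω)) + φ)
    - Real.exp (-(θ ^ 2 / 2 * ((v - u) / n))) * Real.cos (θ * X (grid u v n j) ω + φ)

/-- The weighted sum of the martingale differences. -/
def msum (u v : ℝ) (B X : ℝ → Ω → ℝ) (θ φ : ℝ) (n l : ℕ) (ω : Ω) : ℝ :=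
  ∑ j ∈ Finset.range l, Real.exp (θ ^ 2 / 2 * ((j + 1) * ((v - u) / n))) * md u v B X θ φ n j ω

theorem md_BM (S : Setup P q u v 𝓗 k B X N) (θ φ : ℝ) {n j : ℕ} (hj : j < n) :
    BM (𝓗 (grid u v n (j+1))) (md u v B X θ φ n j) := by
  have a1 := le_grid (u := u) (v := v) (n := n) (k := j) S.huv
  have a2 := grid_le_succ (u := u) (v := v) (n := n) (k := j) S.huv
  have a3 := grid_le (u := u) (v := v) S.huv (show j + 1 ≤ n from hj)
  have m1 := (S.mX _ a1 (a2.trans a3)).mono (S.hmono _ _ a1 a2 a3) le_rfl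
  have m2 := S.mB _ _ a1 a2 a3
  exact (BM.cos (((m1.add m2).const_mul θ).add_const φ)).sub
    ((BM.const _).mul (BM.cos ((m1.const_mul θ).add_const φ)))

theorem md_integral (S : Setup P q u v 𝓗 k B X N) (θ φ : ℝ) {n j : ℕ} (hj : j < n)
    {Z : Ω → ℝ} (hZ : BM (𝓗 (grid u v n j)) Z) :
    ∫ ω, Z ω * md u v B X θ φ n j ω ∂P = 0 := by
  have a1 := le_grid (u := u) (v := v) (n := n) (k := j) S.huv
  have a2 := grid_le_succ (u := u) (v := v) (n := n) (k := j) S.huv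
  have a3 := grid_le (u := u) (v := v) S.huv (show j + 1 ≤ n from hj)
  have m1 := S.mX' a1 (a2.trans a3)
  have m2 := S.mB' a1 a2 a3
  have hZ' := hZ.le (S.hle _ a1 (a2.trans a3))
  have i1 : BM inferInstance (fun ω => Z ω * Real.cos (θ * (X (grid u v n j) ω
      + (B (grid u v n (j+1)) ω - B (grid u v n j) ω)) + φ)) :=
    hZ'.mul (BM.cos (((m1.add m2).const_mul θ).add_const φ))
  unfold md
  simp only [mul_sub (Z _)]
  rw [integral_sub i1.int
    (hZ'.mul ((BM.const _).mul (BM.cos ((m1.const_mul θ).add_const φ)))).int,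
    S.char_step a1 a2 a3 hZ, grid_succ, add_sub_cancel_left, ← integral_const_mul, sub_eq_zero]
  congr 1; ext ω; ring

theorem msum_BM (S : Setup P q u v 𝓗 k B X N) (θ φ : ℝ) {n l : ℕ} (hl : l ≤ n) :
    BM (𝓗 (grid u v n l)) (msum u v B X θ φ n l) := by
  refine BM.finset_sum _ fun j hj => (BM.const _).mul ?_
  have hj := Finset.mem_range.1 hj
  exact (S.md_BM θ φ (hj.trans_le hl)).le
    (S.hmono _ _ (le_grid S.huv) (grid_mono S.huv hj) (grid_le S.huv hl))

theorem msum_integral (S : Setup P q u v 𝓗 k B X N) (θ φ : ℝ) {n : ℕ}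
    {Z : Ω → ℝ} (hZ : BM (𝓗 u) Z) :
    ∫ ω, Z ω * msum u v B X θ φ n n ω ∂P = 0 := by
  unfold msum
  simp only [Finset.mul_sum]
  have hZ' : ∀ j < n, BM (𝓗 (grid u v n j)) Z := fun j hj =>
    hZ.le (S.hmono _ _ le_rfl (le_grid S.huv) (grid_le S.huv hj.le))
  rw [integral_finsetSum]
  · refine Finset.sum_eq_zero fun j hj => ?_
    have hj := Finset.mem_range.1 hj
    rw [← S.md_integral θ φ hj ((hZ' j hj).mul
      (BM.const (Real.exp (θ ^ 2 / 2 * ((j + 1) * ((v - u) / n))))))]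
    congr 1; ext ω; ring
  · intro j hj
    have hj := Finset.mem_range.1 hj
    exact (((hZ' j hj).le (S.hle _ (le_grid S.huv) (grid_le S.huv hj.le))).mul
      ((BM.const _).mul ((S.md_BM θ φ hj).le
        (S.hle _ (le_grid S.huv) (grid_le S.huv hj))))).int

/-- A martingale difference over a cell has second moment of the order of the length of the cell. -/
theorem md_sq (S : Setup P q u v 𝓗 k B X N) (θ φ : ℝ) {n j : ℕ} (hj : j < n) :
    ∫ ω, md u v B X θ φ n j ω ^ 2 ∂P ≤ 2 * θ ^ 2 * ((v - u) / n) := by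
  have a1 := le_grid (u := u) (v := v) (n := n) (k := j) S.huv
  have a2 := grid_le_succ (u := u) (v := v) (n := n) (k := j) S.huv
  have a3 := grid_le (u := u) (v := v) S.huv (show j + 1 ≤ n from hj)
  have m1 := S.mX' a1 (a2.trans a3)
  have m2 := S.mB' a1 a2 a3
  have hd : 0 ≤ (v - u) / n := div_nonneg (by linarith [S.huv]) (by positivity)
  set d := (v - u) / n with hdd
  set ρ := Real.exp (-(θ ^ 2 / 2 * d)) with hρ
  have ρpos : 0 < ρ := Real.exp_pos _
  have ρ1 : ρ ≤ 1 := Real.exp_le_one_iff.2 (by nlinarith [sq_nonneg θ])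
  have ρ4 : ρ ^ 2 = Real.exp (-(θ ^ 2 * d)) := by
    rw [hρ, ← Real.exp_nat_mul]; congr 1; push_cast; ring
  have ρ2 : 1 - θ ^ 2 * d ≤ ρ ^ 2 := by
    rw [ρ4]; linarith [Real.add_one_le_exp (-(θ ^ 2 * d))]
  -- second moment of the new character in terms of the doubled character
  set a := ∫ ω, (1:ℝ) * Real.cos ((2 * θ) * X (grid u v n j) ω + 2 * φ) ∂P with ha
  have hd' : grid u v n (j+1) - grid u v n j = d := by rw [grid_succ, add_sub_cancel_left]
  have h2 := S.char_step a1 a2 a3 (BM.const (1:ℝ)) (2 * θ) (2 * φ)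
  rw [hd', ← ha] at h2
  have e8 : Real.exp (-((2 * θ) ^ 2 / 2 * d)) = ρ ^ 4 := by
    rw [hρ, ← Real.exp_nat_mul]; congr 1; push_cast; ring
  rw [e8] at h2
  have hcross := S.md_integral θ φ hj
    (BM.cos (((S.mX _ a1 (a2.trans a3)).const_mul θ).add_const φ))
  set F := fun ω => Real.cos (θ * (X (grid u v n j) ω
      + (B (grid u v n (j+1)) ω - B (grid u v n j) ω)) + φ) with hF
  set G := fun ω => Real.cos (θ * X (grid u v n j) ω + φ) with hG
  have bF : BM inferInstance F := BM.cos (((m1.add m2).const_mul θ).add_const φ)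
  have bG : BM inferInstance G := BM.cos ((m1.const_mul θ).add_const φ)
  have emd : md u v B X θ φ n j = fun ω => F ω - ρ * G ω := rfl
  have bmd : BM inferInstance (md u v B X θ φ n j) := by
    rw [emd]; exact bF.sub ((BM.const _).mul bG)
  have hsq : ∀ ω, md u v B X θ φ n j ω ^ 2
      = (F ω * F ω - ρ ^ 2 * (G ω * G ω)) - 2 * ρ * (G ω * md u v B X θ φ n j ω) := fun ω => by
    rw [emd]; ring
  have dbl : ∀ (y : ℝ), Real.cos y * Real.cos y = 1 / 2 + 1 / 2 * (1 * Real.cos (2 * y)) :=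
    fun y => by rw [Real.cos_two_mul]; ring
  have iF : ∫ ω, F ω * F ω ∂P = 1 / 2 + 1 / 2 * (ρ ^ 4 * a) := by
    rw [← h2]
    simp only [hF, dbl]
    have b : BM inferInstance (fun ω => (1:ℝ) * Real.cos (2 * (θ * (X (grid u v n j) ω
      + (B (grid u v n (j+1)) ω - B (grid u v n j) ω)) + φ))) :=
      (BM.const _).mul (BM.cos ((((m1.add m2).const_mul θ).add_const φ).const_mul 2))
    rw [integral_add (integrable_const _) (b.int.const_mul _), integral_const_mul]
    simp only [integral_const, probReal_univ, one_smul]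
    congr 3; ext ω; congr 2; ring
  have iG : ∫ ω, G ω * G ω ∂P = 1 / 2 + 1 / 2 * a := by
    rw [ha]
    simp only [hG, dbl]
    have b : BM inferInstance (fun ω => (1:ℝ) * Real.cos (2 * (θ * X (grid u v n j) ω + φ))) :=
      (BM.const _).mul (BM.cos (((m1.const_mul θ).add_const φ).const_mul 2))
    rw [integral_add (integrable_const _) (b.int.const_mul _), integral_const_mul]
    simp only [integral_const, probReal_univ, one_smul]
    congr 3; ext ω; congr 2; ring
  have a_le : |a| ≤ 1 := by
    have := norm_integral_le_of_norm_le_const (μ := P)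
      (f := fun ω => (1:ℝ) * Real.cos ((2 * θ) * X (grid u v n j) ω + 2 * φ)) (C := 1)
      (Eventually.of_forall fun ω => by simpa using Real.abs_cos_le_one _)
    simpa only [probReal_univ, mul_one, Real.norm_eq_abs] using this
  have total : ∫ ω, md u v B X θ φ n j ω ^ 2 ∂P
      = (1 / 2 + 1 / 2 * (ρ ^ 4 * a)) - ρ ^ 2 * (1 / 2 + 1 / 2 * a) := by
    simp only [hsq]
    rw [integral_sub (((bF.mul bF).sub ((BM.const _).mul (bG.mul bG))).int)
      (((BM.const _).mul (bG.mul bmd)).int), integral_sub (bF.mul bF).int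
      (((BM.const _).mul (bG.mul bG)).int), integral_const_mul, integral_const_mul, hcross,
      iF, iG]
    ring
  rw [total]
  have h3 := abs_le.1 a_le
  have h4 : 0 ≤ ρ ^ 2 := by positivity
  have h5 : ρ ^ 2 ≤ 1 := by nlinarith
  have h6 : -(ρ ^ 2 * (1 - ρ ^ 2) * a) ≤ 1 - ρ ^ 2 := by
    have : 0 ≤ ρ ^ 2 * (1 - ρ ^ 2) := mul_nonneg h4 (by linarith)
    nlinarith
  nlinarith [mul_nonneg (sq_nonneg θ) hd]

/-- The martingale differences are orthogonal in `L²`, so their second moments add up. -/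
theorem msum_sq (S : Setup P q u v 𝓗 k B X N) (θ φ : ℝ) {n l : ℕ} (hl : l ≤ n) :
    ∫ ω, msum u v B X θ φ n l ω ^ 2 ∂P
      ≤ l * (Real.exp (θ ^ 2 / 2 * (v - u)) ^ 2 * (2 * θ ^ 2 * ((v - u) / n))) := by
  induction l with
  | zero => simp [msum]
  | succ l ih =>
    have hl' : l < n := hl
    have a1 := le_grid (u := u) (v := v) (n := n) (k := l) S.huv
    have a2 := grid_le_succ (u := u) (v := v) (n := n) (k := l) S.huv
    have a3 := grid_le (u := u) (v := v) S.huv hl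
    set c := Real.exp (θ ^ 2 / 2 * ((l + 1) * ((v - u) / n))) with hc
    have bm := S.msum_BM θ φ hl'.le
    have bm' := bm.le (S.hle _ a1 (a2.trans a3))
    have bd := (S.md_BM θ φ hl').le (S.hle _ (a1.trans a2) a3)
    have hcross := S.md_integral θ φ hl' bm
    have e : ∀ ω, msum u v B X θ φ n (l+1) ω ^ 2 = msum u v B X θ φ n l ω ^ 2
        + (2 * c * (msum u v B X θ φ n l ω * md u v B X θ φ n l ω)
          + c ^ 2 * md u v B X θ φ n l ω ^ 2) := fun ω => by
      unfold msum
      rw [Finset.sum_range_succ]; ring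
    simp only [e]
    have i1 : Integrable (fun ω => msum u v B X θ φ n l ω ^ 2) P := by
      simpa only [sq] using (bm'.mul bm').int
    have i2 : Integrable (fun ω => md u v B X θ φ n l ω ^ 2) P := by
      simpa only [sq] using (bd.mul bd).int
    have i3 : Integrable (fun ω => 2 * c * (msum u v B X θ φ n l ω * md u v B X θ φ n l ω)
          + c ^ 2 * md u v B X θ φ n l ω ^ 2) P :=
      ((bm'.mul bd).int.const_mul _).add (i2.const_mul _)
    rw [integral_add i1 i3,
      integral_add ((bm'.mul bd).int.const_mul _) (i2.const_mul _), integral_const_mul,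
      integral_const_mul, hcross, mul_zero, zero_add]
    push_cast
    rw [add_mul, one_mul]
    refine add_le_add (ih hl'.le) ?_
    have h1 := weight_le S.huv θ hl'
    have h2 : c ^ 2 ≤ Real.exp (θ ^ 2 / 2 * (v - u)) ^ 2 := by
      gcongr
    exact mul_le_mul h2 (S.md_sq θ φ hl') (integral_nonneg fun ω => sq_nonneg _) (sq_nonneg _)

/-- Decomposition of a character of `X` along the grid. -/
theorem decomp (S : Setup P q u v 𝓗 k B X N) (θ φ : ℝ) {n : ℕ} (hn : 0 < n) :
    ∀ᵐ ω ∂P, Real.exp (θ ^ 2 / 2 * (v - u)) * Real.cos (θ * X v ω + φ)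
        - Real.cos (θ * X u ω + φ)
      = msum u v B X θ φ n n ω + errSum q u v θ φ (fun r => X r ω) (fun r => N r ω) n
        - θ * Real.sin φ * ∑ j ∈ Finset.range n,
          Real.exp (θ ^ 2 / 2 * ((j + 1) * ((v - u) / n))) *
            (q * (N (grid u v n (j + 1)) ω - N (grid u v n j) ω)) := by
  have hall : ∀ᵐ ω ∂P, ∀ j : ℕ, j < n → X (grid u v n (j+1)) ω = X (grid u v n j) ω
      + q * (N (grid u v n (j+1)) ω - N (grid u v n j) ω)
      + (B (grid u v n (j+1)) ω - B (grid u v n j) ω) := by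
    rw [ae_all_iff]
    intro j
    by_cases hj : j < n
    · filter_upwards [S.eqn _ _ (le_grid S.huv) (grid_le_succ (n := n) (k := j) S.huv)
        (grid_le S.huv hj)] with ω h _ using h
    · exact Eventually.of_forall fun ω h => absurd h hj
  filter_upwards [hall] with ω hω
  set c : ℕ → ℝ := fun j => Real.exp (θ ^ 2 / 2 * (j * ((v - u) / n))) with hc
  have tel := Finset.sum_range_sub
    (fun j => c j * Real.cos (θ * X (grid u v n j) ω + φ)) n
  rw [grid_zero, grid_last hn] at tel
  have c0 : c 0 = 1 := by simp [hc]
  have cn : c n = Real.exp (θ ^ 2 / 2 * (v - u)) := by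
    simp only [hc]; congr 2; field_simp
  rw [c0, cn, one_mul] at tel
  rw [← tel]
  unfold msum errSum
  rw [Finset.mul_sum, ← Finset.sum_add_distrib, ← Finset.sum_sub_distrib]
  refine Finset.sum_congr rfl fun j hj => ?_
  have e := hω j (Finset.mem_range.1 hj)
  have ce : Real.exp (θ ^ 2 / 2 * ((j + 1) * ((v - u) / n)))
      * Real.exp (-(θ ^ 2 / 2 * ((v - u) / n))) = c j := by
    rw [← Real.exp_add]; simp only [hc]; congr 1; ring
  have ce' : c (j+1) = Real.exp (θ ^ 2 / 2 * ((j + 1) * ((v - u) / n))) := by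
    simp only [hc]; push_cast; rfl
  have ey : X (grid u v n (j+1)) ω - q * (N (grid u v n (j+1)) ω - N (grid u v n j) ω)
      = X (grid u v n j) ω + (B (grid u v n (j+1)) ω - B (grid u v n j) ω) := by
    rw [e]; ring
  simp only [md, taylorErr]
  rw [ey, ce', ← ce]
  ring

end Setup

/-! ### Markov property of the pair (normal coordinate, local time) -/

namespace Setup

variable {P : Measure Ω} [IsProbabilityMeasure P] {q u v : ℝ} {𝓗 : ℝ → MeasurableSpace Ω}
  {k : ℕ → ℝ → ℝ} {B X N : ℝ → Ω → ℝ} {ξ : Ω → ℝ}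

/-- The reflection term is integrable: it is dominated through the character `sin` of `X`, whose
martingale part is bounded in `L²`. -/
theorem integrable_qN (S : Setup P q u v 𝓗 k B X N) :
    Integrable (fun ω => q * (N v ω - N u ω)) P := by
  have hm : Measurable (fun ω => q * (N v ω - N u ω)) :=
    ((S.mN' S.huv le_rfl).sub (S.mN' le_rfl S.huv)).const_mul q
  refine ⟨hm.aestronglyMeasurable, ?_⟩
  set c := Real.exp ((1:ℝ) ^ 2 / 2 * (v - u)) with hc
  set φ : ℝ := -(Real.pi / 2) with hφ
  have hsin : Real.sin φ = -1 := by rw [hφ, Real.sin_neg, Real.sin_pi_div_two]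
  set K := c ^ 2 * (2 * (1:ℝ) ^ 2 * (v - u)) with hK
  have bm : ∀ n, BM inferInstance (msum u v B X 1 φ n n) := fun n =>
    (S.msum_BM 1 φ le_rfl).le (S.hle _ (le_grid S.huv) (grid_le S.huv le_rfl))
  have cpos : 0 < c := Real.exp_pos _
  have hpt : ∀ᵐ ω ∂P, ENNReal.ofReal ‖q * (N v ω - N u ω)‖
      ≤ liminf (fun n => ENNReal.ofReal (c + 3 + msum u v B X 1 φ n n ω ^ 2)) atTop := by
    have hdec := ae_all_iff.2 fun n : ℕ => S.decomp 1 φ (Nat.succ_pos n)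
    filter_upwards [hdec, S.monoN, S.cN, S.cX, S.zero] with ω h1 h2 h3 h4 h5
    have herr := errSum_tendsto (q := q) S.huv h2 h3 h4 h5 1 φ
    refine le_liminf_of_le (by isBoundedDefault) ?_
    filter_upwards [herr.eventually (Metric.ball_mem_nhds _ one_pos), eventually_gt_atTop 0]
      with n hn hn0
    refine ENNReal.ofReal_le_ofReal ?_
    obtain ⟨l, rfl⟩ := Nat.exists_eq_succ_of_ne_zero hn0.ne'
    have hd := h1 l
    rw [hsin] at hd
    rw [Nat.succ_eq_add_one] at *
    set n := l + 1 with hnl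
    rw [Real.dist_eq, sub_zero] at hn
    have hΔ : 0 ≤ N v ω - N u ω := sub_nonneg.2 (h2 ⟨le_rfl, S.huv⟩ ⟨S.huv, le_rfl⟩ S.huv)
    set T := ∑ j ∈ Finset.range n, Real.exp ((1:ℝ) ^ 2 / 2 * ((j + 1) * ((v - u) / n))) *
            (N (grid u v n (j + 1)) ω - N (grid u v n j) ω) with hT
    have hqT : ∑ j ∈ Finset.range n, Real.exp ((1:ℝ) ^ 2 / 2 * ((j + 1) * ((v - u) / n))) *
            (q * (N (grid u v n (j + 1)) ω - N (grid u v n j) ω)) = q * T := by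
      rw [hT, Finset.mul_sum]; exact Finset.sum_congr rfl fun _ _ => by ring
    rw [hqT] at hd
    have hNT : N v ω - N u ω ≤ T := by
      rw [← sum_incr (N := fun r => N r ω) hn0]
      refine Finset.sum_le_sum fun j hj => ?_
      have h0 := incr_nonneg S.huv h2 (Finset.mem_range.1 hj)
      refine le_mul_of_one_le_left h0 (Real.one_le_exp ?_)
      have : 0 ≤ (v - u) / n := div_nonneg (by linarith [S.huv]) (by positivity)
      positivity
    rw [norm_mul, Real.norm_eq_abs, Real.norm_eq_abs, abs_of_nonneg hΔ]
    have h6 : |q| * (N v ω - N u ω) ≤ |q * T| := by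
      rw [abs_mul, abs_of_nonneg (hΔ.trans hNT)]
      exact mul_le_mul_of_nonneg_left hNT (abs_nonneg _)
    refine h6.trans ?_
    have a1 := abs_le.1 (Real.abs_cos_le_one (1 * X v ω + φ))
    have a2 := abs_le.1 (Real.abs_cos_le_one (1 * X u ω + φ))
    have a3 := abs_lt.1 hn
    have a4 : c * Real.cos (1 * X v ω + φ) ≤ c := by nlinarith
    have a5 : -c ≤ c * Real.cos (1 * X v ω + φ) := by nlinarith
    rw [abs_le]
    constructor <;>
      nlinarith [sq_nonneg (msum u v B X 1 φ n n ω - 1), sq_nonneg (msum u v B X 1 φ n n ω + 1)]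
  unfold HasFiniteIntegral
  calc ∫⁻ ω, ‖q * (N v ω - N u ω)‖ₑ ∂P
      = ∫⁻ ω, ENNReal.ofReal ‖q * (N v ω - N u ω)‖ ∂P := by simp only [ofReal_norm]
    _ ≤ ∫⁻ ω, liminf (fun n => ENNReal.ofReal (c + 3 + msum u v B X 1 φ n n ω ^ 2)) atTop ∂P :=
        lintegral_mono_ae hpt
    _ ≤ liminf (fun n => ∫⁻ ω, ENNReal.ofReal (c + 3 + msum u v B X 1 φ n n ω ^ 2) ∂P) atTop :=
        lintegral_liminf_le fun n => ((bm n).1.pow_const 2 |>.const_add _).ennreal_ofReal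
    _ ≤ ENNReal.ofReal (c + 3 + K) := by
        refine liminf_le_of_le (by isBoundedDefault) fun b hb => ?_
        obtain ⟨n, hn, hn0⟩ := (hb.and (eventually_gt_atTop 0)).exists
        refine hn.trans ?_
        have i1 : Integrable (fun ω => msum u v B X 1 φ n n ω ^ 2) P := by
          simpa only [sq] using ((bm n).mul (bm n)).int
        have i2 : Integrable (fun ω => c + 3 + msum u v B X 1 φ n n ω ^ 2) P :=
          (integrable_const _).add i1
        rw [← ofReal_integral_eq_lintegral_ofReal i2
          (Eventually.of_forall fun ω => by positivity)]
        refine ENNReal.ofReal_le_ofReal ?_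
        rw [integral_add (integrable_const _) i1]
        simp only [integral_const, probReal_univ, one_smul]
        refine add_le_add le_rfl ((S.msum_sq 1 φ le_rfl).trans_eq ?_)
        have : (n:ℝ) ≠ 0 := by positivity
        rw [hK, hc]; field_simp
    _ < ⊤ := ENNReal.ofReal_lt_top

/-- If `ξ` does not see a character of `X u`, nor the reflection term when the derivative of the
character at `0` does not vanish, then it does not see the character of `X v`. -/
theorem transfer (S : Setup P q u v 𝓗 k B X N) (hξ : BM (𝓗 u) ξ) (θ φ : ℝ)
    (h0 : ∫ ω, ξ ω * Real.cos (θ * X u ω + φ) ∂P = 0)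
    (hN : ∀ r r', u ≤ r → r ≤ r' → r' ≤ v →
      Real.sin φ * ∫ ω, ξ ω * (q * (N r' ω - N r ω)) ∂P = 0) :
    ∫ ω, ξ ω * Real.cos (θ * X v ω + φ) ∂P = 0 := by
  have hξ' := hξ.le (S.hle u le_rfl S.huv)
  obtain ⟨C, hC⟩ := hξ'.2
  set c := Real.exp (θ ^ 2 / 2 * (v - u)) with hc
  have bv : BM inferInstance (fun ω => Real.cos (θ * X v ω + φ)) :=
    BM.cos (((S.mX' S.huv le_rfl).const_mul θ).add_const φ)
  have bu : BM inferInstance (fun ω => Real.cos (θ * X u ω + φ)) :=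
    BM.cos (((S.mX' le_rfl S.huv).const_mul θ).add_const φ)
  have bm : ∀ n, BM inferInstance (msum u v B X θ φ n n) := fun n =>
    (S.msum_BM θ φ le_rfl).le (S.hle _ (le_grid S.huv) (grid_le S.huv le_rfl))
  have iN : ∀ n j : ℕ, j < n → Integrable (fun ω =>
      Real.exp (θ ^ 2 / 2 * ((j + 1) * ((v - u) / n))) *
        (q * (N (grid u v n (j + 1)) ω - N (grid u v n j) ω))) P := fun n j hj =>
    ((S.sub (le_grid S.huv) (grid_le_succ S.huv) (grid_le S.huv hj)).integrable_qN).const_mul _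
  have imul : ∀ f : Ω → ℝ, Integrable f P → Integrable (fun ω => ξ ω * f ω) P := fun f hf =>
    hf.bdd_mul hξ'.1.aestronglyMeasurable (c := C) (Eventually.of_forall fun ω => by
      simpa using hC ω)
  -- the integral against `ξ` of the remainder
  have key : ∀ n : ℕ, 0 < n →
      ∫ ω, ξ ω * errSum q u v θ φ (fun r => X r ω) (fun r => N r ω) n ∂P
        = c * ∫ ω, ξ ω * Real.cos (θ * X v ω + φ) ∂P := by
    intro n hn
    set T : Ω → ℝ := fun ω => ∑ j ∈ Finset.range n,
          Real.exp (θ ^ 2 / 2 * ((j + 1) * ((v - u) / n))) *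
            (q * (N (grid u v n (j + 1)) ω - N (grid u v n j) ω)) with hT
    have iT : Integrable T P := integrable_finsetSum _ fun j hj => iN n j (Finset.mem_range.1 hj)
    have zT : Real.sin φ * ∫ ω, ξ ω * T ω ∂P = 0 := by
      simp only [hT, Finset.mul_sum]
      rw [integral_finsetSum _ fun j hj => imul _ (iN n j (Finset.mem_range.1 hj)),
        Finset.mul_sum]
      refine Finset.sum_eq_zero fun j hj => ?_
      have hj := Finset.mem_range.1 hj
      have := hN _ _ (le_grid S.huv) (grid_le_succ (n := n) (k := j) S.huv) (grid_le S.huv hj)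
      have e : ∀ ω, ξ ω * (Real.exp (θ ^ 2 / 2 * ((j + 1) * ((v - u) / n))) *
            (q * (N (grid u v n (j + 1)) ω - N (grid u v n j) ω)))
          = Real.exp (θ ^ 2 / 2 * ((j + 1) * ((v - u) / n))) * (ξ ω *
            (q * (N (grid u v n (j + 1)) ω - N (grid u v n j) ω))) := fun ω => by ring
      simp only [e]
      rw [integral_const_mul, mul_left_comm, this, mul_zero]
    have e : ∀ᵐ ω ∂P, ξ ω * errSum q u v θ φ (fun r => X r ω) (fun r => N r ω) n
        = (c * (ξ ω * Real.cos (θ * X v ω + φ)) - ξ ω * Real.cos (θ * X u ω + φ)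
          - ξ ω * msum u v B X θ φ n n ω) + θ * Real.sin φ * (ξ ω * T ω) := by
      filter_upwards [S.decomp θ φ hn] with ω h
      linear_combination (-ξ ω) * h
    rw [integral_congr_ae e]
    have i1 : Integrable (fun ω => c * (ξ ω * Real.cos (θ * X v ω + φ))
        - ξ ω * Real.cos (θ * X u ω + φ)) P :=
      ((hξ'.mul bv).int.const_mul _).sub (hξ'.mul bu).int
    have i2 : Integrable (fun ω => c * (ξ ω * Real.cos (θ * X v ω + φ))
        - ξ ω * Real.cos (θ * X u ω + φ) - ξ ω * msum u v B X θ φ n n ω) P :=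
      i1.sub (hξ'.mul (bm n)).int
    rw [integral_add i2 ((imul T iT).const_mul _), integral_sub i1 (hξ'.mul (bm n)).int,
      integral_sub ((hξ'.mul bv).int.const_mul _) (hξ'.mul bu).int, integral_const_mul,
      integral_const_mul, h0, S.msum_integral θ φ hξ]
    linear_combination θ * zT
  have hlim : Tendsto (fun n => ∫ ω, ξ ω * errSum q u v θ φ (fun r => X r ω) (fun r => N r ω) n ∂P)
      atTop (nhds (∫ ω, ξ ω * 0 ∂P)) := by
    refine tendsto_integral_of_dominated_convergence
      (fun ω => C * (c * (2 * |θ|) * |q * (N v ω - N u ω)|)) (fun n => ?_)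
      ((S.integrable_qN.abs.const_mul _).const_mul _) (fun n => ?_) ?_
    · have hmeas : Measurable (fun ω => errSum q u v θ φ (fun r => X r ω) (fun r => N r ω) n) := by
        unfold errSum taylorErr
        refine Finset.measurable_fun_sum _ fun j hj => ?_
        have hj := Finset.mem_range.1 hj
        have m1 := S.mX' (le_grid S.huv) (grid_le S.huv (show j + 1 ≤ n from hj))
        have m2 := S.mN' (le_grid S.huv) (grid_le S.huv (show j + 1 ≤ n from hj))
        have m3 := S.mN' (le_grid S.huv) (grid_le S.huv hj.le)
        fun_prop
      exact (hξ'.1.mul hmeas).aestronglyMeasurable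
    · filter_upwards [S.monoN] with ω h
      have hΔ : 0 ≤ N v ω - N u ω := sub_nonneg.2 (h ⟨le_rfl, S.huv⟩ ⟨S.huv, le_rfl⟩ S.huv)
      rw [norm_mul]
      refine mul_le_mul (hC ω) ?_ (norm_nonneg _) ((abs_nonneg _).trans (hC ω))
      rw [abs_mul q, abs_of_nonneg hΔ]
      exact errSum_le S.huv h θ φ n
    · filter_upwards [S.monoN, S.cN, S.cX, S.zero] with ω h2 h3 h4 h5
      exact (errSum_tendsto (q := q) S.huv h2 h3 h4 h5 θ φ).const_mul _
  have hconst : Tendsto (fun n : ℕ =>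
      ∫ ω, ξ ω * errSum q u v θ φ (fun r => X r ω) (fun r => N r ω) n ∂P)
      atTop (nhds (c * ∫ ω, ξ ω * Real.cos (θ * X v ω + φ) ∂P)) :=
    tendsto_const_nhds.congr' ((eventually_gt_atTop 0).mono fun n hn => (key n hn).symm)
  have := tendsto_nhds_unique hconst hlim
  simp only [mul_zero, integral_zero] at this
  exact (mul_eq_zero.1 this).resolve_left (Real.exp_pos _).ne'

/-- The reflected process `|X|` is Markov on its own: its characters are the even ones, with `φ = 0`,
for which the reflection term drops out. -/
theorem step_abs (S : Setup P q u v 𝓗 k B X N) (hξ : BM (𝓗 u) ξ)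
    (h : Orth P ξ (fun ω => |X u ω|)) : Orth P ξ (fun ω => |X v ω|) := by
  refine Orth.abs_of_cos (hξ.le (S.hle u le_rfl S.huv)) (S.mX' S.huv le_rfl) fun θ => ?_
  suffices h0 : ∫ ω, ξ ω * Real.cos (θ * X u ω + 0) ∂P = 0 by
    simpa using S.transfer hξ θ 0 h0 (by simp)
  · have := h (fun y => Real.cos (θ * y)) (BM.cos (by fun_prop))
    refine Eq.trans (integral_congr_ae (Eventually.of_forall fun ω => ?_)) this
    dsimp only
    rw [add_zero, ← Real.cos_abs, abs_mul]
    conv_rhs => rw [← Real.cos_abs, abs_mul, abs_abs]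

/-- One-step orthogonality for `ψ (X r)` propagates to the additive functionals of `ψ (X r)`,
and so to the increment of `N`. -/
theorem chain (S : Setup P q u v 𝓗 k B X N) {ψ : ℝ → ℝ} (hψ : Measurable ψ)
    (hkψ : ∀ m y, k m (ψ y) = k m y)
    (step : ∀ r r', u ≤ r → r ≤ r' → r' ≤ v → ∀ ξ, BM (𝓗 r) ξ →
      Orth P ξ (fun ω => ψ (X r ω)) → Orth P ξ (fun ω => ψ (X r' ω)))
    (hξ : BM (𝓗 u) ξ) (h : Orth P ξ (fun ω => ψ (X u ω))) :
    Orth P ξ (fun ω => ((ψ (X u ω), N v ω - N u ω), ψ (X v ω))) := by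
  have hξ' := hξ.le (S.hle u le_rfl S.huv)
  set R : ℕ → ℕ → ℕ → Ω → ℝ := fun m n j ω =>
    ∑ i ∈ Finset.range j, (v - u) / n * k m (X (grid u v n i) ω) with hR
  have hmR : ∀ m n j, j ≤ n + 1 → ∀ r, grid u v n j ≤ r + (v - u) / n → u ≤ r → r ≤ v →
      Measurable[𝓗 r] (R m n j) := by
    intro m n j hj r hr hur hrv
    refine Finset.measurable_sum _ fun i hi => ?_
    have hi := Finset.mem_range.1 hi
    have hle : grid u v n i ≤ r := by
      have := grid_mono (n := n) S.huv (show i + 1 ≤ j from hi)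
      rw [grid_succ] at this
      linarith
    have m1 := (S.mX _ (le_grid S.huv) (hle.trans hrv)).mono
      (S.hmono _ _ (le_grid S.huv) hle hrv) le_rfl
    exact ((S.kcont m).measurable.comp m1).const_mul _
  have claim : ∀ m n j, j ≤ n →
      Orth P ξ (fun ω => ((ψ (X u ω), R m n j ω), ψ (X (grid u v n j) ω))) := by
    intro m n j
    induction j with
    | zero =>
      intro _
      simp only [hR, Finset.range_zero, Finset.sum_empty, grid_zero]
      exact h.comp (g := fun y => ((y, (0:ℝ)), y)) (by fun_prop)
    | succ j ih =>
      intro hj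
      have hj' : j < n := hj
      have a1 := le_grid (u := u) (v := v) (n := n) (k := j) S.huv
      have a2 := grid_le_succ (u := u) (v := v) (n := n) (k := j) S.huv
      have a3 := grid_le (u := u) (v := v) S.huv hj
      have hstep := (ih hj'.le).comp
        (g := fun p : (ℝ × ℝ) × ℝ => ((p.1.1, p.1.2 + (v - u) / n * k m p.2), p.2)) (by
          have := (S.kcont m).measurable
          fun_prop)
      have hRs : ∀ ω, R m n (j+1) ω = R m n j ω + (v - u) / n * k m (ψ (X (grid u v n j) ω)) :=
        fun ω => by rw [hkψ]; exact Finset.sum_range_succ _ _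
      simp only [← hRs] at hstep
      have mR : Measurable[𝓗 (grid u v n j)] (R m n (j+1)) :=
        hmR m n (j+1) (by omega) _ (by rw [grid_succ]) a1 (a2.trans a3)
      have mU : Measurable[𝓗 (grid u v n j)] (fun ω => ψ (X u ω)) :=
        (hψ.comp (S.mX u le_rfl S.huv)).mono (S.hmono _ _ le_rfl a1 (a2.trans a3)) le_rfl
      have mH : Measurable[𝓗 (grid u v n j)] (fun ω => (ψ (X u ω), R m n (j+1) ω)) :=
        mU.prodMk mR
      refine Orth.pair hξ' (mH.mono (S.hle _ a1 (a2.trans a3)) le_rfl)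
        (hψ.comp (S.mX' (a1.trans a2) a3)) fun A hA => ?_
      refine step _ _ a1 a2 a3 _ ?_ ?_
      · exact (hξ.le (S.hmono _ _ le_rfl a1 (a2.trans a3))).mul ((BM.indicator hA).comp mH)
      · have := (hstep.mul (φ := fun p => A.indicator (fun _ => (1:ℝ)) p.1)
          ((BM.indicator hA).comp measurable_fst)).comp measurable_snd
        exact this
  have mU : Measurable (fun ω => ψ (X u ω)) := hψ.comp (S.mX' le_rfl S.huv)
  have mV : Measurable (fun ω => ψ (X v ω)) := hψ.comp (S.mX' S.huv le_rfl)
  have mRn : ∀ m n, Measurable (R m n n) := fun m n =>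
    (hmR m n n (Nat.le_succ n) v (by
      have := grid_le (u := u) (v := v) (n := n) S.huv le_rfl
      have h2 : 0 ≤ (v - u) / n := div_nonneg (by linarith [S.huv]) (by positivity)
      linarith) S.huv le_rfl).mono (S.hle v S.huv le_rfl) le_rfl
  have lim1 : ∀ m, ∀ᵐ ω ∂P, Tendsto (fun n => R m n n ω) atTop
      (nhds (∫ τ in u..v, k m (X τ ω))) := fun m => by
    filter_upwards [S.cX] with ω hω
    exact riemann_tendsto S.huv ((S.kcont m).comp_continuousOn hω)
  have mI : ∀ m, AEMeasurable (fun ω => ∫ τ in u..v, k m (X τ ω)) P := fun m =>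
    aemeasurable_of_tendsto_metrizable_ae' (fun n => (mRn m n).aemeasurable) (lim1 m)
  have step1 : ∀ m, Orth P ξ (fun ω => ((ψ (X u ω), ∫ τ in u..v, k m (X τ ω)), ψ (X v ω))) := by
    intro m
    refine Orth.of_tendsto_ae' (V := fun n ω => ((ψ (X u ω), R m (n+1) (n+1) ω), ψ (X v ω))) hξ'
      (fun n => ((mU.prodMk (mRn m (n+1))).prodMk mV).aemeasurable) (fun n => ?_) ?_
    · have := claim m (n+1) (n+1) le_rfl
      rwa [grid_last (Nat.succ_pos n)] at this
    · filter_upwards [lim1 m] with ω hω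
      exact (tendsto_const_nhds.prodMk_nhds
        (hω.comp (tendsto_add_atTop_nat 1))).prodMk_nhds tendsto_const_nhds
  refine Orth.of_tendsto_ae' hξ'
    (fun m => (mU.aemeasurable.prodMk (mI m)).prodMk mV.aemeasurable) step1 ?_
  filter_upwards [S.klim u v le_rfl S.huv le_rfl] with ω hω
  exact (tendsto_const_nhds.prodMk_nhds hω).prodMk_nhds tendsto_const_nhds

/-- The reflection term is a limit of additive functionals of `|X|`, hence is orthogonal to `ξ` as
soon as `ξ` is orthogonal to `|X u|`. -/
theorem orth_qN (S : Setup P q u v 𝓗 k B X N) (hξ : BM (𝓗 u) ξ)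
    (h : Orth P ξ (fun ω => |X u ω|)) : ∫ ω, ξ ω * (q * (N v ω - N u ω)) ∂P = 0 := by
  have hξ' := hξ.le (S.hle u le_rfl S.huv)
  have h1 := S.chain (ψ := fun y => |y|) (by fun_prop) S.keven
    (fun r r' a1 a2 a3 ξ hξ hr => (S.sub a1 a2 a3).step_abs hξ hr) hξ h
  have h2 : Orth P ξ (fun ω => q * (N v ω - N u ω)) :=
    h1.comp (g := fun p : (ℝ × ℝ) × ℝ => q * p.1.2) (by fun_prop)
  obtain ⟨C, hC⟩ := hξ'.2
  have hlim : Tendsto (fun n : ℕ => ∫ ω, ξ ω *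
      (max (-(n:ℝ)) (min (q * (N v ω - N u ω)) n)) ∂P) atTop
      (nhds (∫ ω, ξ ω * (q * (N v ω - N u ω)) ∂P)) := by
    have mq : Measurable (fun ω => q * (N v ω - N u ω)) :=
      ((S.mN' S.huv le_rfl).sub (S.mN' le_rfl S.huv)).const_mul q
    refine tendsto_integral_of_dominated_convergence
      (fun ω => C * |q * (N v ω - N u ω)|) (fun n => ?_)
      (S.integrable_qN.abs.const_mul _) (fun n => Eventually.of_forall fun ω => ?_)
      (Eventually.of_forall fun ω => ?_)
    · exact (hξ'.1.mul (measurable_const.max (mq.min measurable_const))).aestronglyMeasurable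
    · rw [norm_mul]
      refine mul_le_mul (hC ω) ?_ (norm_nonneg _) ((abs_nonneg _).trans (hC ω))
      rw [Real.norm_eq_abs, abs_le]
      have a1 := neg_abs_le (q * (N v ω - N u ω))
      have a2 := le_abs_self (q * (N v ω - N u ω))
      have a3 : (0:ℝ) ≤ n := by positivity
      have a4 := abs_nonneg (q * (N v ω - N u ω))
      constructor
      · rcases le_total (q * (N v ω - N u ω)) n with h | h
        · rw [min_eq_left h]; exact a1.trans (le_max_right _ _)
        · rw [min_eq_right h]; exact le_max_of_le_right (by linarith)
      · exact max_le (by linarith) ((min_le_left _ _).trans a2)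
    · refine Tendsto.const_mul _ (tendsto_const_nhds.congr' ?_)
      obtain ⟨n0, hn0⟩ := exists_nat_ge |q * (N v ω - N u ω)|
      filter_upwards [eventually_ge_atTop n0] with n hn
      have : |q * (N v ω - N u ω)| ≤ n := hn0.trans (by exact_mod_cast hn)
      rw [min_eq_left (abs_le.1 this).2, max_eq_right (abs_le.1 this).1]
  have hz : ∀ n : ℕ, ∫ ω, ξ ω * (max (-(n:ℝ)) (min (q * (N v ω - N u ω)) n)) ∂P = 0 := by
    intro n
    refine h2 (fun y => max (-(n:ℝ)) (min y n)) ⟨by fun_prop, n, fun y => ?_⟩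
    rw [abs_le]
    exact ⟨le_max_left _ _, max_le (by linarith [show (0:ℝ) ≤ n by positivity]) (min_le_right _ _)⟩
  simp only [hz] at hlim
  exact tendsto_nhds_unique hlim tendsto_const_nhds

/-- Orthogonality to `X u` passes to `X v`: every character is covered by `transfer`, whose
assumption on the reflection term is `orth_qN`. -/
theorem step_id (S : Setup P q u v 𝓗 k B X N) (hξ : BM (𝓗 u) ξ)
    (h : Orth P ξ (X u)) : Orth P ξ (X v) := by
  refine Orth.of_cos (hξ.le (S.hle u le_rfl S.huv)) (S.mX' S.huv le_rfl) fun L φ => ?_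
  have hL : ∀ y, L y = L 1 * y := fun y => by
    have := L.map_smul y (1:ℝ)
    simp only [smul_eq_mul, mul_one] at this
    rw [this, mul_comm]
  have habs : Orth P ξ (fun ω => |X u ω|) := h.comp (g := fun y => |y|) (by fun_prop)
  have := S.transfer hξ (L 1) φ (h (fun y => Real.cos (L 1 * y + φ)) (BM.cos (by fun_prop)))
    fun r r' a1 a2 a3 => by
      have s1 := S.sub le_rfl a1 (a2.trans a3)
      have s2 := S.sub a1 a2 a3
      rw [s2.orth_qN (hξ.le (S.hmono _ _ le_rfl a1 (a2.trans a3))) (s1.step_abs hξ habs),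
        mul_zero]
  simpa only [← hL] using this

/-- **Markov property of the pair `(X, N)` in dimension one.** -/
theorem markov (S : Setup P q u v 𝓗 k B X N) (hξ : BM (𝓗 u) ξ)
    (h : Orth P ξ (X u)) : Orth P ξ (fun ω => ((X u ω, N v ω - N u ω), X v ω)) :=
  S.chain (ψ := fun y => y) measurable_id (fun _ _ => rfl)
    (fun _ _ a1 a2 a3 _ hξ hr => (S.sub a1 a2 a3).step_id hξ hr) hξ h

end Setup

/-! ### Independence and Gaussian increments -/

/-- The σ-algebra generated by the whole path of `w`. -/
def sigAll {E : Type} [MeasurableSpace E] (w : ℝ → Ω → E) : MeasurableSpace Ω :=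
  ⨆ r : ℝ, MeasurableSpace.comap (w r) inferInstance

section Indep

theorem Indep.integral_mul {m1 m2 m0 : MeasurableSpace Ω} {P : Measure Ω} [IsProbabilityMeasure P]
    (h1 : m1 ≤ m0) (h2 : m2 ≤ m0) (h : Indep m1 m2 P) {Z W : Ω → ℝ}
    (hZ : Measurable[m1] Z) (hW : Measurable[m2] W) :
    ∫ ω, Z ω * W ω ∂P = (∫ ω, Z ω ∂P) * ∫ ω, W ω ∂P := by
  have hi : IndepFun Z W P := by
    rw [IndepFun_iff_Indep]
    exact indep_of_indep_of_le_left (indep_of_indep_of_le_right h hW.comap_le) hZ.comap_le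
  exact hi.integral_fun_mul_eq_mul_integral (hZ.mono h1 le_rfl).aestronglyMeasurable
    (hW.mono h2 le_rfl).aestronglyMeasurable

/-- If `m1, m2` are independent and `m1 ⊔ m2` is independent of `m3`, then `m1` is independent of
`m2 ⊔ m3`. -/
theorem Indep.sup_right_of {m1 m2 m3 m0 : MeasurableSpace Ω} {P : Measure Ω}
    [IsProbabilityMeasure P]
    (h1 : m1 ≤ m0) (h2 : m2 ≤ m0) (h3 : m3 ≤ m0) (h12 : Indep m1 m2 P)
    (h123 : Indep (m1 ⊔ m2) m3 P) : Indep m1 (m2 ⊔ m3) P := by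
  set p : Set (Set Ω) := {C | ∃ A B, MeasurableSet[m2] A ∧ MeasurableSet[m3] B ∧ C = A ∩ B} with hp
  have hgen : m2 ⊔ m3 = MeasurableSpace.generateFrom p := by
    apply le_antisymm
    · refine sup_le (fun A hA => ?_) (fun B hB => ?_)
      · exact MeasurableSpace.measurableSet_generateFrom
          ⟨A, Set.univ, hA, @MeasurableSet.univ _ m3, by simp⟩
      · exact MeasurableSpace.measurableSet_generateFrom
          ⟨Set.univ, B, @MeasurableSet.univ _ m2, hB, by simp⟩
    · refine MeasurableSpace.generateFrom_le ?_
      rintro C ⟨A, B, hA, hB, rfl⟩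
      exact @MeasurableSet.inter _ (m2 ⊔ m3) _ _ ((le_sup_left : m2 ≤ m2 ⊔ m3) _ hA)
        ((le_sup_right : m3 ≤ m2 ⊔ m3) _ hB)
  refine IndepSets.indep (p1 := {A | MeasurableSet[m1] A}) (p2 := p) h1 (sup_le h2 h3)
    (@MeasurableSpace.isPiSystem_measurableSet _ m1) ?_
    (@MeasurableSpace.generateFrom_measurableSet _ m1).symm hgen ?_
  · rintro _ ⟨A, B, hA, hB, rfl⟩ _ ⟨A', B', hA', hB', rfl⟩ -
    exact ⟨A ∩ A', B ∩ B', @MeasurableSet.inter _ m2 _ _ hA hA',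
      @MeasurableSet.inter _ m3 _ _ hB hB', Set.inter_inter_inter_comm _ _ _ _⟩
  · rw [IndepSets_iff]
    rintro D _ hD ⟨A, B, hA, hB, rfl⟩
    rw [Indep_iff] at h12 h123
    have e1 := h123 (D ∩ A) B (@MeasurableSet.inter _ (m1 ⊔ m2) _ _
      ((le_sup_left : m1 ≤ m1 ⊔ m2) _ hD) ((le_sup_right : m2 ≤ m1 ⊔ m2) _ hA)) hB
    have e2 := h123 A B ((le_sup_right : m2 ≤ m1 ⊔ m2) _ hA) hB
    rw [← Set.inter_assoc, e1, e2, h12 D A hD hA, mul_assoc]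

end Indep

section Gauss

variable {P : Measure Ω} [IsProbabilityMeasure P]

/-- Characteristic function of a centred Gaussian variable of variance `τ`, in the form of an integral. -/
theorem gauss_exp {V : Ω → ℝ} (hV : AEMeasurable V P) {τ : ℝ} (hτ : 0 ≤ τ)
    (h : P.map V = gaussianReal 0 (Real.toNNReal τ)) (θ : ℝ) :
    ∫ ω, Complex.exp ((θ * V ω : ℝ) * Complex.I) ∂P = (Real.exp (-(θ ^ 2 / 2 * τ)) : ℝ) := by
  have h1 := charFun_gaussianReal (μ := 0) (v := Real.toNNReal τ) θ
  rw [← h, charFun_apply_real, integral_map hV (by fun_prop)] at h1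
  push_cast
  rw [h1, Real.coe_toNNReal _ hτ]
  congr 1
  push_cast
  ring

end Gauss

section Wiener

variable {E : Type} [NormedAddCommGroup E] [InnerProductSpace ℝ E]
    [MeasurableSpace E] [BorelSpace E] {P : Measure Ω} [IsProbabilityMeasure P] {w : ℝ → Ω → E}

/-- A Wiener process with a standard Gaussian increment in every direction can only exist in
finite dimension: along an orthonormal sequence the increments would be standard Gaussian and, by
Bessel's inequality, tend to `0`. -/
theorem IsWiener.finiteDimensional (hw : IsWiener P w) : FiniteDimensional ℝ E := by
  by_contra hfin
  have hrank : Cardinal.aleph0 ≤ Module.rank ℝ E := by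
    by_contra h
    exact hfin (Module.rank_lt_aleph0_iff.1 (not_le.1 h))
  obtain ⟨S, hS, hli⟩ := le_rank_iff_exists_linearIndependent.1 hrank
  obtain ⟨hden⟩ := Cardinal.denumerable_iff.2 hS
  let f : ℕ → E := fun n => ((Denumerable.eqv S).symm n : S)
  have hf : LinearIndependent ℝ f := hli.comp _ (Denumerable.eqv S).symm.injective
  have he : Orthonormal ℝ (InnerProductSpace.gramSchmidtNormed ℝ f) :=
    InnerProductSpace.gramSchmidtNormed_orthonormal hf
  set e := InnerProductSpace.gramSchmidtNormed ℝ f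
  have hsm : ∀ n, Measurable fun ω => ⟪w 1 ω, e n⟫ - ⟪w 0 ω, e n⟫ := fun n =>
    ((continuous_id.inner continuous_const).measurable.comp (hw.meas 1)).sub
      ((continuous_id.inner continuous_const).measurable.comp (hw.meas 0))
  have hval : ∀ n, ∫ ω, Complex.exp (((1:ℝ) * (⟪w 1 ω, e n⟫ - ⟪w 0 ω, e n⟫) : ℝ) * Complex.I) ∂P
      = (Real.exp (-((1:ℝ) ^ 2 / 2 * (1 - 0))) : ℝ) := fun n => by
    refine gauss_exp (hsm n).aemeasurable (by norm_num) ?_ 1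
    rw [← hw.incr_law (e n) (he.1 n) 0 1 le_rfl zero_le_one]
    simp only [inner_sub_left]
  have hlim : Tendsto (fun n => ∫ ω, Complex.exp
      (((1:ℝ) * (⟪w 1 ω, e n⟫ - ⟪w 0 ω, e n⟫) : ℝ) * Complex.I) ∂P) atTop
      (nhds (∫ _ω, (1:ℂ) ∂P)) := by
    refine tendsto_integral_of_dominated_convergence (fun _ => 1) (fun n => ?_)
      (integrable_const _) (fun n => Eventually.of_forall fun ω => ?_)
      (Eventually.of_forall fun ω => ?_)
    · have := hsm n
      exact Measurable.aestronglyMeasurable (by fun_prop)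
    · rw [Complex.norm_exp_ofReal_mul_I]
    · have h0 : Tendsto (fun n => ⟪w 1 ω, e n⟫ - ⟪w 0 ω, e n⟫) atTop (nhds 0) := by
        have hs := (he.inner_products_summable (w 1 ω - w 0 ω)).tendsto_atTop_zero
        have h1 : Tendsto (fun n => ‖⟪e n, w 1 ω - w 0 ω⟫‖) atTop (nhds 0) := by
          have := hs.sqrt
          simpa [Real.sqrt_sq_eq_abs] using this
        have := tendsto_zero_iff_norm_tendsto_zero.2 h1
        refine this.congr fun n => ?_
        rw [real_inner_comm, inner_sub_left]
      have hc : Continuous fun y : ℝ => Complex.exp (((1:ℝ) * y : ℝ) * Complex.I) := by fun_prop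
      have h2 := (hc.tendsto 0).comp h0
      rw [mul_zero, Complex.ofReal_zero, zero_mul, Complex.exp_zero] at h2
      exact h2
  simp only [hval] at hlim
  have := tendsto_nhds_unique hlim tendsto_const_nhds
  simp only [integral_const, probReal_univ, one_smul] at this
  have h3 := (Real.exp_eq_one_iff _).1 (Complex.ofReal_eq_one.1 this.symm)
  norm_num at h3

theorem cos_sin_of_exp {V : Ω → ℝ} (hV : Measurable V) {c : ℝ}
    (h : ∫ ω, Complex.exp ((V ω : ℝ) * Complex.I) ∂P = (c : ℝ)) :
    ∫ ω, Real.cos (V ω) ∂P = c ∧ ∫ ω, Real.sin (V ω) ∂P = 0 := by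
  have hi : Integrable (fun ω => Complex.exp ((V ω : ℝ) * Complex.I)) P :=
    Integrable.of_bound (C := 1) (Measurable.aestronglyMeasurable (by fun_prop))
      (Eventually.of_forall fun ω => by rw [Complex.norm_exp_ofReal_mul_I])
  constructor
  · have := integral_re hi
    rw [h] at this
    simpa [Complex.exp_ofReal_mul_I_re] using this
  · have := integral_im hi
    rw [h] at this
    simpa [Complex.exp_ofReal_mul_I_im] using this

variable [FiniteDimensional ℝ E]

theorem IsWiener.exp_incr (hw : IsWiener P w) (θ : E) {s t : ℝ} (hs : 0 ≤ s) (hst : s ≤ t) :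
    ∫ ω, Complex.exp ((⟪w t ω - w s ω, θ⟫ : ℝ) * Complex.I) ∂P
      = (Real.exp (-(‖θ‖ ^ 2 / 2 * (t - s))) : ℝ) := by
  by_cases h0 : θ = 0
  · simp [h0]
  have hn : ‖θ‖ ≠ 0 := norm_ne_zero_iff.2 h0
  have h1 : ‖(‖θ‖⁻¹ • θ)‖ = 1 := by rw [norm_smul, norm_inv, norm_norm, inv_mul_cancel₀ hn]
  have hm := hw.meas t
  have hm' := hw.meas s
  rw [← gauss_exp (V := fun ω => ⟪w t ω - w s ω, ‖θ‖⁻¹ • θ⟫) (by fun_prop) (sub_nonneg.2 hst)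
    (hw.incr_law _ h1 s t hs hst) ‖θ‖]
  refine integral_congr_ae (Eventually.of_forall fun ω => ?_)
  simp only [inner_smul_right]
  rw [mul_inv_cancel_left₀ hn]

theorem projS_inner (ν : E) (hν : ‖ν‖ = 1) (v : E) : ⟪projS ν v, ν⟫ = 0 := by
  simp [projS, inner_sub_left, inner_smul_left, hν]

theorem inner_projS (ν : E) {u : E} (hu : ⟪u, ν⟫ = 0) (v : E) : ⟪u, projS ν v⟫ = ⟪u, v⟫ := by
  simp [projS, inner_sub_right, inner_smul_right, hu]

theorem IsWienerIn.exp_incr {ν : E} (hν : ‖ν‖ = 1) (hw : IsWienerIn P ν w) (θ : E) {s t : ℝ}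
    (hs : 0 ≤ s) (hst : s ≤ t) :
    ∫ ω, Complex.exp ((⟪w t ω - w s ω, θ⟫ : ℝ) * Complex.I) ∂P
      = (Real.exp (-(‖projS ν θ‖ ^ 2 / 2 * (t - s))) : ℝ) := by
  have hz : ∀ ω, ⟪w t ω - w s ω, ν⟫ = 0 := fun ω => by
    rw [inner_sub_left, hw.mem, hw.mem, sub_zero]
  have hp : ∀ ω, ⟪w t ω - w s ω, θ⟫ = ⟪w t ω - w s ω, projS ν θ⟫ := fun ω =>
    (inner_projS ν (hz ω) θ).symm
  simp only [hp]
  by_cases h0 : projS ν θ = 0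
  · simp [h0]
  have hn : ‖projS ν θ‖ ≠ 0 := norm_ne_zero_iff.2 h0
  have h1 : ‖(‖projS ν θ‖⁻¹ • projS ν θ)‖ = 1 := by
    rw [norm_smul, norm_inv, norm_norm, inv_mul_cancel₀ hn]
  have hm := hw.meas t
  have hm' := hw.meas s
  rw [← gauss_exp (V := fun ω => ⟪w t ω - w s ω, ‖projS ν θ‖⁻¹ • projS ν θ⟫) (by fun_prop)
    (sub_nonneg.2 hst) (hw.incr_law _ h1 (by
      rw [inner_smul_left, projS_inner ν hν, mul_zero]) s t hs hst) ‖projS ν θ‖]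
  refine integral_congr_ae (Eventually.of_forall fun ω => ?_)
  simp only [inner_smul_right]
  rw [mul_inv_cancel_left₀ hn]

end Wiener

/-! ### σ-algebras generated by the Wiener processes -/

section SigmaAlgebras

variable {F : Type} [MeasurableSpace F] {w : ℝ → Ω → F}

theorem natFilt_mono {s t : ℝ} (h : s ≤ t) : natFilt w s ≤ natFilt w t :=
  iSup₂_le fun u hu => le_iSup₂_of_le u ⟨hu.1, hu.2.trans h⟩ le_rfl

theorem natFilt_le_sigAll (t : ℝ) : natFilt w t ≤ sigAll w :=
  iSup₂_le fun u _ => le_iSup_of_le u le_rfl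

theorem sigAll_le (hw : ∀ t, Measurable (w t)) : sigAll w ≤ ‹MeasurableSpace Ω› :=
  iSup_le fun u => (hw u).comap_le

theorem natFilt_le (hw : ∀ t, Measurable (w t)) (t : ℝ) : natFilt w t ≤ ‹MeasurableSpace Ω› :=
  (natFilt_le_sigAll t).trans (sigAll_le hw)

theorem measurable_natFilt {r s : ℝ} (h0 : 0 ≤ r) (h : r ≤ s) : Measurable[natFilt w s] (w r) :=
  measurable_iff_comap_le.2 (le_iSup₂_of_le r ⟨h0, h⟩ le_rfl)

theorem measurable_sigAll (r : ℝ) : Measurable[sigAll w] (w r) :=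
  measurable_iff_comap_le.2 (le_iSup_of_le r le_rfl)

/-- The σ-algebra of the path on `[0, s]`, as an element of a product space, is that of the family. -/
theorem comap_path_Icc (s : ℝ) :
    MeasurableSpace.comap (fun ω (u : Set.Icc (0:ℝ) s) => w u ω) inferInstance = natFilt w s := by
  rw [show (inferInstance : MeasurableSpace (Set.Icc (0:ℝ) s → F)) = MeasurableSpace.pi from rfl,
    MeasurableSpace.pi, MeasurableSpace.comap_iSup]
  simp only [MeasurableSpace.comap_comp, natFilt, iSup_subtype']
  rfl

theorem comap_path :
    MeasurableSpace.comap (fun ω (u : ℝ) => w u ω) inferInstance = sigAll w := by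
  rw [show (inferInstance : MeasurableSpace (ℝ → F)) = MeasurableSpace.pi from rfl,
    MeasurableSpace.pi, MeasurableSpace.comap_iSup]
  simp only [MeasurableSpace.comap_comp, sigAll]
  rfl

theorem IndepProc.indep {G : Type} [MeasurableSpace G] {w' : ℝ → Ω → G} {P : Measure Ω}
    (h : IndepProc P w w') : Indep (sigAll w) (sigAll w') P := by
  have := (IndepFun_iff_Indep _ _ _).1 h
  rwa [comap_path, comap_path] at this

theorem indep_natFilt {P : Measure Ω} {V : Ω → F} {s : ℝ}
    (h : IndepFun V (fun ω (u : Set.Icc (0:ℝ) s) => w u ω) P) :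
    Indep (MeasurableSpace.comap V inferInstance) (natFilt w s) P := by
  have := (IndepFun_iff_Indep _ _ _).1 h
  rwa [comap_path_Icc] at this

end SigmaAlgebras

section Twist

variable {E : Type} [NormedAddCommGroup E] [InnerProductSpace ℝ E]
    [MeasurableSpace E] [BorelSpace E] [FiniteDimensional ℝ E]
    {P : Measure Ω} [IsProbabilityMeasure P]
    {w wt : ℝ → Ω → E} {ν : E}

/-- Components of an increment of `w` along orthogonal directions are independent. -/
theorem IsWiener.indep_inner (hw : IsWiener P w) {ν θ : E} (hθ : ⟪θ, ν⟫ = 0) {s t : ℝ}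
    (hs : 0 ≤ s) (hst : s ≤ t) :
    IndepFun (fun ω => ⟪w t ω - w s ω, ν⟫) (fun ω => ⟪w t ω - w s ω, θ⟫) P := by
  have hm := hw.meas t
  have hm' := hw.meas s
  have key : ∀ φ : E, ∫ ω, Complex.exp ((⟪w t ω - w s ω, φ⟫ : ℝ) * Complex.I) ∂P
      = (Real.exp (-(‖φ‖ ^ 2 / 2 * (t - s))) : ℝ) := fun φ => hw.exp_incr φ hs hst
  rw [indepFun_iff_charFunDual_prod (by fun_prop) (by fun_prop)]
  intro L
  set a := L (1, 0) with ha
  set b := L (0, 1) with hb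
  have hL1 : ∀ x : ℝ, L (x, 0) = a * x := fun x => by
    have : ((x, 0) : ℝ × ℝ) = x • (1, 0) := by simp
    rw [this, map_smul, smul_eq_mul, mul_comm]
  have hL2 : ∀ x : ℝ, L (0, x) = b * x := fun x => by
    have : ((0, x) : ℝ × ℝ) = x • (0, 1) := by simp
    rw [this, map_smul, smul_eq_mul, mul_comm]
  have hL : ∀ x y : ℝ, L (x, y) = a * x + b * y := fun x y => by
    rw [← hL1, ← hL2, ← map_add]; simp
  simp only [charFunDual_apply]
  rw [integral_map (by fun_prop) (by fun_prop), integral_map (by fun_prop) (by fun_prop),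
    integral_map (by fun_prop) (by fun_prop)]
  simp only [ContinuousLinearMap.comp_apply, ContinuousLinearMap.inl_apply,
    ContinuousLinearMap.inr_apply, hL1, hL2, hL]
  have e1 : ∀ ω, a * ⟪w t ω - w s ω, ν⟫ + b * ⟪w t ω - w s ω, θ⟫
      = ⟪w t ω - w s ω, a • ν + b • θ⟫ := fun ω => by
    simp [inner_add_right, inner_smul_right]
  have e2 : ∀ ω, a * ⟪w t ω - w s ω, ν⟫ = ⟪w t ω - w s ω, a • ν⟫ := fun ω => by
    simp [inner_smul_right]
  have e3 : ∀ ω, b * ⟪w t ω - w s ω, θ⟫ = ⟪w t ω - w s ω, b • θ⟫ := fun ω => by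
    simp [inner_smul_right]
  simp only [e1]
  simp only [e2, e3]
  rw [key, key, key, ← Complex.ofReal_mul, ← Real.exp_add]
  congr 2
  have : ⟪a • ν, b • θ⟫ = 0 := by
    rw [inner_smul_left, inner_smul_right, real_inner_comm, hθ]; simp
  rw [@norm_add_sq_real, this]
  ring

/-- The past of `w` up to `r`, enlarged by the independent path of `w̃` and by one transversal
component of the increment `w_v - w_u`. -/
def twist (w wt : ℝ → Ω → E) (θ : E) (u v r : ℝ) : MeasurableSpace Ω :=
  natFilt w r ⊔ sigAll wt ⊔ MeasurableSpace.comap (fun ω => ⟪w v ω - w u ω, θ⟫) inferInstance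

theorem twist_mono {θ : E} {u v r r' : ℝ} (h : r ≤ r') : twist w wt θ u v r ≤ twist w wt θ u v r' :=
  sup_le_sup_right (sup_le_sup_right (natFilt_mono h) _) _

theorem measurable_inner_sub {m : MeasurableSpace Ω} {f g : Ω → E} (hf : Measurable[m] f)
    (hg : Measurable[m] g) (θ : E) : Measurable[m] (fun ω => ⟪f ω - g ω, θ⟫) := by
  fun_prop

theorem twist_le (hw : ∀ t, Measurable (w t)) (hwt : ∀ t, Measurable (wt t)) (θ : E) (u v r : ℝ) :
    twist w wt θ u v r ≤ ‹MeasurableSpace Ω› :=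
  sup_le (sup_le (natFilt_le hw r) (sigAll_le hwt))
    (measurable_inner_sub (hw v) (hw u) θ).comap_le

/-- The combination of independences behind `IsWiener.indep_twist`, with the σ-algebras abstracted:
`mB`, `mC` stand for the normal and a transversal component of an increment, `mV` for the whole
increment, `mN` for the past before it, `mD` for the increments after it, and `mT` for `w̃`. -/
theorem indep_chain {mB mC mV mN mN' mD mW mT m0 : MeasurableSpace Ω} {P : Measure Ω}
    [IsProbabilityMeasure P] (hBV : mB ≤ mV) (hCV : mC ≤ mV) (hVN : mV ≤ mN') (hN : mN ≤ mN')
    (hNW : mN' ≤ mW) (hDW : mD ≤ mW) (hW : mW ≤ m0) (hT : mT ≤ m0) (i1 : Indep mB mC P)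
    (i2 : Indep mV mN P) (i3 : Indep mD mN' P) (i4 : Indep mW mT P) :
    Indep mB (((mC ⊔ mN) ⊔ mD) ⊔ mT) P := by
  have hN0 := hNW.trans hW
  have hV0 := hVN.trans hN0
  have j1 : Indep mB (mC ⊔ mN) P :=
    Indep.sup_right_of (hBV.trans hV0) (hCV.trans hV0) (hN.trans hN0) i1
      (indep_of_indep_of_le_left i2 (sup_le hBV hCV))
  have hCN : mC ⊔ mN ≤ mN' := sup_le (hCV.trans hVN) hN
  have j2 : Indep mB ((mC ⊔ mN) ⊔ mD) P :=
    Indep.sup_right_of (hBV.trans hV0) (hCN.trans hN0) (hDW.trans hW) j1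
      (indep_of_indep_of_le_right i3 (sup_le (hBV.trans hVN) hCN)).symm
  have hCNDW : (mC ⊔ mN) ⊔ mD ≤ mW := sup_le (hCN.trans hNW) hDW
  exact Indep.sup_right_of (hBV.trans hV0) (hCNDW.trans hW) hT j2
    (indep_of_indep_of_le_left i4 (sup_le ((hBV.trans hVN).trans hNW) hCNDW))

/-- The twisted past is generated by the past of `w`, the path of `w̃`, the transversal component of
the increment over `[r, r']`, and the increment over `[r', v]`. -/
theorem twist_le_of {θ : E} {u v r r' : ℝ} {m : MeasurableSpace Ω} (hu : 0 ≤ u) (hur : u ≤ r)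
    (hn : natFilt w r ≤ m) (hT : sigAll wt ≤ m)
    (a1 : Measurable[m] (fun ω => ⟪w r' ω - w r ω, θ⟫))
    (a3 : Measurable[m] (fun ω => w v ω - w r' ω)) : twist w wt θ u v r ≤ m := by
  refine sup_le (sup_le hn hT) (Measurable.comap_le ?_)
  have a2 : Measurable[m] (fun ω => ⟪w r ω - w u ω, θ⟫) :=
    measurable_inner_sub ((measurable_natFilt (hu.trans hur) le_rfl).mono hn le_rfl)
      ((measurable_natFilt hu hur).mono hn le_rfl) θ
  have a4 : Measurable[m] (fun ω => ⟪w v ω - w r' ω, θ⟫) := by fun_prop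
  have : (fun ω => ⟪w v ω - w u ω, θ⟫) = fun ω => ⟪w r' ω - w r ω, θ⟫ + ⟪w r ω - w u ω, θ⟫
      + ⟪w v ω - w r' ω, θ⟫ := by
    funext ω
    simp only [inner_sub_left]
    ring
  rw [this]
  exact (a1.add a2).add a4

/-- The normal component of `w` still has independent increments over subintervals of `[u, v]` when
its past is enlarged by `w̃` and by a transversal component of `w_v - w_u`. -/
theorem IsWiener.indep_twist (hw : IsWiener P w) (hwt : ∀ t, Measurable (wt t))
    (hind : IndepProc P w wt) {θ : E} (hθ : ⟪θ, ν⟫ = 0) {u v r r' : ℝ} (hu : 0 ≤ u)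
    (hur : u ≤ r) (hr : r ≤ r') (hr' : r' ≤ v) :
    Indep (MeasurableSpace.comap (fun ω => ⟪w r' ω - w r ω, ν⟫) inferInstance)
      (twist w wt θ u v r) P := by
  have hr0 : 0 ≤ r := hu.trans hur
  have hcmp : ∀ θ : E, MeasurableSpace.comap (fun ω => ⟪w r' ω - w r ω, θ⟫) inferInstance
      ≤ MeasurableSpace.comap (fun ω => w r' ω - w r ω) inferInstance := fun θ =>
    Measurable.comap_le ((continuous_id.inner continuous_const).measurable.comp
      (comap_measurable (fun ω => w r' ω - w r ω)))
  have key := indep_chain (hcmp ν) (hcmp θ)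
    (Measurable.comap_le ((measurable_natFilt (hr0.trans hr) le_rfl).sub
      (measurable_natFilt hr0 hr))) (natFilt_mono hr) (natFilt_le_sigAll r')
    (mD := MeasurableSpace.comap (fun ω => w v ω - w r' ω) inferInstance)
    (Measurable.comap_le ((measurable_sigAll _).sub (measurable_sigAll _)))
    (sigAll_le hw.meas) (sigAll_le hwt)
    ((IndepFun_iff_Indep _ _ _).1 (hw.indep_inner hθ hr0 hr))
    (indep_natFilt (hw.incr_indep r r' hr0 hr))
    (indep_natFilt (hw.incr_indep r' v (hr0.trans hr) hr')) hind.indep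
  refine indep_of_indep_of_le_right key (twist_le_of hu hur ?_ le_sup_right
    (r' := r') ?_ ?_)
  · exact (le_sup_right.trans le_sup_left).trans le_sup_left
  · exact (comap_measurable (fun ω => ⟪w r' ω - w r ω, θ⟫)).mono
      ((le_sup_left.trans le_sup_left).trans le_sup_left) le_rfl
  · exact (comap_measurable (fun ω => w v ω - w r' ω)).mono
      (le_sup_right.trans le_sup_left) le_rfl

/-- The increments of `w` over `[u, v]` are independent of the past of `w` and the path of `w̃`. -/
theorem IsWiener.indep_incr_sup (hw : IsWiener P w) (hwt : ∀ t, Measurable (wt t))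
    (hind : IndepProc P w wt) {u v : ℝ} (hu : 0 ≤ u) (huv : u ≤ v) :
    Indep (MeasurableSpace.comap (fun ω => w v ω - w u ω) inferInstance)
      (natFilt w u ⊔ sigAll wt) P := by
  refine Indep.sup_right_of ?_ (natFilt_le hw.meas u) (sigAll_le hwt)
    (indep_natFilt (hw.incr_indep u v hu huv)) (indep_of_indep_of_le_left hind.indep ?_)
  · exact Measurable.comap_le ((hw.meas v).sub (hw.meas u))
  · exact sup_le (Measurable.comap_le ((measurable_sigAll _).sub (measurable_sigAll _)))
      (natFilt_le_sigAll u)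

/-- The increments of `w̃` are independent of its past and of the path of `w`. -/
theorem IsWienerIn.indep_incr_sup (hwt : IsWienerIn P ν wt) (hw : ∀ t, Measurable (w t))
    (hind : IndepProc P w wt) {u v : ℝ} (hu : 0 ≤ u) (huv : u ≤ v) :
    Indep (MeasurableSpace.comap (fun ω => wt v ω - wt u ω) inferInstance)
      (natFilt wt u ⊔ sigAll w) P := by
  refine Indep.sup_right_of ?_ (natFilt_le hwt.meas u) (sigAll_le hw)
    (indep_natFilt (hwt.incr_indep u v hu huv)) (indep_of_indep_of_le_left hind.indep.symm ?_)
  · exact Measurable.comap_le ((hwt.meas v).sub (hwt.meas u))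
  · exact sup_le (Measurable.comap_le ((measurable_sigAll _).sub (measurable_sigAll _)))
      (natFilt_le_sigAll u)

end Twist

/-! ### Local time and the normal coordinate of the solution -/

section LocalTime

/-- The scale `1 / (m + 1)`. -/
def epsm (m : ℕ) : ℝ := 1 / ((m:ℝ) + 1)

theorem epsm_pos (m : ℕ) : 0 < epsm m := by unfold epsm; positivity

/-- A continuous even approximation of `1_{|y| ≤ ε} / (2 ε)`, `ε = 1 / (m + 1)`, lying between
this function and a multiple of the one at scale `ε + ε²`. -/
def kerm (m : ℕ) (y : ℝ) : ℝ :=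
  1 / (2 * epsm m) * max 0 (min 1 ((epsm m + epsm m ^ 2 - |y|) / epsm m ^ 2))

theorem ker_cont (m : ℕ) : Continuous (kerm m) := by
  unfold kerm
  fun_prop

theorem ker_even (m : ℕ) (y : ℝ) : kerm m |y| = kerm m y := by
  unfold kerm
  rw [abs_abs]

theorem le_kerm (m : ℕ) (y : ℝ) :
    1 / (2 * epsm m) * (if |y| ≤ epsm m then (1:ℝ) else 0) ≤ kerm m y := by
  have h := epsm_pos m
  unfold kerm
  refine mul_le_mul_of_nonneg_left ?_ (by positivity)
  split_ifs with hy
  · refine le_max_of_le_right (le_min le_rfl ?_)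
    rw [le_div_iff₀ (by positivity)]
    linarith
  · exact le_max_left _ _

theorem ker_le (m : ℕ) (y : ℝ) : kerm m y ≤ (1 + epsm m) * (1 / (2 * (epsm m + epsm m ^ 2)) *
    (if |y| ≤ epsm m + epsm m ^ 2 then (1:ℝ) else 0)) := by
  have h := epsm_pos m
  have e : (1 + epsm m) * (1 / (2 * (epsm m + epsm m ^ 2)) *
    (if |y| ≤ epsm m + epsm m ^ 2 then (1:ℝ) else 0)) = 1 / (2 * epsm m) *
      (if |y| ≤ epsm m + epsm m ^ 2 then (1:ℝ) else 0) := by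
    field_simp
  rw [e]
  unfold kerm
  refine mul_le_mul_of_nonneg_left ?_ (by positivity)
  split_ifs with hy
  · exact max_le zero_le_one (min_le_left _ _)
  · refine max_le le_rfl ((min_le_right _ _).trans ?_)
    exact div_nonpos_of_nonpos_of_nonneg (by linarith [not_le.1 hy]) (by positivity)

theorem epsm_tendsto : Tendsto epsm atTop (nhds 0) := tendsto_one_div_add_atTop_nhds_zero_nat

theorem occ_integrable {f : ℝ → ℝ} (hf : Continuous f) (ε a b : ℝ) :
    IntervalIntegrable (fun τ => if |f τ| ≤ ε then (1:ℝ) else 0) volume a b := by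
  have hm : Measurable (fun τ => if |f τ| ≤ ε then (1:ℝ) else 0) :=
    Measurable.ite (measurableSet_le hf.abs.measurable measurable_const) measurable_const
      measurable_const
  refine (intervalIntegrable_const (c := (1:ℝ))).mono_fun hm.aestronglyMeasurable ?_
  refine Eventually.of_forall fun τ => ?_
  dsimp only
  split_ifs <;> simp

/-- The additive functionals of the continuous kernels converge to the local time, by comparison with
the indicators at the scales `ε` and `ε + ε²`. -/
theorem ker_tendsto {f : ℝ → ℝ} (hf : Continuous f) {t L : ℝ} (ht : 0 ≤ t)
    (h : Tendsto (fun ε : ℝ => (1 / (2 * ε)) * ∫ τ in (0:ℝ)..t, (if |f τ| ≤ ε then (1:ℝ) else 0))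
      (nhdsWithin 0 (Set.Ioi 0)) (nhds L)) :
    Tendsto (fun m => ∫ τ in (0:ℝ)..t, kerm m (f τ)) atTop (nhds L) := by
  have h1 : Tendsto epsm atTop (nhdsWithin 0 (Set.Ioi 0)) :=
    tendsto_nhdsWithin_iff.2 ⟨epsm_tendsto, Eventually.of_forall fun m => epsm_pos m⟩
  have h2 : Tendsto (fun m => epsm m + epsm m ^ 2) atTop (nhdsWithin 0 (Set.Ioi 0)) := by
    refine tendsto_nhdsWithin_iff.2 ⟨?_, Eventually.of_forall fun m => ?_⟩
    · simpa using epsm_tendsto.add (epsm_tendsto.pow 2)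
    · have := epsm_pos m
      simp only [Set.mem_Ioi]
      positivity
  have h3 := (epsm_tendsto.const_add 1).mul (h.comp h2)
  rw [add_zero, one_mul] at h3
  refine tendsto_of_tendsto_of_tendsto_of_le_of_le (h.comp h1) h3 (fun m => ?_) (fun m => ?_)
  · simp only [Function.comp_apply]
    rw [← intervalIntegral.integral_const_mul]
    exact intervalIntegral.integral_mono_on ht ((occ_integrable hf _ _ _).const_mul _)
      (((ker_cont m).comp hf).intervalIntegrable _ _) fun τ _ => le_kerm m _
  · simp only [Function.comp_apply]
    rw [← intervalIntegral.integral_const_mul, ← intervalIntegral.integral_const_mul]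
    exact intervalIntegral.integral_mono_on ht (((ker_cont m).comp hf).intervalIntegrable _ _)
      (((occ_integrable hf _ _ _).const_mul _).const_mul _) fun τ _ => ker_le m _

/-- The local time does not grow over an interval on which the path stays away from `0`. -/
theorem occ_const {f : ℝ → ℝ} (hf : Continuous f) {t t' L L' c : ℝ} (htt : t ≤ t')
    (hc : 0 < c) (hfc : ∀ τ ∈ Set.Icc t t', c ≤ |f τ|)
    (h : Tendsto (fun ε : ℝ => (1 / (2 * ε)) * ∫ τ in (0:ℝ)..t, (if |f τ| ≤ ε then (1:ℝ) else 0))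
      (nhdsWithin 0 (Set.Ioi 0)) (nhds L))
    (h' : Tendsto (fun ε : ℝ => (1 / (2 * ε)) * ∫ τ in (0:ℝ)..t', (if |f τ| ≤ ε then (1:ℝ) else 0))
      (nhdsWithin 0 (Set.Ioi 0)) (nhds L')) : L = L' := by
  refine tendsto_nhds_unique (h.congr' ?_) h'
  have : ∀ᶠ ε : ℝ in nhdsWithin 0 (Set.Ioi 0), ε < c := nhdsWithin_le_nhds (eventually_lt_nhds hc)
  filter_upwards [this] with ε hε
  congr 1
  rw [← intervalIntegral.integral_add_adjacent_intervals (occ_integrable hf ε 0 t)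
    (occ_integrable hf ε t t')]
  have : ∫ τ in t..t', (if |f τ| ≤ ε then (1:ℝ) else 0) = ∫ τ in t..t', (0:ℝ) := by
    refine intervalIntegral.integral_congr fun τ hτ => ?_
    rw [Set.uIcc_of_le htt] at hτ
    have := hfc τ hτ
    exact if_neg (by linarith)
  rw [this]
  simp

/-- The local time can only grow on intervals containing a zero. -/
theorem localTime_zero {f N : ℝ → ℝ} (hf : Continuous f) (hN : Continuous N) (hmono : Monotone N)
    (h : ∀ p : ℚ, 0 ≤ (p:ℝ) → Tendsto (fun ε : ℝ => (1 / (2 * ε)) *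
      ∫ τ in (0:ℝ)..p, (if |f τ| ≤ ε then (1:ℝ) else 0)) (nhdsWithin 0 (Set.Ioi 0)) (nhds (N p)))
    {r r' : ℝ} (hr : 0 ≤ r) (hrr : r ≤ r') (hne : N r ≠ N r') :
    ∃ τ ∈ Set.Icc r r', f τ = 0 := by
  by_contra! hcon
  have hlt : r < r' := lt_of_le_of_ne hrr fun e => hne (by rw [e])
  obtain ⟨τ0, hτ0, hmin⟩ := isCompact_Icc.exists_isMinOn (Set.nonempty_Icc.2 hrr)
    hf.abs.continuousOn
  have hc : 0 < |f τ0| := abs_pos.2 (hcon τ0 hτ0)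
  have hq : ∀ p p' : ℚ, r < p → p ≤ p' → (p':ℝ) < r' → N p = N p' := fun p p' h1 h2 h3 =>
    occ_const hf (by exact_mod_cast h2) hc
      (fun τ hτ => hmin (Set.mem_Icc.2 ⟨h1.le.trans hτ.1, hτ.2.trans h3.le⟩))
      (h p (hr.trans h1.le)) (h p' (hr.trans (h1.le.trans (by exact_mod_cast h2))))
  obtain ⟨p0, hp0, hp0'⟩ := exists_rat_btwn hlt
  have hq' : ∀ p : ℚ, r < p → (p:ℝ) < r' → N p = N p0 := fun p h1 h2 => by
    rcases le_total p p0 with h | h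
    · exact hq p p0 h1 h hp0'
    · exact (hq p0 p hp0 h h2).symm
  have hI : Set.Ioo r r' ⊆ {τ | N τ = N p0} := fun τ hτ => by
    obtain ⟨p1, h1, h1'⟩ := exists_rat_btwn hτ.1
    obtain ⟨p2, h2, h2'⟩ := exists_rat_btwn hτ.2
    have e1 := hq' p1 h1 (h1'.trans hτ.2)
    have e2 := hq' p2 (hτ.1.trans h2) h2'
    exact le_antisymm (e2 ▸ hmono h2.le) (e1 ▸ hmono h1'.le)
  have hcl : Set.Icc r r' ⊆ {τ | N τ = N p0} := by
    rw [← closure_Ioo hlt.ne]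
    exact closure_minimal hI (isClosed_eq hN continuous_const)
  have a1 : N r = N p0 := hcl (Set.left_mem_Icc.2 hrr)
  have a2 : N r' = N p0 := hcl (Set.right_mem_Icc.2 hrr)
  exact hne (a1.trans a2.symm)

end LocalTime

/-- The data of the theorem for one starting point. -/
structure Ctx {E : Type} [NormedAddCommGroup E] [InnerProductSpace ℝ E]
    [MeasurableSpace E] [BorelSpace E] (P : Measure Ω) (ν : E) (q : ℝ)
    (α : E → E) (βt : E → E →L[ℝ] E) (K : ℝ) (w wt : ℝ → Ω → E) (x : E)
    (X : ℝ → Ω → E) (η : ℝ → Ω → ℝ) : Prop where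
  hν : ‖ν‖ = 1
  hK : 0 < K
  hbd : ∀ v : E, ⟪v, ν⟫ = 0 → ‖α v‖ + ‖βt v‖ ≤ K
  hlip : ∀ v v' : E, ⟪v, ν⟫ = 0 → ⟪v', ν⟫ = 0 →
    ‖α v - α v'‖ ^ 2 + ‖βt v - βt v'‖ ^ 2 ≤ K * ‖v - v'‖ ^ 2
  hαS : ∀ v, ⟪α v, ν⟫ = 0
  hβS : ∀ v u, ⟪βt v u, ν⟫ = 0
  hw : IsWiener P w
  hwt : IsWienerIn P ν wt
  hind : IndepProc P w wt
  skew : IsSkewLT P q (fun t ω => ⟪w t ω, ν⟫) ⟪x, ν⟫ (fun t ω => ⟪X t ω, ν⟫) η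
  sol : SolvesFrom P (MFilt w wt η) ν q α βt w η (fun u ω => wt (η u ω) ω) 0 (fun _ => x) X

namespace Ctx

variable {E : Type} [NormedAddCommGroup E] [InnerProductSpace ℝ E]
    [MeasurableSpace E] [BorelSpace E] [FiniteDimensional ℝ E]
    {P : Measure Ω} [IsProbabilityMeasure P] {ν : E} {q : ℝ}
    {α : E → E} {βt : E → E →L[ℝ] E} {K : ℝ} {w wt : ℝ → Ω → E} {x : E}
    {X : ℝ → Ω → E} {η : ℝ → Ω → ℝ}

theorem natFilt_inner_le (θ : E) (t : ℝ) :
    natFilt (fun t ω => ⟪w t ω, θ⟫) t ≤ natFilt w t :=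
  iSup₂_le fun _ hr => Measurable.comap_le
    ((continuous_id.inner continuous_const).measurable.comp (measurable_natFilt hr.1 hr.2))

theorem mη (C : Ctx P ν q α βt K w wt x X η) {t : ℝ} (ht : 0 ≤ t) : Measurable[natFilt w t] (η t) :=
  (C.skew.adapted_eta t ht).mono (natFilt_inner_le ν t) le_rfl

theorem mX1 (C : Ctx P ν q α βt K w wt x X η) {t : ℝ} (ht : 0 ≤ t) :
    Measurable[natFilt w t] (fun ω => ⟪X t ω, ν⟫) :=
  (C.skew.adapted_x t ht).mono (natFilt_inner_le ν t) le_rfl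

theorem cX1 (C : Ctx P ν q α βt K w wt x X η) :
    ∀ᵐ ω ∂P, Continuous fun r => ⟪X (max r 0) ω, ν⟫ := by
  filter_upwards [C.sol.cont] with ω h
  refine Continuous.inner ?_ continuous_const
  exact h.comp_continuous (by fun_prop) fun r => Set.mem_Ici.2 (le_max_right _ _)

theorem lt (C : Ctx P ν q α βt K w wt x X η) {t : ℝ} (ht : 0 ≤ t) : ∀ᵐ ω ∂P,
    Tendsto (fun ε : ℝ => (1 / (2 * ε)) *
      ∫ τ in (0:ℝ)..t, (if |⟪X (max τ 0) ω, ν⟫| ≤ ε then (1:ℝ) else 0))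
      (nhdsWithin 0 (Set.Ioi 0)) (nhds (η t ω)) := by
  filter_upwards [C.skew.localTime t ht] with ω h
  refine h.congr fun ε => ?_
  congr 1
  refine intervalIntegral.integral_congr fun τ hτ => ?_
  rw [Set.uIcc_of_le ht] at hτ
  simp only [max_eq_left hτ.1]

/-- The normal coordinate of the solution and its local time satisfy `Setup` with respect to the
twisted past. -/
theorem setup (C : Ctx P ν q α βt K w wt x X η) {θ : E} (hθ : ⟪θ, ν⟫ = 0) {u v : ℝ}
    (hu : 0 ≤ u) (huv : u ≤ v) :
    Setup P q u v (twist w wt θ u v) kerm (fun r ω => ⟪w r ω, ν⟫) (fun r ω => ⟪X r ω, ν⟫) η := by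
  have hn : ∀ r, natFilt w r ≤ twist w wt θ u v r := fun r => le_sup_left.trans le_sup_left
  have hmB : ∀ r r', u ≤ r → r ≤ r' → r' ≤ v →
      Measurable[natFilt w r'] (fun ω => ⟪w r' ω, ν⟫ - ⟪w r ω, ν⟫) := fun r r' h1 h2 h3 => by
    simp only [← inner_sub_left]
    exact measurable_inner_sub (measurable_natFilt ((hu.trans h1).trans h2) le_rfl)
      (measurable_natFilt (hu.trans h1) h2) ν
  have htw := twist_le C.hw.meas C.hwt.meas θ u v
  have hcs : ∀ r r', u ≤ r → r ≤ r' → r' ≤ v → ∀ θ : ℝ,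
      ∫ ω, Real.cos (θ * (⟪w r' ω, ν⟫ - ⟪w r ω, ν⟫)) ∂P = Real.exp (-(θ ^ 2 / 2 * (r' - r))) ∧
      ∫ ω, Real.sin (θ * (⟪w r' ω, ν⟫ - ⟪w r ω, ν⟫)) ∂P = 0 := fun r r' h1 h2 h3 θ => by
    refine cos_sin_of_exp (((hmB r r' h1 h2 h3).mono (natFilt_le C.hw.meas r') le_rfl).const_mul
      θ) ?_
    have := C.hw.exp_incr (θ • ν) (hu.trans h1) h2
    rw [norm_smul, C.hν, mul_one, Real.norm_eq_abs, sq_abs] at this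
    rw [← this]
    refine integral_congr_ae (Eventually.of_forall fun ω => ?_)
    simp only [inner_smul_right, inner_sub_left]
  have hin : ∀ r r', u ≤ r → r ≤ r' → r' ≤ v → ∀ Z, BM (twist w wt θ u v r) Z → ∀ g : ℝ → ℝ,
      Measurable g → ∫ ω, Z ω * g (⟪w r' ω, ν⟫ - ⟪w r ω, ν⟫) ∂P
        = (∫ ω, Z ω ∂P) * ∫ ω, g (⟪w r' ω, ν⟫ - ⟪w r ω, ν⟫) ∂P := by
    intro r r' h1 h2 h3 Z hZ g hg
    have hi := (C.hw.indep_twist C.hwt.meas C.hind hθ hu h1 h2 h3).symm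
    refine Indep.integral_mul (htw r) ?_ hi hZ.1 ?_
    · exact Measurable.comap_le (measurable_inner_sub (C.hw.meas r') (C.hw.meas r) ν)
    · simp only [← inner_sub_left]
      exact hg.comp (comap_measurable (fun ω => ⟪w r' ω - w r ω, ν⟫))
  refine ⟨huv, fun r r' _ h _ => twist_mono h, fun r _ _ => htw r,
    fun r r' h1 h2 h3 => (hmB r r' h1 h2 h3).mono (hn r') le_rfl,
    fun r h1 _ => (C.mX1 (hu.trans h1)).mono (hn r) le_rfl,
    fun r h1 _ => (C.mη (hu.trans h1)).mono (hn r) le_rfl, ?_, ?_, ?_, ?_, ?_, ?_, ?_,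
    ker_cont, ker_even, ?_⟩
  · intro r r' h1 h2 h3 Z hZ a
    rw [hin r r' h1 h2 h3 Z hZ (fun y => Real.cos (a * y)) (by fun_prop),
      (hcs r r' h1 h2 h3 a).1, mul_comm]
  · intro r r' h1 h2 h3 Z hZ a
    rw [hin r r' h1 h2 h3 Z hZ (fun y => Real.sin (a * y)) (by fun_prop),
      (hcs r r' h1 h2 h3 a).2, mul_zero]
  · filter_upwards [C.sol.cont] with ω h
    exact ContinuousOn.inner (h.mono fun r hr => hu.trans hr.1) continuousOn_const
  · filter_upwards [C.skew.cont] with ω h using h.continuousOn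
  · filter_upwards [C.skew.mono] with ω h using h.monotoneOn _
  · intro r r' h1 h2 h3
    filter_upwards [C.skew.eqn r (hu.trans h1), C.skew.eqn r' ((hu.trans h1).trans h2)]
      with ω e1 e2
    rw [e1, e2]
    ring
  · have hall : ∀ᵐ ω ∂P, ∀ p : ℚ, 0 ≤ (p:ℝ) → Tendsto (fun ε : ℝ => (1 / (2 * ε)) *
      ∫ τ in (0:ℝ)..p, (if |⟪X (max τ 0) ω, ν⟫| ≤ ε then (1:ℝ) else 0))
      (nhdsWithin 0 (Set.Ioi 0)) (nhds (η p ω)) := by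
      rw [ae_all_iff]
      intro p
      by_cases hp : 0 ≤ (p:ℝ)
      · filter_upwards [C.lt hp] with ω h _ using h
      · exact Eventually.of_forall fun ω h => absurd h hp
    filter_upwards [C.cX1, C.skew.cont, C.skew.mono, hall] with ω a1 a2 a3 a4 r r' h1 h2 h3 hne
    obtain ⟨τ, hτ, hz⟩ := localTime_zero a1 a2 a3 a4 (hu.trans h1) h2 hne
    refine ⟨τ, hτ, ?_⟩
    rwa [max_eq_left ((hu.trans h1).trans hτ.1)] at hz
  · intro r r' h1 h2 h3
    have hr := hu.trans h1
    filter_upwards [C.cX1, C.lt hr, C.lt (hr.trans h2)] with ω a1 a2 a3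
    have b := (ker_tendsto a1 (hr.trans h2) a3).sub (ker_tendsto a1 hr a2)
    refine b.congr fun m => ?_
    have hii : ∀ a b, IntervalIntegrable (fun τ => kerm m ⟪X (max τ 0) ω, ν⟫) volume a b :=
      fun a b => ((ker_cont m).comp a1).intervalIntegrable a b
    rw [intervalIntegral.integral_interval_sub_left (hii _ _) (hii _ _)]
    refine intervalIntegral.integral_congr fun τ hτ => ?_
    rw [Set.uIcc_of_le h2] at hτ
    simp only [max_eq_left (hr.trans hτ.1)]

end Ctx

/-! ### The enlarged filtration and the time-changed process -/

section Filtrations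

variable {E : Type} [NormedAddCommGroup E] [InnerProductSpace ℝ E]
    [MeasurableSpace E] [BorelSpace E] {w wt : ℝ → Ω → E} {η : ℝ → Ω → ℝ}

/-- The part of the enlarged filtration that comes from `w̃`, made monotone in time. -/
def TF (wt : ℝ → Ω → E) (η : ℝ → Ω → ℝ) (u : ℝ) : MeasurableSpace Ω :=
  ⨆ r ∈ Set.Icc (0:ℝ) u, tildeFilt wt η r

/-- A monotone version of the filtration `M_u`. -/
def MF (w wt : ℝ → Ω → E) (η : ℝ → Ω → ℝ) (u : ℝ) : MeasurableSpace Ω :=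
  natFilt w u ⊔ TF wt η u

/-- The filtration `M_u` enlarged by the whole path of `w`. -/
def GF (w wt : ℝ → Ω → E) (η : ℝ → Ω → ℝ) (u : ℝ) : MeasurableSpace Ω :=
  sigAll w ⊔ TF wt η u

theorem TF_mono {u v : ℝ} (h : u ≤ v) : TF wt η u ≤ TF wt η v :=
  iSup₂_le fun r hr => le_iSup₂_of_le r ⟨hr.1, hr.2.trans h⟩ le_rfl

theorem MF_mono {u v : ℝ} (h : u ≤ v) : MF w wt η u ≤ MF w wt η v :=
  sup_le_sup (natFilt_mono h) (TF_mono h)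

theorem GF_mono {u v : ℝ} (h : u ≤ v) : GF w wt η u ≤ GF w wt η v :=
  sup_le_sup le_rfl (TF_mono h)

theorem MF_le_GF (u : ℝ) : MF w wt η u ≤ GF w wt η u :=
  sup_le_sup (natFilt_le_sigAll u) le_rfl

theorem MFilt_le_MF {u : ℝ} (hu : 0 ≤ u) : MFilt w wt η u ≤ MF w wt η u :=
  sup_le_sup le_rfl (le_iSup₂_of_le u ⟨hu, le_rfl⟩ le_rfl)

theorem tildeFilt_le (hwt : ∀ t, Measurable (wt t)) {r : ℝ} (hη : Measurable (η r)) :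
    tildeFilt wt η r ≤ ‹MeasurableSpace Ω› := by
  refine MeasurableSpace.generateFrom_le ?_
  rintro A ⟨s, -, Γ, hΓ, rfl⟩
  exact (hwt s hΓ).inter (measurableSet_le measurable_const hη)

theorem TF_le (hwt : ∀ t, Measurable (wt t)) (hη : ∀ r, 0 ≤ r → Measurable (η r)) (u : ℝ) :
    TF wt η u ≤ ‹MeasurableSpace Ω› :=
  iSup₂_le fun r hr => tildeFilt_le hwt (hη r hr.1)

theorem measurable_nat_comp {m : MeasurableSpace Ω} {F : Type*} [MeasurableSpace F]
    {f : ℕ → Ω → F} (hf : ∀ i, Measurable[m] (f i)) {n : Ω → ℕ} (hn : Measurable[m] n) :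
    Measurable[m] (fun ω => f (n ω) ω) := by
  have h : Measurable (fun p : ℕ × Ω => f p.1 p.2) := measurable_from_prod_countable_right hf
  exact h.comp (hn.prodMk measurable_id)

/-- The process `w̃(⌊2^m η_r⌋ / 2^m)`, set to `0` where `η_r < 0`. -/
def zetm (wt : ℝ → Ω → E) (η : ℝ → Ω → ℝ) (r : ℝ) (m : ℕ) (ω : Ω) : E :=
  if 0 ≤ η r ω then wt ((⌊η r ω * 2 ^ m⌋₊ : ℝ) / 2 ^ m) ω else 0

theorem zetm_measurable {r : ℝ} (hr : 0 ≤ r) (hη : Measurable[natFilt w r] (η r)) (m : ℕ) :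
    Measurable[MF w wt η r] (zetm wt η r m) := by
  have hη' : Measurable[MF w wt η r] (η r) := hη.mono le_sup_left le_rfl
  have hfl : Measurable[MF w wt η r] (fun ω => ⌊η r ω * 2 ^ m⌋₊) :=
    Nat.measurable_floor.comp (hη'.mul_const _)
  have h0 : MeasurableSet[MF w wt η r] {ω | 0 ≤ η r ω} := measurableSet_le measurable_const hη'
  intro Γ hΓ
  have hset : zetm wt η r m ⁻¹' Γ
      = (⋃ i : ℕ, ({ω | 0 ≤ η r ω} ∩ {ω | ⌊η r ω * 2 ^ m⌋₊ = i}) ∩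
          {ω | wt ((i:ℝ) / 2 ^ m) ω ∈ Γ ∧ (i:ℝ) / 2 ^ m ≤ η r ω}) ∪
        ({ω | 0 ≤ η r ω}ᶜ ∩ {_ω | (0:E) ∈ Γ}) := by
    ext ω
    simp only [Set.mem_preimage, zetm, Set.mem_union, Set.mem_iUnion, Set.mem_inter_iff,
      Set.mem_ofPred_eq, Set.mem_compl_iff]
    by_cases h : 0 ≤ η r ω
    · have hle : (⌊η r ω * 2 ^ m⌋₊ : ℝ) / 2 ^ m ≤ η r ω := by
        rw [div_le_iff₀ (by positivity)]
        exact Nat.floor_le (by positivity)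
      simp only [h, if_true, true_and, not_true_eq_false, false_and, or_false]
      constructor
      · exact fun hw => ⟨_, rfl, hw, hle⟩
      · rintro ⟨i, rfl, hw, -⟩
        exact hw
    · simp [h]
  rw [hset]
  have hT : tildeFilt wt η r ≤ MF w wt η r :=
    le_sup_of_le_right (le_iSup₂_of_le r ⟨hr, le_rfl⟩ le_rfl)
  refine MeasurableSet.union (MeasurableSet.iUnion fun i => MeasurableSet.inter
    (h0.inter (hfl (measurableSet_singleton i))) (hT _ ?_)) (h0.compl.inter (MeasurableSet.const _))
  exact MeasurableSpace.measurableSet_generateFrom ⟨(i:ℝ) / 2 ^ m, by positivity, Γ, hΓ, rfl⟩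

theorem two_pow_tendsto : Tendsto (fun m : ℕ => (2:ℝ) ^ m) atTop atTop :=
  tendsto_pow_atTop_atTop_of_one_lt one_lt_two

variable [FiniteDimensional ℝ E]

/-- A version of `ζ_r = w̃(η_r)` that is measurable with respect to `M_r`. -/
def zet (wt : ℝ → Ω → E) (η : ℝ → Ω → ℝ) (r : ℝ) (ω : Ω) : E :=
  limUnder atTop fun m => zetm wt η r m ω

theorem measurable_limUnder {A : Type*} {m : MeasurableSpace A} {f : ℕ → A → E}
    (hf : ∀ i, Measurable (f i)) : Measurable (fun a => limUnder atTop fun i => f i a) :=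
  (StronglyMeasurable.limUnder fun i => (hf i).stronglyMeasurable).measurable

theorem zet_measurable {r : ℝ} (hr : 0 ≤ r) (hη : Measurable[natFilt w r] (η r)) :
    Measurable[MF w wt η r] (zet wt η r) :=
  measurable_limUnder (m := MF w wt η r) fun m => zetm_measurable hr hη m

theorem zet_eq {r : ℝ} {ω : Ω} (h0 : 0 ≤ η r ω) (hc : Continuous fun t => wt t ω) :
    zet wt η r ω = wt (η r ω) ω := by
  refine Tendsto.limUnder_eq ?_
  simp only [zetm, if_pos h0]
  exact (hc.tendsto _).comp ((tendsto_nat_floor_mul_div_atTop h0).comp two_pow_tendsto)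

/-- On the event `{η_u ≤ c}` a `G_u`-measurable variable only depends on `w` and on `w̃` up to
time `c`. -/
theorem GF_localize {u c : ℝ} {Z : Ω → ℝ} (hZ : BM (GF w wt η u) Z)
    (hη : ∀ r, 0 ≤ r → Measurable[natFilt w r] (η r)) :
    ∃ Z', BM (natFilt wt c ⊔ sigAll w) Z' ∧
      ∀ ω, (Monotone fun t => η t ω) → η u ω ≤ c → Z ω = Z' ω := by
  set S : Set Ω := {ω | (Monotone fun t => η t ω) ∧ η u ω ≤ c} with hS
  set m := natFilt wt c ⊔ sigAll w with hm
  have hle : (GF w wt η u).comap (Subtype.val : S → Ω) ≤ m.comap Subtype.val := by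
    rw [GF, MeasurableSpace.comap_sup, TF, MeasurableSpace.comap_iSup]
    refine sup_le (MeasurableSpace.comap_mono le_sup_right) (iSup_le fun r => ?_)
    rw [MeasurableSpace.comap_iSup]
    refine iSup_le fun hr => ?_
    rw [tildeFilt, MeasurableSpace.comap_generateFrom]
    refine MeasurableSpace.generateFrom_le ?_
    rintro _ ⟨A, ⟨s, hs, Γ, hΓ, rfl⟩, rfl⟩
    by_cases hsc : s ≤ c
    · refine ⟨_, ?_, rfl⟩
      have h1 : MeasurableSet[m] (wt s ⁻¹' Γ) :=
        (le_sup_left : natFilt wt c ≤ m) _ (measurable_natFilt hs hsc hΓ)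
      have h2 : MeasurableSet[m] {ω | s ≤ η r ω} :=
        (le_sup_right : sigAll w ≤ m) _
          (measurableSet_le measurable_const ((hη r hr.1).mono (natFilt_le_sigAll r) le_rfl))
      exact MeasurableSet.inter h1 h2
    · have : (Subtype.val : S → Ω) ⁻¹' {ω | wt s ω ∈ Γ ∧ s ≤ η r ω} = ∅ := by
        ext ⟨ω, h1, h2⟩
        simp only [Set.mem_preimage, Set.mem_ofPred_eq, Set.mem_empty_iff_false, iff_false, not_and]
        intro _ h3
        exact hsc ((h3.trans (h1 hr.2)).trans h2)
      rw [this]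
      exact MeasurableSet.empty
  have h1 : Measurable[m.comap (Subtype.val : S → Ω)] (fun a : S => Z a) :=
    Measurable.mono (hZ.1.comp (comap_measurable (m := GF w wt η u) (Subtype.val : S → Ω)))
      hle le_rfl
  obtain ⟨Z', hZ', he⟩ := h1.exists_eq_measurable_comp
  obtain ⟨C, hC⟩ := hZ.2
  refine ⟨fun ω => max (-C) (min C (Z' ω)), ⟨measurable_const.max (measurable_const.min hZ'),
    |C|, fun ω => ?_⟩, fun ω h2 h3 => ?_⟩
  · have hC0 : 0 ≤ C := (abs_nonneg _).trans (hC ω)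
    dsimp only
    rw [abs_le]
    constructor
    · exact le_max_of_le_left (neg_le_neg (le_abs_self _))
    · exact max_le (by linarith [abs_nonneg C]) ((min_le_left _ _).trans (le_abs_self _))
  · have e : Z ω = Z' ω := congrFun he ⟨ω, h2, h3⟩
    have := abs_le.1 (hC ω)
    dsimp only
    rw [← e, min_eq_right this.2, max_eq_right this.1]

/-- Two integrals agree when they agree on every cell of a countable measurable partition. -/
theorem integral_eq_of_partition {P : Measure Ω} {ι : Type*} [Countable ι] [MeasurableSpace ι]
    [MeasurableSingletonClass ι] {h : Ω → ι} (hh : Measurable h) {f g : Ω → ℝ}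
    (hf : Integrable f P) (hg : Integrable g P)
    (hfg : ∀ i, ∫ ω in h ⁻¹' {i}, f ω ∂P = ∫ ω in h ⁻¹' {i}, g ω ∂P) :
    ∫ ω, f ω ∂P = ∫ ω, g ω ∂P := by
  have hU : (⋃ i, h ⁻¹' {i}) = Set.univ := by
    ext ω; simp
  have hd : Pairwise (Function.onFun Disjoint fun i => h ⁻¹' {i}) := fun i j hij =>
    Disjoint.preimage _ (Set.disjoint_singleton.2 hij)
  rw [← setIntegral_univ, ← hU, integral_iUnion (fun i => hh (measurableSet_singleton i)) hd
    hf.integrableOn, ← setIntegral_univ (f := g), ← hU, integral_iUnion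
    (fun i => hh (measurableSet_singleton i)) hd hg.integrableOn]
  exact tsum_congr hfg

end Filtrations

/-! ### Conditional law of the increments of the time-changed process -/

namespace Ctx

variable {E : Type} [NormedAddCommGroup E] [InnerProductSpace ℝ E]
    [MeasurableSpace E] [BorelSpace E] [FiniteDimensional ℝ E]
    {P : Measure Ω} [IsProbabilityMeasure P] {ν : E} {q : ℝ}
    {α : E → E} {βt : E → E →L[ℝ] E} {K : ℝ} {w wt : ℝ → Ω → E} {x : E}
    {X : ℝ → Ω → E} {η : ℝ → Ω → ℝ}

theorem mη0 (C : Ctx P ν q α βt K w wt x X η) {t : ℝ} (ht : 0 ≤ t) : Measurable (η t) :=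
  (C.mη ht).mono (natFilt_le C.hw.meas t) le_rfl

theorem mηs (C : Ctx P ν q α βt K w wt x X η) {t : ℝ} (ht : 0 ≤ t) :
    Measurable[sigAll w] (η t) :=
  (C.mη ht).mono (natFilt_le_sigAll t) le_rfl

theorem GF_le (C : Ctx P ν q α βt K w wt x X η) (u : ℝ) :
    GF w wt η u ≤ ‹MeasurableSpace Ω› :=
  sup_le (sigAll_le C.hw.meas) (TF_le C.hwt.meas (fun _ h => C.mη0 h) u)

theorem MF_le (C : Ctx P ν q α βt K w wt x X η) (u : ℝ) :
    MF w wt η u ≤ ‹MeasurableSpace Ω› :=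
  (MF_le_GF u).trans (C.GF_le u)

theorem mzet (C : Ctx P ν q α βt K w wt x X η) {t : ℝ} (ht : 0 ≤ t) :
    Measurable[GF w wt η t] (zet wt η t) :=
  (zet_measurable ht (C.mη ht)).mono (MF_le_GF t) le_rfl

theorem mzet0 (C : Ctx P ν q α βt K w wt x X η) {t : ℝ} (ht : 0 ≤ t) :
    Measurable (zet wt η t) :=
  (C.mzet ht).mono (C.GF_le t) le_rfl

/-- Almost surely, the local time is nonnegative and monotone and `w̃` is continuous. -/
theorem good (C : Ctx P ν q α βt K w wt x X η) : ∀ᵐ ω ∂P,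
    (∀ t, 0 ≤ t → 0 ≤ η t ω) ∧ (Monotone fun t => η t ω) ∧ (Continuous fun t => wt t ω) ∧
      ∀ t, 0 ≤ t → zet wt η t ω = wt (η t ω) ω := by
  filter_upwards [C.skew.mono, C.skew.zero, C.hwt.cont] with ω h1 h2 h3
  have h : ∀ t, 0 ≤ t → 0 ≤ η t ω := fun t ht => h2 ▸ h1 ht
  exact ⟨h, h1, h3, fun t ht => zet_eq (h t ht) h3⟩

/-- Freezing on an event of the path of `w`: with deterministic times `c ≤ d` in place of
`η_u ≤ η_v`, the increment of `w̃` over `[c, d]` is independent of `Z`, which by `GF_localize` depends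
on `w̃` only up to time `c`. -/
theorem freeze_cell (C : Ctx P ν q α βt K w wt x X η) {u : ℝ} {θ : E} {φ κ : ℝ → ℝ}
    (hφ : BM inferInstance φ)
    (hφκ : ∀ s t, 0 ≤ s → s ≤ t → ∫ ω, φ ⟪wt t ω - wt s ω, θ⟫ ∂P = κ (t - s))
    {Z : Ω → ℝ} (hZ : BM (GF w wt η u) Z) {B : Set Ω} (hB : MeasurableSet[sigAll w] B)
    {c d : ℝ} (hc : 0 ≤ c) (hcd : c ≤ d) (hBc : ∀ ω ∈ B, η u ω ≤ c) :
    ∫ ω in B, Z ω * φ ⟪wt d ω - wt c ω, θ⟫ ∂P = ∫ ω in B, Z ω * κ (d - c) ∂P := by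
  obtain ⟨Z', hZ', he⟩ := GF_localize (c := c) hZ fun r hr => C.mη hr
  have hB0 : MeasurableSet B := sigAll_le C.hw.meas _ hB
  have hW : BM (natFilt wt c ⊔ sigAll w) (fun ω => Z' ω * B.indicator (fun _ => (1:ℝ)) ω) :=
    hZ'.mul (BM.indicator ((le_sup_right : sigAll w ≤ natFilt wt c ⊔ sigAll w) _ hB))
  have key : ∀ f : Ω → ℝ, ∫ ω in B, Z ω * f ω ∂P
      = ∫ ω, (Z' ω * B.indicator (fun _ => (1:ℝ)) ω) * f ω ∂P := by
    intro f
    rw [← integral_indicator hB0]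
    refine integral_congr_ae ?_
    filter_upwards [C.skew.mono] with ω hm
    by_cases hω : ω ∈ B
    · simp [hω, he ω hm (hBc ω hω)]
    · simp [hω]
  rw [key, key, integral_mul_const]
  have hi := C.hwt.indep_incr_sup C.hw.meas C.hind hc hcd
  have hm1 : Measurable[MeasurableSpace.comap (fun ω => wt d ω - wt c ω) inferInstance]
      (fun ω => φ ⟪wt d ω - wt c ω, θ⟫) :=
    (hφ.1.comp (continuous_id.inner continuous_const).measurable).comp (comap_measurable _)
  have := Indep.integral_mul (sup_le (natFilt_le C.hwt.meas c) (sigAll_le C.hw.meas))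
    ((C.hwt.meas d).sub (C.hwt.meas c)).comap_le hi.symm hW.1 hm1
  rw [this, hφκ c d hc hcd]

/-- Given the whole path of `w` and the past of `ζ`, the increment `ζ_v - ζ_u` behaves like an
increment of `w̃` over a time interval of length `η_v - η_u`. -/
theorem freeze (C : Ctx P ν q α βt K w wt x X η) {u v : ℝ} (hu : 0 ≤ u) (huv : u ≤ v) {θ : E}
    {φ κ : ℝ → ℝ} (hφc : Continuous φ) (hφ1 : ∀ a, |φ a| ≤ 1)
    (hκc : Continuous κ) (hκ1 : ∀ a, |κ a| ≤ 1)
    (hφκ : ∀ s t, 0 ≤ s → s ≤ t → ∫ ω, φ ⟪wt t ω - wt s ω, θ⟫ ∂P = κ (t - s))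
    {Z : Ω → ℝ} (hZ : BM (GF w wt η u) Z) :
    ∫ ω, Z ω * φ ⟪zet wt η v ω - zet wt η u ω, θ⟫ ∂P = ∫ ω, Z ω * κ (η v ω - η u ω) ∂P := by
  have hv := hu.trans huv
  obtain ⟨c, hc⟩ := hZ.2
  have hZ0 : Measurable Z := hZ.1.mono (C.GF_le u) le_rfl
  -- dyadic approximation of the random times from above
  let N : ℝ → ℕ → Ω → ℕ := fun r m ω => ⌈η r ω * 2 ^ m⌉₊
  have hNs : ∀ r, 0 ≤ r → ∀ m, Measurable[sigAll w] (N r m) := fun r hr m =>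
    Nat.measurable_ceil.comp ((C.mηs hr).mul_const _)
  have hN0 : ∀ r, 0 ≤ r → ∀ m, Measurable (N r m) := fun r hr m =>
    (hNs r hr m).mono (sigAll_le C.hw.meas) le_rfl
  have hlim : ∀ r ω, 0 ≤ η r ω → Tendsto (fun m => (N r m ω : ℝ) / 2 ^ m) atTop (nhds (η r ω)) :=
    fun r ω h => (tendsto_nat_ceil_mul_div_atTop h).comp two_pow_tendsto
  have hmW : ∀ r, 0 ≤ r → ∀ m, Measurable (fun ω => wt ((N r m ω : ℝ) / 2 ^ m) ω) := fun r hr m =>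
    measurable_nat_comp (f := fun i ω => wt ((i:ℝ) / 2 ^ m) ω) (fun i => C.hwt.meas _) (hN0 r hr m)
  have hmN : ∀ r, 0 ≤ r → ∀ m, Measurable (fun ω => (N r m ω : ℝ) / 2 ^ m) := fun r hr m =>
    (measurable_from_nat.comp (hN0 r hr m)).div_const _
  have hmf : ∀ m, Measurable (fun ω => Z ω *
      φ ⟪wt ((N v m ω : ℝ) / 2 ^ m) ω - wt ((N u m ω : ℝ) / 2 ^ m) ω, θ⟫) := fun m =>
    hZ0.mul (hφc.measurable.comp (((hmW v hv m).sub (hmW u hu m)).inner measurable_const))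
  have hmg : ∀ m, Measurable (fun ω => Z ω *
      κ ((N v m ω : ℝ) / 2 ^ m - (N u m ω : ℝ) / 2 ^ m)) := fun m =>
    hZ0.mul (hκc.measurable.comp ((hmN v hv m).sub (hmN u hu m)))
  have hbd : ∀ (f : ℝ → ℝ) (a : ℝ) ω, (∀ a, |f a| ≤ 1) → ‖Z ω * f a‖ ≤ c := fun f a ω h => by
    rw [norm_mul, Real.norm_eq_abs, Real.norm_eq_abs]
    exact (mul_le_of_le_one_right (abs_nonneg _) (h a)).trans (hc ω)
  have hstep : ∀ m, ∫ ω, Z ω *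
      φ ⟪wt ((N v m ω : ℝ) / 2 ^ m) ω - wt ((N u m ω : ℝ) / 2 ^ m) ω, θ⟫ ∂P
      = ∫ ω, Z ω * κ ((N v m ω : ℝ) / 2 ^ m - (N u m ω : ℝ) / 2 ^ m) ∂P := by
    intro m
    refine integral_eq_of_partition (h := fun ω => (N u m ω, N v m ω))
      ((hN0 u hu m).prodMk (hN0 v hv m))
      (Integrable.of_bound (hmf m).aestronglyMeasurable c
        (Eventually.of_forall fun ω => hbd φ _ ω hφ1))
      (Integrable.of_bound (hmg m).aestronglyMeasurable c
        (Eventually.of_forall fun ω => hbd κ _ ω hκ1)) ?_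
    rintro ⟨i, j⟩
    have hBs : MeasurableSet[sigAll w] ((fun ω => (N u m ω, N v m ω)) ⁻¹' {(i, j)}) := by
      have : (fun ω => (N u m ω, N v m ω)) ⁻¹' {(i, j)} = (N u m) ⁻¹' {i} ∩ (N v m) ⁻¹' {j} := by
        ext ω; simp
      rw [this]
      exact MeasurableSet.inter (hNs u hu m (measurableSet_singleton i))
        (hNs v hv m (measurableSet_singleton j))
    have hB0 := sigAll_le C.hw.meas _ hBs
    by_cases hij : i ≤ j
    · have h2 : (0:ℝ) < 2 ^ m := by positivity
      have := C.freeze_cell ⟨hφc.measurable, 1, hφ1⟩ hφκ hZ hBs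
        (c := (i:ℝ) / 2 ^ m) (d := (j:ℝ) / 2 ^ m) (by positivity)
        (div_le_div_of_nonneg_right (by exact_mod_cast hij) h2.le)
        (fun ω hω => by
          have h1 : N u m ω = i := by simpa using (Prod.ext_iff.1 hω).1
          rw [le_div_iff₀ h2, ← h1]
          exact Nat.le_ceil _)
      refine Eq.trans (setIntegral_congr_fun hB0 fun ω hω => ?_) (this.trans
        (setIntegral_congr_fun hB0 fun ω hω => ?_))
      all_goals
        obtain ⟨h1, h2⟩ := Prod.ext_iff.1 hω
        dsimp only at h1 h2 ⊢
        rw [h1, h2]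
    · have h0 : P ((fun ω => (N u m ω, N v m ω)) ⁻¹' {(i, j)}) = 0 := by
        rw [measure_eq_zero_iff_ae_notMem]
        filter_upwards [C.skew.mono] with ω hm hω
        obtain ⟨h1, h2⟩ := Prod.ext_iff.1 hω
        dsimp only at h1 h2
        refine hij ?_
        rw [← h1, ← h2]
        exact Nat.ceil_mono (mul_le_mul_of_nonneg_right (hm huv) (by positivity))
      rw [setIntegral_measure_zero _ h0, setIntegral_measure_zero _ h0]
  have l1 : Tendsto (fun m => ∫ ω, Z ω *
      φ ⟪wt ((N v m ω : ℝ) / 2 ^ m) ω - wt ((N u m ω : ℝ) / 2 ^ m) ω, θ⟫ ∂P) atTop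
      (nhds (∫ ω, Z ω * φ ⟪zet wt η v ω - zet wt η u ω, θ⟫ ∂P)) := by
    refine tendsto_integral_of_dominated_convergence (fun _ => c)
      (fun m => (hmf m).aestronglyMeasurable) (integrable_const c)
      (fun m => Eventually.of_forall fun ω => hbd φ _ ω hφ1) ?_
    filter_upwards [C.good] with ω ⟨h1, _, h3, h4⟩
    rw [h4 u hu, h4 v hv]
    refine Tendsto.const_mul _ ((hφc.tendsto _).comp (Tendsto.inner (Tendsto.sub ?_ ?_)
      tendsto_const_nhds))
    · exact (h3.tendsto _).comp (hlim v ω (h1 v hv))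
    · exact (h3.tendsto _).comp (hlim u ω (h1 u hu))
  have l2 : Tendsto (fun m => ∫ ω, Z ω *
      κ ((N v m ω : ℝ) / 2 ^ m - (N u m ω : ℝ) / 2 ^ m) ∂P) atTop
      (nhds (∫ ω, Z ω * κ (η v ω - η u ω) ∂P)) := by
    refine tendsto_integral_of_dominated_convergence (fun _ => c)
      (fun m => (hmg m).aestronglyMeasurable) (integrable_const c)
      (fun m => Eventually.of_forall fun ω => hbd κ _ ω hκ1) ?_
    filter_upwards [C.good] with ω ⟨h1, _, h3, h4⟩
    exact Tendsto.const_mul _ ((hκc.tendsto _).comp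
      ((hlim v ω (h1 v hv)).sub (hlim u ω (h1 u hu))))
  exact tendsto_nhds_unique l1 (l2.congr fun m => (hstep m).symm)

/-- Conditional characteristic function of `ζ_v - ζ_u`, real part. -/
theorem freeze_cos (C : Ctx P ν q α βt K w wt x X η) {u v : ℝ} (hu : 0 ≤ u) (huv : u ≤ v) (θ : E)
    {Z : Ω → ℝ} (hZ : BM (GF w wt η u) Z) :
    ∫ ω, Z ω * Real.cos ⟪zet wt η v ω - zet wt η u ω, θ⟫ ∂P
      = ∫ ω, Z ω * Real.exp (-(‖projS ν θ‖ ^ 2 / 2 * |η v ω - η u ω|)) ∂P := by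
  refine C.freeze hu huv Real.continuous_cos Real.abs_cos_le_one
    (κ := fun τ => Real.exp (-(‖projS ν θ‖ ^ 2 / 2 * |τ|))) (by fun_prop) (fun a => ?_) ?_ hZ
  · rw [abs_of_pos (Real.exp_pos _), Real.exp_le_one_iff]
    exact neg_nonpos.2 (by positivity)
  · intro s t hs hst
    rw [abs_of_nonneg (sub_nonneg.2 hst)]
    exact (cos_sin_of_exp (measurable_inner_sub (C.hwt.meas t) (C.hwt.meas s) θ)
      (C.hwt.exp_incr C.hν θ hs hst)).1

/-- Conditional characteristic function of `ζ_v - ζ_u`, imaginary part. -/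
theorem freeze_sin (C : Ctx P ν q α βt K w wt x X η) {u v : ℝ} (hu : 0 ≤ u) (huv : u ≤ v) (θ : E)
    {Z : Ω → ℝ} (hZ : BM (GF w wt η u) Z) :
    ∫ ω, Z ω * Real.sin ⟪zet wt η v ω - zet wt η u ω, θ⟫ ∂P = 0 := by
  have := C.freeze hu huv Real.continuous_sin Real.abs_sin_le_one (θ := θ)
    (κ := fun _ => 0) continuous_const (by simp) (fun s t hs hst =>
      (cos_sin_of_exp (measurable_inner_sub (C.hwt.meas t) (C.hwt.meas s) θ)
      (C.hwt.exp_incr C.hν θ hs hst)).2) hZ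
  simpa using this

end Ctx

/-! ### Orthogonality of the noise increments -/

namespace Ctx

variable {E : Type} [NormedAddCommGroup E] [InnerProductSpace ℝ E]
    [MeasurableSpace E] [BorelSpace E] [FiniteDimensional ℝ E]
    {P : Measure Ω} [IsProbabilityMeasure P] {ν : E} {q : ℝ}
    {α : E → E} {βt : E → E →L[ℝ] E} {K : ℝ} {w wt : ℝ → Ω → E} {x : E}
    {X : ℝ → Ω → E} {η : ℝ → Ω → ℝ}

/-- The past `M_u` is contained in the past of `w` enlarged by the whole path of `w̃`. -/
theorem MF_le_nat (C : Ctx P ν q α βt K w wt x X η) (u : ℝ) :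
    MF w wt η u ≤ natFilt w u ⊔ sigAll wt := by
  refine sup_le le_sup_left (iSup₂_le fun r hr => ?_)
  refine MeasurableSpace.generateFrom_le ?_
  rintro A ⟨s, -, Γ, hΓ, rfl⟩
  have h1 : MeasurableSet[natFilt w u ⊔ sigAll wt] (wt s ⁻¹' Γ) :=
    (le_sup_right : sigAll wt ≤ natFilt w u ⊔ sigAll wt) _ (measurable_sigAll s hΓ)
  have h2 : MeasurableSet[natFilt w u ⊔ sigAll wt] {ω | s ≤ η r ω} :=
    (le_sup_left : natFilt w u ≤ natFilt w u ⊔ sigAll wt) _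
      (measurableSet_le measurable_const ((C.mη hr.1).mono (natFilt_mono hr.2) le_rfl))
  exact MeasurableSet.inter h1 h2

/-- Orthogonality to `x¹_u` is not affected by a factor that depends on the increment
`w_v - w_u` only. -/
theorem orth_mul_incr (C : Ctx P ν q α βt K w wt x X η) {u v : ℝ} (hu : 0 ≤ u) (huv : u ≤ v)
    {ξ : Ω → ℝ} (hξ : BM (MF w wt η u) ξ) (h : Orth P ξ (fun ω => ⟪X u ω, ν⟫)) {f : E → ℝ}
    (hf : Measurable f) :
    Orth P (fun ω => ξ ω * f (w v ω - w u ω)) (fun ω => ⟪X u ω, ν⟫) := by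
  intro g hg
  have hm : Measurable[natFilt w u ⊔ sigAll wt] (fun ω => ξ ω * g ⟪X u ω, ν⟫) :=
    Measurable.mul (hξ.1.mono (C.MF_le_nat u) le_rfl)
      (hg.1.comp ((C.mX1 hu).mono le_sup_left le_rfl))
  have := Indep.integral_mul (sup_le (natFilt_le C.hw.meas u) (sigAll_le C.hwt.meas))
    ((C.hw.meas v).sub (C.hw.meas u)).comap_le
    (C.hw.indep_incr_sup C.hwt.meas C.hind hu huv).symm hm (hf.comp (comap_measurable _))
  rw [h g hg, zero_mul] at this
  rw [← this]
  refine integral_congr_ae (Eventually.of_forall fun ω => ?_)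
  simp only [Function.comp, Pi.sub_apply]
  ring

/-- The one-dimensional Markov property, with a factor depending on a transversal component of
`w_v - w_u` carried along in the past. -/
theorem twist_orth (C : Ctx P ν q α βt K w wt x X η) {u v : ℝ} (hu : 0 ≤ u) (huv : u ≤ v)
    {ξ : Ω → ℝ} (hξ : BM (MF w wt η u) ξ) (h : Orth P ξ (fun ω => ⟪X u ω, ν⟫))
    {θ : E} (hθ : ⟪θ, ν⟫ = 0) {f : ℝ → ℝ} (hf : BM inferInstance f) :
    Orth P (fun ω => ξ ω * f ⟪w v ω - w u ω, θ⟫)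
      (fun ω => ((⟪X u ω, ν⟫, η v ω - η u ω), ⟪X v ω, ν⟫)) := by
  refine (C.setup hθ hu huv).markov (BM.mul ?_ ?_) ?_
  · refine hξ.le ((C.MF_le_nat u).trans ?_)
    exact le_sup_left
  · refine BM.le (m := MeasurableSpace.comap (fun ω => ⟪w v ω - w u ω, θ⟫) inferInstance)
      ⟨hf.1.comp (comap_measurable _), ?_⟩ le_sup_right
    obtain ⟨c, hc⟩ := hf.2
    exact ⟨c, fun _ => hc _⟩
  · exact C.orth_mul_incr hu huv hξ h (f := fun y => f ⟪y, θ⟫)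
      (hf.1.comp (continuous_id.inner continuous_const).measurable)

/-- Orthogonality to joint characters of `(η_v - η_u, w_v - w_u)`. The normal component of
`w_v - w_u` is a function of `x¹_u`, `x¹_v` and `η_v - η_u`; the transversal one is carried by
`twist_orth`. The exponential is the conditional characteristic function of `ζ_v - ζ_u`. -/
theorem orth_cos (C : Ctx P ν q α βt K w wt x X η) {u v : ℝ} (hu : 0 ≤ u) (huv : u ≤ v)
    {ξ : Ω → ℝ} (hξ : BM (MF w wt η u) ξ) (h : Orth P ξ (fun ω => ⟪X u ω, ν⟫))
    (a c κ : ℝ) (θ : E) :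
    ∫ ω, (ξ ω * Real.cos (a * (η v ω - η u ω) + ⟪w v ω - w u ω, θ⟫ + c)) *
      Real.exp (-(κ ^ 2 / 2 * |η v ω - η u ω|)) ∂P = 0 := by
  have hv := hu.trans huv
  set b : ℝ := ⟪θ, ν⟫ with hb
  set θ' := projS ν θ with hθ'
  have hθ0 : ⟪θ', ν⟫ = 0 := projS_inner ν C.hν θ
  let G : (ℝ × ℝ) × ℝ → ℝ := fun p => a * p.1.2 + b * (p.2 - p.1.1 - q * p.1.2) + c
  have hG : Continuous G := by fun_prop
  let R : (ℝ × ℝ) × ℝ → ℝ := fun p => Real.exp (-(κ ^ 2 / 2 * |p.1.2|))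
  have hR : Continuous R := by fun_prop
  have hR1 : ∀ p, |R p| ≤ 1 := fun p => by
    rw [abs_of_pos (Real.exp_pos _), Real.exp_le_one_iff]
    exact neg_nonpos.2 (by positivity)
  have hc : BM inferInstance (fun p => Real.cos (G p) * R p) :=
    ⟨(Real.continuous_cos.comp hG |>.mul hR).measurable, 1, fun p => by
      rw [abs_mul]; exact mul_le_one₀ (Real.abs_cos_le_one _) (abs_nonneg _) (hR1 p)⟩
  have hs : BM inferInstance (fun p => Real.sin (G p) * R p) :=
    ⟨(Real.continuous_sin.comp hG |>.mul hR).measurable, 1, fun p => by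
      rw [abs_mul]; exact mul_le_one₀ (Real.abs_sin_le_one _) (abs_nonneg _) (hR1 p)⟩
  have bc : BM inferInstance Real.cos := ⟨Real.continuous_cos.measurable, 1, Real.abs_cos_le_one⟩
  have bs : BM inferInstance Real.sin := ⟨Real.continuous_sin.measurable, 1, Real.abs_sin_le_one⟩
  have e1 := C.twist_orth hu huv hξ h hθ0 bc _ hc
  have e2 := C.twist_orth hu huv hξ h hθ0 bs _ hs
  have hξ0 : BM inferInstance ξ := hξ.le (C.MF_le u)
  have mV : Measurable (fun ω => ((⟪X u ω, ν⟫, η v ω - η u ω), ⟪X v ω, ν⟫)) :=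
    (((C.mX1 hu).mono (natFilt_le C.hw.meas u) le_rfl).prodMk
      ((C.mη0 hv).sub (C.mη0 hu))).prodMk ((C.mX1 hv).mono (natFilt_le C.hw.meas v) le_rfl)
  have mD := measurable_inner_sub (C.hw.meas v) (C.hw.meas u) θ'
  have i1 : Integrable (fun ω => (ξ ω * Real.cos ⟪w v ω - w u ω, θ'⟫) *
      (fun p => Real.cos (G p) * R p) ((⟪X u ω, ν⟫, η v ω - η u ω), ⟪X v ω, ν⟫)) P :=
    ((hξ0.mul (bc.comp mD)).mul (hc.comp mV)).int
  have i2 : Integrable (fun ω => (ξ ω * Real.sin ⟪w v ω - w u ω, θ'⟫) *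
      (fun p => Real.sin (G p) * R p) ((⟪X u ω, ν⟫, η v ω - η u ω), ⟪X v ω, ν⟫)) P :=
    ((hξ0.mul (bs.comp mD)).mul (hs.comp mV)).int
  have := integral_sub i1 i2
  rw [e1, e2, sub_zero] at this
  refine Eq.trans (integral_congr_ae ?_) this
  filter_upwards [C.skew.eqn u hu, C.skew.eqn v hv] with ω h1 h2
  have hin : ⟪w v ω - w u ω, θ⟫ = b * (⟪X v ω, ν⟫ - ⟪X u ω, ν⟫ - q * (η v ω - η u ω))
      + ⟪w v ω - w u ω, θ'⟫ := by
    have : θ = b • ν + θ' := by rw [hθ', projS]; abel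
    conv_lhs => rw [this]
    rw [inner_add_right, inner_smul_right, h1, h2, inner_sub_left]
    ring
  have : a * (η v ω - η u ω) + ⟪w v ω - w u ω, θ⟫ + c
      = G ((⟪X u ω, ν⟫, η v ω - η u ω), ⟪X v ω, ν⟫) + ⟪w v ω - w u ω, θ'⟫ := by
    rw [hin]; simp only [G]; ring
  rw [this, Real.cos_add]
  simp only [R]
  ring

/-- A bounded `M_u`-measurable variable that is orthogonal to `x¹_u` is orthogonal to the joint
increments of `(η, ζ, w)` over `[u, v]`. -/
theorem orth_incr (C : Ctx P ν q α βt K w wt x X η) {u v : ℝ} (hu : 0 ≤ u) (huv : u ≤ v)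
    {ξ : Ω → ℝ} (hξ : BM (MF w wt η u) ξ) (h : Orth P ξ (fun ω => ⟪X u ω, ν⟫)) :
    Orth P ξ (fun ω => (η v ω - η u ω, zet wt η v ω - zet wt η u ω, w v ω - w u ω)) := by
  have hv := hu.trans huv
  have mη : Measurable[sigAll w] (fun ω => η v ω - η u ω) := (C.mηs hv).sub (C.mηs hu)
  have mw : ∀ θ : E, Measurable[sigAll w] (fun ω => ⟪w v ω - w u ω, θ⟫) := fun θ =>
    measurable_inner_sub (measurable_sigAll v) (measurable_sigAll u) θ
  have mz := (C.mzet0 hv).sub (C.mzet0 hu)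
  have hξ0 : BM inferInstance ξ := hξ.le (C.MF_le u)
  refine Orth.of_cos hξ0 (((C.mη0 hv).sub (C.mη0 hu)).prodMk (mz.prodMk
    ((C.hw.meas v).sub (C.hw.meas u)))) fun L c => ?_
  set a : ℝ := L (1, 0, 0) with ha
  let L1 : E →L[ℝ] ℝ := L.comp ((ContinuousLinearMap.inr ℝ ℝ (E × E)).comp
    (ContinuousLinearMap.inl ℝ E E))
  let L2 : E →L[ℝ] ℝ := L.comp ((ContinuousLinearMap.inr ℝ ℝ (E × E)).comp
    (ContinuousLinearMap.inr ℝ E E))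
  set θ1 := (InnerProductSpace.toDual ℝ E).symm L1 with hθ1
  set θ2 := (InnerProductSpace.toDual ℝ E).symm L2 with hθ2
  have hL : ∀ (r : ℝ) (y z : E), L (r, y, z) = (a * r + ⟪z, θ2⟫) + ⟪y, θ1⟫ := fun r y z => by
    have e1 : ⟪y, θ1⟫ = L (0, y, 0) := by
      rw [real_inner_comm, hθ1, InnerProductSpace.toDual_symm_apply]; rfl
    have e2 : ⟪z, θ2⟫ = L (0, 0, z) := by
      rw [real_inner_comm, hθ2, InnerProductSpace.toDual_symm_apply]; rfl
    have e3 : a * r = L (r, 0, 0) := by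
      rw [ha, mul_comm, ← smul_eq_mul, ← map_smul]; simp
    rw [e1, e2, e3, ← map_add, ← map_add]; simp
  let A : Ω → ℝ := fun ω => a * (η v ω - η u ω) + ⟪w v ω - w u ω, θ2⟫ + c
  have mA : Measurable[sigAll w] A := ((mη.const_mul a).add (mw θ2)).add_const c
  have hcA : BM (GF w wt η u) (fun ω => ξ ω * Real.cos (A ω)) :=
    (hξ.le (MF_le_GF u)).mul ⟨(Real.continuous_cos.measurable.comp mA).mono le_sup_left le_rfl, 1,
      fun _ => Real.abs_cos_le_one _⟩
  have hsA : BM (GF w wt η u) (fun ω => ξ ω * Real.sin (A ω)) :=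
    (hξ.le (MF_le_GF u)).mul ⟨(Real.continuous_sin.measurable.comp mA).mono le_sup_left le_rfl, 1,
      fun _ => Real.abs_sin_le_one _⟩
  have e1 := C.freeze_cos hu huv θ1 hcA
  have e2 := C.freeze_sin hu huv θ1 hsA
  rw [C.orth_cos hu huv hξ h a c ‖projS ν θ1‖ θ2] at e1
  have mI : Measurable (fun ω => ⟪zet wt η v ω - zet wt η u ω, θ1⟫) :=
    measurable_inner_sub (C.mzet0 hv) (C.mzet0 hu) θ1
  have i1 : Integrable (fun ω => (ξ ω * Real.cos (A ω)) *
      Real.cos ⟪zet wt η v ω - zet wt η u ω, θ1⟫) P :=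
    ((hcA.le (C.GF_le u)).mul ⟨Real.continuous_cos.measurable.comp mI, 1,
      fun _ => Real.abs_cos_le_one _⟩).int
  have i2 : Integrable (fun ω => (ξ ω * Real.sin (A ω)) *
      Real.sin ⟪zet wt η v ω - zet wt η u ω, θ1⟫) P :=
    ((hsA.le (C.GF_le u)).mul ⟨Real.continuous_sin.measurable.comp mI, 1,
      fun _ => Real.abs_sin_le_one _⟩).int
  have := integral_sub i1 i2
  rw [e1, e2, sub_zero] at this
  refine Eq.trans (integral_congr_ae (Eventually.of_forall fun ω => ?_)) this
  dsimp only
  rw [hL]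
  have : a * (η v ω - η u ω) + ⟪w v ω - w u ω, θ2⟫ + ⟪zet wt η v ω - zet wt η u ω, θ1⟫ + c
      = A ω + ⟪zet wt η v ω - zet wt η u ω, θ1⟫ := by simp only [A]; ring
  rw [this, Real.cos_add]
  ring

end Ctx

/-! ### Conditionally Gaussian vectors -/

/-- Fatou's lemma for real-valued functions, giving integrability of the limit. -/
theorem integrable_of_fatou {Q : Measure Ω} {f : ℕ → Ω → ℝ} {g : Ω → ℝ} {B : ℝ}
    (hf : ∀ n, Integrable (f n) Q) (h0 : ∀ n, ∀ᵐ ω ∂Q, 0 ≤ f n ω)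
    (hB : ∀ n, ∫ ω, f n ω ∂Q ≤ B) (hlim : ∀ᵐ ω ∂Q, Tendsto (fun n => f n ω) atTop (nhds (g ω))) :
    Integrable g Q ∧ ∫ ω, g ω ∂Q ≤ B := by
  have hg : AEStronglyMeasurable g Q :=
    aestronglyMeasurable_of_tendsto_ae atTop (fun n => (hf n).1) hlim
  have hg0 : ∀ᵐ ω ∂Q, 0 ≤ g ω := by
    filter_upwards [ae_all_iff.2 h0, hlim] with ω h1 h2
    exact ge_of_tendsto' h2 h1
  have hB0 : 0 ≤ B := (integral_nonneg_of_ae (h0 0)).trans (hB 0)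
  have key : ∫⁻ ω, ENNReal.ofReal (g ω) ∂Q ≤ ENNReal.ofReal B := by
    calc ∫⁻ ω, ENNReal.ofReal (g ω) ∂Q
        = ∫⁻ ω, liminf (fun n => ENNReal.ofReal (f n ω)) atTop ∂Q := by
          refine lintegral_congr_ae ?_
          filter_upwards [hlim] with ω h
          exact ((ENNReal.continuous_ofReal.tendsto _).comp h).liminf_eq.symm
      _ ≤ liminf (fun n => ∫⁻ ω, ENNReal.ofReal (f n ω) ∂Q) atTop :=
          lintegral_liminf_le' fun n => (hf n).1.aemeasurable.ennreal_ofReal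
      _ ≤ liminf (fun _ : ℕ => ENNReal.ofReal B) atTop := by
          refine liminf_le_liminf (Eventually.of_forall fun n => ?_)
          rw [← ofReal_integral_eq_lintegral_ofReal (hf n) (h0 n)]
          exact ENNReal.ofReal_le_ofReal (hB n)
      _ = ENNReal.ofReal B := by simp
  have hi : Integrable g Q := by
    refine ⟨hg, ?_⟩
    rw [hasFiniteIntegral_iff_ofReal hg0]
    exact key.trans_lt ENNReal.ofReal_lt_top
  refine ⟨hi, ?_⟩
  rwa [← ENNReal.ofReal_le_ofReal_iff hB0, ofReal_integral_eq_lintegral_ofReal hi hg0]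

/-- `Δ` has, conditionally on `m`, the characteristic function of a centred Gaussian vector with
covariance at most `τ` times the identity. -/
structure CondGauss {E : Type} [NormedAddCommGroup E] [InnerProductSpace ℝ E]
    [MeasurableSpace E] [BorelSpace E] {A : Type} (m : MeasurableSpace A) {m0 : MeasurableSpace A}
    (Q : Measure A) (κ : E → ℝ)
    (Δ : A → E) (τ : A → ℝ) (R : ℝ) : Prop where
  le : m ≤ m0
  mτ : Measurable[m] τ
  mΔ : Measurable[m0] Δ
  τ0 : ∀ᵐ ω ∂Q, 0 ≤ τ ω
  τR : ∀ᵐ ω ∂Q, τ ω ≤ R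
  hom : ∀ (ε : ℝ) θ, κ (ε • θ) = ε ^ 2 * κ θ
  κ0 : ∀ θ, 0 ≤ κ θ
  κ1 : ∀ θ, κ θ ≤ ‖θ‖ ^ 2
  cos : ∀ θ Z, BM m Z → ∫ ω, Z ω * Real.cos ⟪Δ ω, θ⟫ ∂Q
    = ∫ ω, Z ω * Real.exp (-(κ θ / 2 * |τ ω|)) ∂Q
  sin : ∀ θ Z, BM m Z → ∫ ω, Z ω * Real.sin ⟪Δ ω, θ⟫ ∂Q = 0

namespace CondGauss

variable {E : Type} [NormedAddCommGroup E] [InnerProductSpace ℝ E]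
    [MeasurableSpace E] [BorelSpace E] [FiniteDimensional ℝ E] {A : Type} {m m0 : MeasurableSpace A}
    {Q : Measure A} [IsFiniteMeasure Q] {κ : E → ℝ} {Δ : A → E} {τ : A → ℝ} {R : ℝ}

theorem mI (S : CondGauss m Q κ Δ τ R) (θ : E) : Measurable (fun ω => ⟪Δ ω, θ⟫) :=
  S.mΔ.inner measurable_const

theorem intτ (S : CondGauss m Q κ Δ τ R) {Z : A → ℝ} (hZ : BM m Z) :
    Integrable (fun ω => Z ω * τ ω) Q := by
  obtain ⟨c, hc⟩ := hZ.2
  refine Integrable.of_bound ((hZ.1.mul S.mτ).mono S.le le_rfl).aestronglyMeasurable (c * |R|) ?_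
  filter_upwards [S.τ0, S.τR] with ω h1 h2
  rw [norm_mul, Real.norm_eq_abs, Real.norm_eq_abs]
  refine mul_le_mul (hc ω) ?_ (abs_nonneg _) ((abs_nonneg _).trans (hc ω))
  rw [abs_of_nonneg h1]
  exact h2.trans (le_abs_self _)

/-- Conditional second moment, from the second difference quotients of the characteristic function. -/
theorem second (S : CondGauss m Q κ Δ τ R) (θ : E) {Z : A → ℝ} (hZ : BM m Z) (hZ0 : ∀ ω, 0 ≤ Z ω) :
    Integrable (fun ω => Z ω * ⟪Δ ω, θ⟫ ^ 2) Q ∧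
      ∫ ω, Z ω * ⟪Δ ω, θ⟫ ^ 2 ∂Q ≤ ‖θ‖ ^ 2 * ∫ ω, Z ω * τ ω ∂Q := by
  let ε : ℕ → ℝ := fun n => 1 / ((n:ℝ) + 1)
  have hε : ∀ n, 0 < ε n := fun n => by positivity
  have hεl : Tendsto ε atTop (nhds 0) := tendsto_one_div_add_atTop_nhds_zero_nat
  have hZ' : BM inferInstance Z := hZ.le S.le
  have icos : ∀ n, Integrable (fun ω => Z ω * Real.cos ⟪Δ ω, ε n • θ⟫) Q := fun n =>
    (hZ'.mul (BM.cos (S.mI _))).int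
  have mτ0 : Measurable τ := S.mτ.mono S.le le_rfl
  have bexp : ∀ n, BM inferInstance (fun ω => Real.exp (-(κ (ε n • θ) / 2 * |τ ω|))) := fun n =>
    BM.exp_neg (mτ0.abs.const_mul _)
      (fun ω => mul_nonneg (div_nonneg (S.κ0 _) zero_le_two) (abs_nonneg _))
  have i1 : ∀ n, Integrable (fun ω => 2 / ε n ^ 2 * (Z ω - Z ω * Real.cos ⟪Δ ω, ε n • θ⟫)) Q :=
    fun n => (hZ'.int.sub (icos n)).const_mul _
  refine integrable_of_fatou (f := fun n ω => 2 / ε n ^ 2 * (Z ω - Z ω * Real.cos ⟪Δ ω, ε n • θ⟫))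
    i1 (fun n => Eventually.of_forall fun ω => ?_) (fun n => ?_)
    (Eventually.of_forall fun ω => ?_)
  · refine mul_nonneg (by positivity) ?_
    nlinarith [hZ0 ω, Real.cos_le_one ⟪Δ ω, ε n • θ⟫]
  · rw [integral_const_mul, integral_sub hZ'.int (icos n), S.cos _ _ hZ,
      ← integral_sub hZ'.int (hZ'.mul (bexp n)).int, ← integral_const_mul, ← integral_const_mul]
    refine integral_mono_ae ((hZ'.int.sub (hZ'.mul (bexp n)).int).const_mul _)
      ((S.intτ hZ).const_mul _) ?_
    filter_upwards [S.τ0] with ω h0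
    have h1 : 1 - Real.exp (-(κ (ε n • θ) / 2 * |τ ω|)) ≤ ε n ^ 2 / 2 * (‖θ‖ ^ 2 * τ ω) := by
      have h2 := Real.add_one_le_exp (-(κ (ε n • θ) / 2 * |τ ω|))
      rw [S.hom, abs_of_nonneg h0] at *
      have h3 : ε n ^ 2 * (κ θ * τ ω) ≤ ε n ^ 2 * (‖θ‖ ^ 2 * τ ω) :=
        mul_le_mul_of_nonneg_left (mul_le_mul_of_nonneg_right (S.κ1 θ) h0) (sq_nonneg _)
      nlinarith
    have h2 := mul_le_mul_of_nonneg_left h1 (hZ0 ω)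
    have hp := hε n
    calc 2 / ε n ^ 2 * (Z ω - Z ω * Real.exp (-(κ (ε n • θ) / 2 * |τ ω|)))
        = 2 / ε n ^ 2 * (Z ω * (1 - Real.exp (-(κ (ε n • θ) / 2 * |τ ω|)))) := by ring
      _ ≤ 2 / ε n ^ 2 * (Z ω * (ε n ^ 2 / 2 * (‖θ‖ ^ 2 * τ ω))) :=
          mul_le_mul_of_nonneg_left h2 (by positivity)
      _ = ‖θ‖ ^ 2 * (Z ω * τ ω) := by field_simp
  · set y := ⟪Δ ω, θ⟫ with hy
    -- `2 (1 - cos (ε y)) / ε² = y² (sin (ε y / 2) / (ε y / 2))²`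
    have hs : ∀ n, 2 / ε n ^ 2 * (Z ω - Z ω * Real.cos ⟪Δ ω, ε n • θ⟫)
        = Z ω * (y * Real.sinc (ε n * y / 2)) ^ 2 := by
      intro n
      have hp := (hε n).ne'
      rw [inner_smul_right, ← hy]
      have e1 : Real.cos (ε n * y) = 1 - 2 * Real.sin (ε n * y / 2) ^ 2 := by
        have := Real.cos_two_mul (ε n * y / 2)
        rw [Real.cos_sq'] at this
        rw [show ε n * y = 2 * (ε n * y / 2) by ring, this]
        ring_nf
      rw [e1]
      by_cases h : y = 0
      · simp [h]
      · rw [Real.sinc_of_ne_zero (by positivity)]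
        field_simp
        ring
    simp only [hs]
    have h1 : Tendsto (fun n => Real.sinc (ε n * y / 2)) atTop (nhds 1) := by
      have := (Real.continuous_sinc.tendsto 0).comp
        (show Tendsto (fun n => ε n * y / 2) atTop (nhds 0) by
          simpa using (hεl.mul_const y).div_const 2)
      simpa [Function.comp_def] using this
    have := ((h1.const_mul y).pow 2).const_mul (Z ω)
    simpa using this

theorem memLp_inner (S : CondGauss m Q κ Δ τ R) (θ : E) : MemLp (fun ω => ⟪Δ ω, θ⟫) 2 Q := by
  rw [memLp_two_iff_integrable_sq (S.mI θ).aestronglyMeasurable]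
  simpa using (S.second θ (BM.const 1) (fun _ => zero_le_one)).1

/-- The conditional mean vanishes, also against square-integrable factors. -/
theorem mean_zero (S : CondGauss m Q κ Δ τ R) (θ : E) {Y : A → ℝ} (hY : Measurable[m] Y)
    (hY2 : MemLp Y 2 Q) : ∫ ω, Y ω * ⟪Δ ω, θ⟫ ∂Q = 0 := by
  have hI := S.memLp_inner θ
  have hI1 : Integrable (fun ω => ⟪Δ ω, θ⟫) Q := hI.integrable one_le_two
  -- bounded integrands
  have hb : ∀ Z, BM m Z → ∫ ω, Z ω * ⟪Δ ω, θ⟫ ∂Q = 0 := by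
    intro Z hZ
    obtain ⟨c, hc⟩ := hZ.2
    have hZ' : Measurable Z := hZ.1.mono S.le le_rfl
    let ε : ℕ → ℝ := fun n => 1 / ((n:ℝ) + 1)
    have hε : ∀ n, 0 < ε n := fun n => by positivity
    have hεl : Tendsto ε atTop (nhds 0) := tendsto_one_div_add_atTop_nhds_zero_nat
    have hs : ∀ n ω, Real.sin ⟪Δ ω, ε n • θ⟫ / ε n = ⟪Δ ω, θ⟫ * Real.sinc (ε n * ⟪Δ ω, θ⟫) := by
      intro n ω
      have hp := (hε n).ne'
      rw [inner_smul_right]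
      by_cases h : ⟪Δ ω, θ⟫ = 0
      · simp [h]
      · rw [Real.sinc_of_ne_zero (by positivity)]
        field_simp
    have hz : ∀ n, ∫ ω, Z ω * (⟪Δ ω, θ⟫ * Real.sinc (ε n * ⟪Δ ω, θ⟫)) ∂Q = 0 := by
      intro n
      have : ∀ ω, Z ω * (⟪Δ ω, θ⟫ * Real.sinc (ε n * ⟪Δ ω, θ⟫))
          = Z ω * Real.sin ⟪Δ ω, ε n • θ⟫ / ε n := fun ω => by rw [← hs]; ring
      simp only [this]
      rw [integral_div, S.sin _ _ hZ, zero_div]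
    have hl : Tendsto (fun n => ∫ ω, Z ω * (⟪Δ ω, θ⟫ * Real.sinc (ε n * ⟪Δ ω, θ⟫)) ∂Q) atTop
        (nhds (∫ ω, Z ω * ⟪Δ ω, θ⟫ ∂Q)) := by
      refine tendsto_integral_of_dominated_convergence (fun ω => c * |⟪Δ ω, θ⟫|)
        (fun n => ?_) (hI1.abs.const_mul c) (fun n => Eventually.of_forall fun ω => ?_)
        (Eventually.of_forall fun ω => ?_)
      · exact (hZ'.mul ((S.mI θ).mul (Real.continuous_sinc.measurable.comp
          ((S.mI θ).const_mul _)))).aestronglyMeasurable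
      · rw [norm_mul, norm_mul, Real.norm_eq_abs, Real.norm_eq_abs, Real.norm_eq_abs]
        exact mul_le_mul (hc ω) (mul_le_of_le_one_right (abs_nonneg _) (Real.abs_sinc_le_one _))
          (by positivity) ((abs_nonneg _).trans (hc ω))
      · have := (Real.continuous_sinc.tendsto 0).comp
          (show Tendsto (fun n => ε n * ⟪Δ ω, θ⟫) atTop (nhds 0) by
            simpa using hεl.mul_const ⟪Δ ω, θ⟫)
        simpa using (this.const_mul ⟪Δ ω, θ⟫).const_mul (Z ω)
    simp only [hz] at hl
    exact (tendsto_nhds_unique hl tendsto_const_nhds)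
  have hprod : Integrable (fun ω => Y ω * ⟪Δ ω, θ⟫) Q := hY2.integrable_mul hI
  have hl : Tendsto (fun n : ℕ => ∫ ω, (max (-(n:ℝ)) (min n (Y ω))) * ⟪Δ ω, θ⟫ ∂Q) atTop
      (nhds (∫ ω, Y ω * ⟪Δ ω, θ⟫ ∂Q)) := by
    refine tendsto_integral_of_dominated_convergence (fun ω => |Y ω * ⟪Δ ω, θ⟫|)
      (fun n => ?_) hprod.abs (fun n => Eventually.of_forall fun ω => ?_)
      (Eventually.of_forall fun ω => ?_)
    · exact ((measurable_const.max (measurable_const.min (hY.mono S.le le_rfl))).mul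
        (S.mI θ)).aestronglyMeasurable
    · rw [norm_mul, Real.norm_eq_abs, Real.norm_eq_abs, abs_mul]
      refine mul_le_mul_of_nonneg_right ?_ (abs_nonneg _)
      have hn : (0:ℝ) ≤ n := Nat.cast_nonneg n
      rw [abs_le]
      constructor
      · rcases le_total (n:ℝ) (Y ω) with h | h
        · rw [min_eq_left h]
          exact le_max_of_le_right ((neg_nonpos.2 (abs_nonneg _)).trans hn)
        · rw [min_eq_right h]
          exact le_max_of_le_right (neg_abs_le _)
      · exact max_le ((neg_nonpos.2 hn).trans (abs_nonneg _))
          ((min_le_right _ _).trans (le_abs_self _))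
    · refine tendsto_const_nhds.congr' ?_
      obtain ⟨N, hN⟩ := exists_nat_ge |Y ω|
      filter_upwards [eventually_ge_atTop N] with n hn
      have h1 : |Y ω| ≤ n := hN.trans (by exact_mod_cast hn)
      rw [min_eq_right ((le_abs_self _).trans h1), max_eq_right (neg_le.1 ((neg_le_abs _).trans h1))]
  have hz : ∀ n : ℕ, ∫ ω, (max (-(n:ℝ)) (min n (Y ω))) * ⟪Δ ω, θ⟫ ∂Q = 0 := fun n => by
    have hn : (0:ℝ) ≤ n := Nat.cast_nonneg n
    refine hb (fun ω => max (-(n:ℝ)) (min n (Y ω)))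
      ⟨measurable_const.max (measurable_const.min hY), n, fun ω => ?_⟩
    rw [abs_le]
    exact ⟨le_max_left _ _, max_le (by linarith) (min_le_left _ _)⟩
  simp only [hz] at hl
  exact (tendsto_nhds_unique hl tendsto_const_nhds)

theorem norm_sq_eq (b : OrthonormalBasis (Fin (Module.finrank ℝ E)) ℝ E) (y : E) :
    ‖y‖ ^ 2 = ∑ i, ⟪y, b i⟫ ^ 2 := by
  rw [← b.sum_sq_norm_inner_left y]
  simp

theorem memLp (S : CondGauss m Q κ Δ τ R) : MemLp Δ 2 Q := by
  have b := stdOrthonormalBasis ℝ E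
  have : Δ = fun ω => ∑ i, ⟪Δ ω, b i⟫ • b i := by
    ext ω
    conv_lhs => rw [← b.sum_repr (Δ ω)]
    refine Finset.sum_congr rfl fun i _ => ?_
    rw [b.repr_apply_apply, real_inner_comm]
  rw [this]
  exact memLp_finsetSum _ fun i _ =>
    (S.memLp_inner (b i)).of_le_mul (c := ‖b i‖)
      ((S.mI (b i)).smul_const _).aestronglyMeasurable (Eventually.of_forall fun ω => by
        rw [norm_smul, mul_comm])

/-- Conditional second moment of the whole vector, one basis direction at a time. -/
theorem second_vec (S : CondGauss m Q κ Δ τ R) {Z : A → ℝ} (hZ : BM m Z) (hZ0 : ∀ ω, 0 ≤ Z ω) :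
    Integrable (fun ω => Z ω * ‖Δ ω‖ ^ 2) Q ∧
      ∫ ω, Z ω * ‖Δ ω‖ ^ 2 ∂Q ≤ Module.finrank ℝ E * ∫ ω, Z ω * τ ω ∂Q := by
  have b := stdOrthonormalBasis ℝ E
  have e : ∀ ω, Z ω * ‖Δ ω‖ ^ 2 = ∑ i, Z ω * ⟪Δ ω, b i⟫ ^ 2 := fun ω => by
    rw [norm_sq_eq b, Finset.mul_sum]
  simp only [e]
  have hi := fun i => S.second (b i) hZ hZ0
  refine ⟨integrable_finsetSum _ fun i _ => (hi i).1, ?_⟩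
  rw [integral_finsetSum _ fun i _ => (hi i).1]
  refine (Finset.sum_le_sum fun i _ => (hi i).2).trans ?_
  simp

/-- The cross term of the energy estimate: `Δ` has conditional mean zero. -/
theorem cross (S : CondGauss m Q κ Δ τ R) {V : A → E} (hV : Measurable[m] V) (hV2 : MemLp V 2 Q)
    {σ : A → ℝ} (hσ : BM m σ) {B : A → E →L[ℝ] E} (hB : ∀ y, Measurable[m] (fun ω => B ω y))
    {c : ℝ} (hBc : ∀ ω, ‖B ω‖ ≤ c) :
    ∫ ω, σ ω * ⟪V ω, B ω (Δ ω)⟫ ∂Q = 0 := by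
  have b := stdOrthonormalBasis ℝ E
  obtain ⟨s, hs⟩ := hσ.2
  have mY : ∀ i, Measurable[m] (fun ω => σ ω * ⟪V ω, B ω (b i)⟫) := fun i =>
    hσ.1.mul (hV.inner (hB _))
  have lY : ∀ i, MemLp (fun ω => σ ω * ⟪V ω, B ω (b i)⟫) 2 Q := fun i => by
    refine hV2.of_le_mul (c := s * c) ((mY i).mono S.le le_rfl).aestronglyMeasurable
      (Eventually.of_forall fun ω => ?_)
    rw [norm_mul, Real.norm_eq_abs, mul_assoc]
    refine mul_le_mul (hs ω) ?_ (norm_nonneg _) ((abs_nonneg _).trans (hs ω))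
    refine (norm_inner_le_norm _ _).trans ?_
    rw [mul_comm]
    refine mul_le_mul_of_nonneg_right ?_ (norm_nonneg _)
    refine ((B ω).le_opNorm _).trans ?_
    rw [b.norm_eq_one, mul_one]
    exact hBc ω
  have e : ∀ ω, σ ω * ⟪V ω, B ω (Δ ω)⟫ = ∑ i, (σ ω * ⟪V ω, B ω (b i)⟫) * ⟪Δ ω, b i⟫ := fun ω => by
    conv_lhs => rw [← b.sum_repr (Δ ω), map_sum, inner_sum, Finset.mul_sum]
    refine Finset.sum_congr rfl fun i _ => ?_
    rw [map_smul, inner_smul_right, b.repr_apply_apply, real_inner_comm]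
    ring
  simp only [e]
  have hi : ∀ i, Integrable (fun ω => (σ ω * ⟪V ω, B ω (b i)⟫) * ⟪Δ ω, b i⟫) Q := fun i =>
    (lY i).integrable_mul (S.memLp_inner (b i))
  rw [integral_finsetSum _ fun i _ => hi i]
  exact Finset.sum_eq_zero fun i _ => S.mean_zero (b i) (mY i) (lY i)

end CondGauss

/-! ### One step of the energy estimate -/

namespace CondGauss

variable {E : Type} [NormedAddCommGroup E] [InnerProductSpace ℝ E]
    [MeasurableSpace E] [BorelSpace E] [FiniteDimensional ℝ E] {A : Type}
    {m m0 : MeasurableSpace A}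
    {Q : Measure A} [IsFiniteMeasure Q] {κ : E → ℝ} {Δ : A → E} {τ : A → ℝ} {R : ℝ}

theorem clm_meas {m : MeasurableSpace A} {B : A → E →L[ℝ] E} (hB : ∀ y, Measurable[m] (fun ω => B ω y))
    {Y : A → E} (hY : Measurable[m] Y) : Measurable[m] (fun ω => B ω (Y ω)) := by
  have b := stdOrthonormalBasis ℝ E
  have : ∀ ω, B ω (Y ω) = ∑ i, ⟪Y ω, b i⟫ • B ω (b i) := fun ω => by
    conv_lhs => rw [← b.sum_repr (Y ω), map_sum]
    refine Finset.sum_congr rfl fun i _ => ?_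
    rw [map_smul, b.repr_apply_apply, real_inner_comm]
  simp only [this]
  exact Finset.measurable_sum _ fun i _ => (hY.inner measurable_const).smul (hB _)

/-- One step of the energy estimate for a recursion `e ↦ e + τ a + B Δ`. -/
theorem step (S : CondGauss m Q κ Δ τ R) {e : A → E} (he : Measurable[m] e) (he2 : MemLp e 2 Q)
    {a : A → E} (ha : Measurable[m] a) {B : A → E →L[ℝ] E}
    (hB : ∀ y, Measurable[m] (fun ω => B ω y)) {g : A → ℝ} (hg : BM m g)
    (hag : ∀ ω, ‖a ω‖ ≤ g ω) (hBg : ∀ ω, ‖B ω‖ ≤ g ω)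
    {σ σ' : A → ℝ} (hσ : BM m σ) (hσ' : BM m σ') (h0' : ∀ ω, 0 ≤ σ' ω)
    (h0 : ∀ ω, 0 ≤ σ ω)
    (hσσ : ∀ᵐ ω ∂Q, σ' ω = σ ω * Real.exp (-τ ω)) :
    MemLp (fun ω => e ω + τ ω • a ω + B ω (Δ ω)) 2 Q ∧
      ∫ ω, σ' ω * ‖e ω + τ ω • a ω + B ω (Δ ω)‖ ^ 2 ∂Q
        ≤ ∫ ω, σ ω * ‖e ω‖ ^ 2 ∂Q
          + (1 + R + Module.finrank ℝ E) * ∫ ω, (σ ω * g ω ^ 2) * τ ω ∂Q := by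
  obtain ⟨c, hc⟩ := hg.2
  have hgc : ∀ ω, g ω ≤ c := fun ω => (le_abs_self _).trans (hc ω)
  have hg0 : ∀ ω, 0 ≤ g ω := fun ω => (norm_nonneg _).trans (hag ω)
  have mV : Measurable[m] (fun ω => e ω + τ ω • a ω) := he.add (S.mτ.smul ha)
  have lV : MemLp (fun ω => e ω + τ ω • a ω) 2 Q := by
    refine he2.add (MemLp.of_bound ((S.mτ.smul ha).mono S.le le_rfl).aestronglyMeasurable
      (R * c) ?_)
    filter_upwards [S.τ0, S.τR] with ω h1 h2
    simp only [norm_smul, Real.norm_eq_abs, abs_of_nonneg h1]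
    exact mul_le_mul h2 ((hag ω).trans (hgc ω)) (norm_nonneg _) (h1.trans h2)
  have mBΔ : Measurable (fun ω => B ω (Δ ω)) :=
    clm_meas (fun y => (hB y).mono S.le le_rfl) S.mΔ
  have lB : MemLp (fun ω => B ω (Δ ω)) 2 Q := by
    refine S.memLp.of_le_mul (c := c) mBΔ.aestronglyMeasurable (Eventually.of_forall fun ω => ?_)
    exact ((B ω).le_opNorm _).trans
      (mul_le_mul_of_nonneg_right ((hBg ω).trans (hgc ω)) (norm_nonneg _))
  refine ⟨lV.add lB, ?_⟩
  obtain ⟨s, hs⟩ := hσ.2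
  obtain ⟨s', hs'⟩ := hσ'.2
  have bd : ∀ {f : A → ℝ} {ρ : A → ℝ}, BM m ρ → Integrable f Q →
      Integrable (fun ω => ρ ω * f ω) Q := fun {f ρ} hρ hf => by
    obtain ⟨t, ht⟩ := hρ.2
    exact hf.bdd_mul (hρ.1.mono S.le le_rfl).aestronglyMeasurable
      (Eventually.of_forall fun ω => by simpa using ht ω)
  have iV : Integrable (fun ω => σ' ω * ‖e ω + τ ω • a ω‖ ^ 2) Q := bd hσ' lV.norm.integrable_sq
  have ie : Integrable (fun ω => σ ω * ‖e ω‖ ^ 2) Q := bd hσ he2.norm.integrable_sq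
  have iB : Integrable (fun ω => σ' ω * ‖B ω (Δ ω)‖ ^ 2) Q := bd hσ' lB.norm.integrable_sq
  have iX : Integrable (fun ω => σ' ω * ⟪e ω + τ ω • a ω, B ω (Δ ω)⟫) Q := by
    refine bd hσ' ((lV.norm.integrable_mul lB.norm).mono
      ((mV.mono S.le le_rfl).inner mBΔ).aestronglyMeasurable
      (Eventually.of_forall fun ω => ?_))
    simpa using norm_inner_le_norm (𝕜 := ℝ) (e ω + τ ω • a ω) (B ω (Δ ω))
  have bg : BM m (fun ω => σ ω * g ω ^ 2) := by
    simpa [pow_two] using hσ.mul (hg.mul hg)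
  have bg' : BM m (fun ω => σ' ω * g ω ^ 2) := by
    simpa [pow_two] using hσ'.mul (hg.mul hg)
  have sec := S.second_vec bg' (fun ω => mul_nonneg (h0' ω) (sq_nonneg _))
  have hexp : ∀ ω, ‖e ω + τ ω • a ω + B ω (Δ ω)‖ ^ 2 = ‖e ω + τ ω • a ω‖ ^ 2
      + 2 * ⟪e ω + τ ω • a ω, B ω (Δ ω)⟫ + ‖B ω (Δ ω)‖ ^ 2 := fun ω => norm_add_sq_real _ _
  have i1 : Integrable (fun ω => σ' ω * ‖e ω + τ ω • a ω‖ ^ 2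
      + 2 * (σ' ω * ⟪e ω + τ ω • a ω, B ω (Δ ω)⟫)) Q := iV.add (iX.const_mul 2)
  calc ∫ ω, σ' ω * ‖e ω + τ ω • a ω + B ω (Δ ω)‖ ^ 2 ∂Q
      = ∫ ω, (σ' ω * ‖e ω + τ ω • a ω‖ ^ 2 + 2 * (σ' ω * ⟪e ω + τ ω • a ω, B ω (Δ ω)⟫))
          + σ' ω * ‖B ω (Δ ω)‖ ^ 2 ∂Q := by
        refine integral_congr_ae (Eventually.of_forall fun ω => ?_)
        dsimp only
        rw [hexp]; ring
    _ = ∫ ω, σ' ω * ‖e ω + τ ω • a ω‖ ^ 2 ∂Q + ∫ ω, σ' ω * ‖B ω (Δ ω)‖ ^ 2 ∂Q := by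
        rw [integral_add i1 iB, integral_add iV (iX.const_mul 2), integral_const_mul,
          S.cross mV lV hσ' hB (fun ω => (hBg ω).trans (hgc ω))]
        ring
    _ ≤ (∫ ω, σ ω * ‖e ω‖ ^ 2 ∂Q + (1 + R) * ∫ ω, (σ ω * g ω ^ 2) * τ ω ∂Q)
        + Module.finrank ℝ E * ∫ ω, (σ ω * g ω ^ 2) * τ ω ∂Q := by
        refine add_le_add ?_ ?_
        · rw [← integral_const_mul, ← integral_add ie ((S.intτ bg).const_mul _)]
          refine integral_mono_ae iV (ie.add ((S.intτ bg).const_mul _)) ?_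
          filter_upwards [S.τ0, S.τR, hσσ] with ω h1 h2 h3
          have n1 : ‖e ω + τ ω • a ω‖ ≤ ‖e ω‖ + τ ω * g ω := by
            refine (norm_add_le _ _).trans (add_le_add le_rfl ?_)
            rw [norm_smul, Real.norm_eq_abs, abs_of_nonneg h1]
            exact mul_le_mul_of_nonneg_left (hag ω) h1
          have n2 : ‖e ω + τ ω • a ω‖ ^ 2 ≤ (1 + τ ω) * ‖e ω‖ ^ 2 + (1 + R) * (g ω ^ 2 * τ ω) := by
            refine (pow_le_pow_left₀ (norm_nonneg _) n1 2).trans ?_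
            nlinarith [mul_nonneg h1 (sq_nonneg (‖e ω‖ - g ω)),
              mul_nonneg (mul_nonneg h1 (sub_nonneg.2 h2)) (sq_nonneg (g ω))]
          have n3 : (1 + τ ω) * Real.exp (-τ ω) ≤ 1 := by
            rw [Real.exp_neg, ← div_eq_mul_inv, div_le_one (Real.exp_pos _), add_comm]
            exact Real.add_one_le_exp _
          have n4 : Real.exp (-τ ω) ≤ 1 := Real.exp_le_one_iff.2 (by linarith)
          have hR : 0 ≤ (1 + R) * (g ω ^ 2 * τ ω) :=
            mul_nonneg (by linarith) (mul_nonneg (sq_nonneg _) h1)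
          rw [h3, mul_assoc]
          have : Real.exp (-τ ω) * ‖e ω + τ ω • a ω‖ ^ 2
              ≤ ‖e ω‖ ^ 2 + (1 + R) * (g ω ^ 2 * τ ω) := by
            refine (mul_le_mul_of_nonneg_left n2 (Real.exp_pos _).le).trans ?_
            nlinarith [mul_le_mul_of_nonneg_right n3 (sq_nonneg ‖e ω‖),
              mul_le_mul_of_nonneg_right n4 hR]
          refine (mul_le_mul_of_nonneg_left this (h0 ω)).trans (le_of_eq ?_)
          ring
        · refine (le_trans ?_ sec.2).trans ?_
          · refine integral_mono_ae iB sec.1 (Eventually.of_forall fun ω => ?_)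
            dsimp only
            rw [mul_assoc, ← mul_pow]
            refine mul_le_mul_of_nonneg_left (pow_le_pow_left₀ (norm_nonneg _) ?_ 2) (h0' ω)
            exact ((B ω).le_opNorm _).trans
              (mul_le_mul_of_nonneg_right (hBg ω) (norm_nonneg _))
          · refine mul_le_mul_of_nonneg_left ?_ (Nat.cast_nonneg _)
            refine integral_mono_ae (S.intτ bg') (S.intτ bg) ?_
            filter_upwards [S.τ0, hσσ] with ω h1 h3
            refine mul_le_mul_of_nonneg_right (mul_le_mul_of_nonneg_right ?_ (sq_nonneg _)) h1
            rw [h3]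
            exact mul_le_of_le_one_right (h0 ω) (Real.exp_le_one_iff.2 (by linarith))
    _ = _ := by ring

end CondGauss

/-! ### Energy estimate for recursions driven by the local time -/

theorem norm_projS_sq_le {E : Type} [NormedAddCommGroup E] [InnerProductSpace ℝ E] {ν : E}
    (hν : ‖ν‖ = 1) (θ : E) : ‖projS ν θ‖ ^ 2 ≤ ‖θ‖ ^ 2 := by
  have h : ‖projS ν θ‖ ^ 2 = ‖θ‖ ^ 2 - ⟪θ, ν⟫ ^ 2 := by
    rw [projS, norm_sub_sq_real, inner_smul_right, norm_smul, hν, Real.norm_eq_abs, mul_one, sq_abs]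
    ring
  rw [h]
  linarith [sq_nonneg ⟪θ, ν⟫]

theorem projS_smul {E : Type} [NormedAddCommGroup E] [InnerProductSpace ℝ E] (ν : E)
    (ε : ℝ) (θ : E) : projS ν (ε • θ) = ε • projS ν θ := by
  rw [projS, projS, real_inner_smul_left, smul_sub, smul_smul]

/-- The restriction of `P` to the event that the local time at time `T` is at most `R`. -/
def cutP (P : Measure Ω) (η : ℝ → Ω → ℝ) (T R : ℝ) : Measure Ω := P.restrict {ω | η T ω ≤ R}

/-- The weight `exp (-η_t)`, kept bounded on the null event where `η_t < 0`. -/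
def wgt (η : ℝ → Ω → ℝ) (t : ℝ) (ω : Ω) : ℝ := Real.exp (-max (η t ω) 0)

instance (P : Measure Ω) [IsFiniteMeasure P] (η : ℝ → Ω → ℝ) (T R : ℝ) :
    IsFiniteMeasure (cutP P η T R) := by
  unfold cutP; infer_instance

theorem wgt_pos (η : ℝ → Ω → ℝ) (t : ℝ) (ω : Ω) : 0 < wgt η t ω := Real.exp_pos _

namespace Ctx

variable {E : Type} [NormedAddCommGroup E] [InnerProductSpace ℝ E]
    [MeasurableSpace E] [BorelSpace E] [FiniteDimensional ℝ E]
    {P : Measure Ω} [IsProbabilityMeasure P] {ν : E} {q : ℝ}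
    {α : E → E} {βt : E → E →L[ℝ] E} {K : ℝ} {w wt : ℝ → Ω → E} {x : E}
    {X : ℝ → Ω → E} {η : ℝ → Ω → ℝ}

/-- The increments of `ζ` are conditionally Gaussian given the past and the path of `w`. Restricting
to `{η_T ≤ R}`, an event of the path of `w`, keeps this and makes the conditional covariance
bounded. -/
theorem condGauss (C : Ctx P ν q α βt K w wt x X η) {u v T R : ℝ} (hu : 0 ≤ u) (huv : u ≤ v)
    (hvT : v ≤ T) : CondGauss (GF w wt η u) (cutP P η T R) (fun θ => ‖projS ν θ‖ ^ 2)
      (fun ω => zet wt η v ω - zet wt η u ω) (fun ω => η v ω - η u ω) R := by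
  have hv := hu.trans huv
  have hT := hv.trans hvT
  have mD : MeasurableSet[sigAll w] {ω | η T ω ≤ R} := measurableSet_le (C.mηs hT) measurable_const
  have mD0 : MeasurableSet {ω | η T ω ≤ R} := sigAll_le C.hw.meas _ mD
  have key : ∀ (Z f : Ω → ℝ), ∫ ω, Z ω * f ω ∂(cutP P η T R)
      = ∫ ω, (Z ω * {ω | η T ω ≤ R}.indicator (fun _ => (1:ℝ)) ω) * f ω ∂P := by
    intro Z f
    rw [cutP, ← integral_indicator mD0]
    refine integral_congr_ae (Eventually.of_forall fun ω => ?_)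
    by_cases h : ω ∈ {ω | η T ω ≤ R}
    · simp only [Set.indicator_of_mem h, mul_one]
    · simp only [Set.indicator_of_notMem h, mul_zero, zero_mul]
  have bZ : ∀ Z, BM (GF w wt η u) Z → BM (GF w wt η u)
      (fun ω => Z ω * {ω | η T ω ≤ R}.indicator (fun _ => (1:ℝ)) ω) := fun Z hZ =>
    hZ.mul (BM.indicator ((le_sup_left : sigAll w ≤ GF w wt η u) _ mD))
  refine ⟨C.GF_le u, ?_, (C.mzet0 hv).sub (C.mzet0 hu), ?_, ?_, ?_, fun _ => sq_nonneg _,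
    norm_projS_sq_le C.hν, ?_, ?_⟩
  · exact ((C.mηs hv).sub (C.mηs hu)).mono le_sup_left le_rfl
  · refine ae_restrict_of_ae ?_
    filter_upwards [C.skew.mono] with ω h
    exact sub_nonneg.2 (h huv)
  · refine (ae_restrict_iff' mD0).2 ?_
    filter_upwards [C.good] with ω ⟨h0, hm, _⟩ hD
    have h1 := h0 u hu
    have h2 : η v ω ≤ η T ω := hm hvT
    have h3 : η T ω ≤ R := hD
    linarith
  · intro ε θ
    rw [projS_smul, norm_smul, mul_pow, Real.norm_eq_abs, sq_abs]
  · intro θ Z hZ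
    rw [key, key]
    exact C.freeze_cos hu huv θ (bZ Z hZ)
  · intro θ Z hZ
    rw [key]
    exact C.freeze_sin hu huv θ (bZ Z hZ)

theorem wgt_bm (C : Ctx P ν q α βt K w wt x X η) {t : ℝ} (ht : 0 ≤ t) :
    BM (sigAll w) (wgt η t) :=
  BM.exp_neg ((C.mηs ht).max measurable_const) fun _ => le_max_right _ _

theorem cutP_ae {p : Ω → Prop} {T R : ℝ} (h : ∀ᵐ ω ∂P, p ω) : ∀ᵐ ω ∂(cutP P η T R), p ω :=
  ae_restrict_of_ae h

/-- Energy estimate for a recursion driven by the increments of `η` and `ζ`. -/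
theorem chain (C : Ctx P ν q α βt K w wt x X η) {T R : ℝ} {L : ℕ} {r : ℕ → ℝ} (hr : Monotone r)
    (hr0 : 0 ≤ r 0) (hrT : r L ≤ T) {e a : ℕ → Ω → E} {B : ℕ → Ω → E →L[ℝ] E} {g : ℕ → Ω → ℝ}
    (he : ∀ j < L, ∀ ω, e (j + 1) ω = e j ω + (η (r (j + 1)) ω - η (r j) ω) • a j ω
      + B j ω (zet wt η (r (j + 1)) ω - zet wt η (r j) ω))
    (ha : ∀ j < L, Measurable[GF w wt η (r j)] (a j))
    (hB : ∀ j < L, ∀ y, Measurable[GF w wt η (r j)] (fun ω => B j ω y))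
    (hg : ∀ j < L, BM (GF w wt η (r j)) (g j)) (hag : ∀ j < L, ∀ ω, ‖a j ω‖ ≤ g j ω)
    (hBg : ∀ j < L, ∀ ω, ‖B j ω‖ ≤ g j ω) {σ : Ω → ℝ} (hσ : BM (sigAll w) σ) (hσ0 : ∀ ω, 0 ≤ σ ω)
    (me : Measurable[GF w wt η (r 0)] (e 0)) (le : MemLp (e 0) 2 (cutP P η T R)) :
    ∀ j ≤ L, Measurable[GF w wt η (r j)] (e j) ∧ MemLp (e j) 2 (cutP P η T R) ∧
      ∫ ω, (σ ω * wgt η (r j) ω) * ‖e j ω‖ ^ 2 ∂(cutP P η T R)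
        ≤ ∫ ω, (σ ω * wgt η (r 0) ω) * ‖e 0 ω‖ ^ 2 ∂(cutP P η T R)
          + (1 + R + Module.finrank ℝ E) * ∑ i ∈ Finset.range j,
            ∫ ω, ((σ ω * wgt η (r i) ω) * g i ω ^ 2) * (η (r (i + 1)) ω - η (r i) ω)
              ∂(cutP P η T R) := by
  intro j
  induction j with
  | zero => intro _; exact ⟨me, le, by simp⟩
  | succ j ih =>
    intro hj
    obtain ⟨m1, l1, b1⟩ := ih (Nat.le_of_succ_le hj)
    have hjL : j < L := hj
    have h0 : 0 ≤ r j := hr0.trans (hr (Nat.zero_le j))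
    have h1 : r j ≤ r (j + 1) := hr (Nat.le_succ j)
    have S := C.condGauss (R := R) h0 h1 ((hr hj).trans hrT)
    have hs : ∀ i, BM (GF w wt η (r j)) (fun ω => σ ω * wgt η (r i) ω) := fun i =>
      (hσ.mul (C.wgt_bm (hr0.trans (hr (Nat.zero_le i))))).le le_sup_left
    have hs0 : ∀ i ω, 0 ≤ σ ω * wgt η (r i) ω := fun i ω => mul_nonneg (hσ0 ω) (wgt_pos _ _ _).le
    have hee : e (j + 1) = fun ω => e j ω + (η (r (j + 1)) ω - η (r j) ω) • a j ω
      + B j ω (zet wt η (r (j + 1)) ω - zet wt η (r j) ω) := funext (he j hjL)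
    obtain ⟨l2, b2⟩ := S.step m1 l1 (ha j hjL) (hB j hjL) (hg j hjL) (hag j hjL) (hBg j hjL)
      (hs j) (hs (j + 1)) (hs0 _) (hs0 _) (by
        refine cutP_ae ?_
        filter_upwards [C.good] with ω ⟨hp, _⟩
        rw [wgt, wgt, max_eq_left (hp _ h0), max_eq_left (hp _ (h0.trans h1)), mul_assoc,
          ← Real.exp_add]
        congr 2
        ring)
    have hle := GF_mono (w := w) (wt := wt) (η := η) h1
    refine ⟨?_, by rw [hee]; exact l2, ?_⟩
    · rw [hee]
      refine Measurable.add (Measurable.add (m1.mono hle le_rfl) (Measurable.smul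
        (S.mτ.mono hle le_rfl |>.mono le_rfl le_rfl) ((ha j hjL).mono hle le_rfl))) ?_
      exact CondGauss.clm_meas (fun y => (hB j hjL y).mono hle le_rfl)
        (Measurable.sub (C.mzet (h0.trans h1)) ((C.mzet h0).mono hle le_rfl))
    · rw [Finset.sum_range_succ, mul_add, ← add_assoc]
      simp only [hee]
      exact b2.trans (add_le_add b1 le_rfl)

end Ctx

/-! ### Coefficients and Riemann sums -/

theorem tendstoInMeasure_add {E : Type} [NormedAddCommGroup E] {P : Measure Ω}
    {f f' : ℕ → Ω → E} {g g' : Ω → E} (h : TendstoInMeasure P f atTop g)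
    (h' : TendstoInMeasure P f' atTop g') :
    TendstoInMeasure P (fun n ω => f n ω + f' n ω) atTop (fun ω => g ω + g' ω) := by
  intro ε hε
  have hε2 : 0 < ε / 2 := ENNReal.half_pos hε.ne'
  have hs := (h _ hε2).add (h' _ hε2)
  rw [add_zero] at hs
  refine tendsto_of_tendsto_of_tendsto_of_le_of_le tendsto_const_nhds hs (fun _ => zero_le)
    fun n => ?_
  refine (measure_mono fun ω hω => ?_).trans (measure_union_le _ _)
  by_contra hcon
  simp only [Set.mem_union, Set.mem_ofPred_eq, not_or, not_le] at hcon hω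
  have := (edist_add_add_le (f n ω) (f' n ω) (g ω) (g' ω)).trans_lt (ENNReal.add_lt_add hcon.1 hcon.2)
  rw [ENNReal.add_halves] at this
  exact absurd hω (not_le.2 this)

theorem tendstoInMeasure_neg {E : Type} [NormedAddCommGroup E] {P : Measure Ω}
    {f : ℕ → Ω → E} {g : Ω → E} (h : TendstoInMeasure P f atTop g) :
    TendstoInMeasure P (fun n ω => - f n ω) atTop (fun ω => - g ω) := by
  intro ε hε
  simpa only [edist_neg_neg] using h ε hε

section Coefficients

variable {E : Type} [NormedAddCommGroup E] [InnerProductSpace ℝ E]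

/-- The drift coefficient `qν + α(yˢ)`. -/
def drift (ν : E) (q : ℝ) (α : E → E) (y : E) : E := q • ν + α (projS ν y)

/-- The diffusion coefficient `β̃(yˢ)`. -/
def diffu (ν : E) (βt : E → E →L[ℝ] E) (y : E) : E →L[ℝ] E := βt (projS ν y)

theorem projS_sub (ν y z : E) : projS ν y - projS ν z = projS ν (y - z) := by
  simp only [projS, inner_sub_left, sub_smul]
  abel

end Coefficients

namespace Ctx

variable {E : Type} [NormedAddCommGroup E] [InnerProductSpace ℝ E]
    [MeasurableSpace E] [BorelSpace E] [FiniteDimensional ℝ E]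
    {P : Measure Ω} [IsProbabilityMeasure P] {ν : E} {q : ℝ}
    {α : E → E} {βt : E → E →L[ℝ] E} {K : ℝ} {w wt : ℝ → Ω → E} {x : E}
    {X : ℝ → Ω → E} {η : ℝ → Ω → ℝ}

theorem coef_aux {K a b c : ℝ} (hK : 0 < K) (hc : 0 ≤ c)
    (h : a ^ 2 + b ^ 2 ≤ K * c ^ 2) : a ≤ 2 * (1 + K) * c := by
  refine abs_le_of_sq_le_sq' ?_ (by positivity) |>.2
  have : K * c ^ 2 ≤ (2 * (1 + K) * c) ^ 2 := by
    rw [mul_pow]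
    exact mul_le_mul_of_nonneg_right (by nlinarith) (sq_nonneg c)
  nlinarith [sq_nonneg b]

theorem drift_sub_le (C : Ctx P ν q α βt K w wt x X η) (y z : E) :
    ‖drift ν q α y - drift ν q α z‖ ≤ 2 * (1 + K) * min 1 ‖y - z‖ := by
  have hK := C.hK
  have e : drift ν q α y - drift ν q α z = α (projS ν y) - α (projS ν z) := by
    simp [drift]
  rw [e, mul_min_of_nonneg _ _ (by positivity), mul_one]
  have h1 := C.hbd _ (projS_inner ν C.hν y)
  have h2 := C.hbd _ (projS_inner ν C.hν z)
  refine le_min ((norm_sub_le _ _).trans ?_) ?_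
  · linarith [norm_nonneg (βt (projS ν y)), norm_nonneg (βt (projS ν z))]
  · refine coef_aux (b := ‖βt (projS ν y) - βt (projS ν z)‖) hK (norm_nonneg _) ?_
    refine (C.hlip _ _ (projS_inner ν C.hν y) (projS_inner ν C.hν z)).trans ?_
    rw [projS_sub]
    exact mul_le_mul_of_nonneg_left (norm_projS_sq_le C.hν _) hK.le

theorem diffu_sub_le (C : Ctx P ν q α βt K w wt x X η) (y z : E) :
    ‖diffu ν βt y - diffu ν βt z‖ ≤ 2 * (1 + K) * min 1 ‖y - z‖ := by
  have hK := C.hK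
  rw [diffu, diffu, mul_min_of_nonneg _ _ (by positivity), mul_one]
  have h1 := C.hbd _ (projS_inner ν C.hν y)
  have h2 := C.hbd _ (projS_inner ν C.hν z)
  refine le_min ((norm_sub_le _ _).trans ?_) ?_
  · linarith [norm_nonneg (α (projS ν y)), norm_nonneg (α (projS ν z))]
  · refine coef_aux (b := ‖α (projS ν y) - α (projS ν z)‖) hK (norm_nonneg _) ?_
    have := C.hlip _ _ (projS_inner ν C.hν y) (projS_inner ν C.hν z)
    rw [projS_sub] at this
    have h3 := mul_le_mul_of_nonneg_left (norm_projS_sq_le C.hν (y - z)) hK.le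
    linarith

theorem drift_cont (C : Ctx P ν q α βt K w wt x X η) : Continuous (drift ν q α) := by
  have hK := C.hK
  refine (LipschitzWith.of_dist_le_mul (K := (2 * (1 + K)).toNNReal) fun y z => ?_).continuous
  rw [dist_eq_norm, dist_eq_norm, Real.coe_toNNReal _ (by positivity)]
  exact (C.drift_sub_le y z).trans (mul_le_mul_of_nonneg_left (min_le_right _ _) (by positivity))

theorem diffu_cont (C : Ctx P ν q α βt K w wt x X η) : Continuous (diffu ν βt) := by
  have hK := C.hK
  refine (LipschitzWith.of_dist_le_mul (K := (2 * (1 + K)).toNNReal) fun y z => ?_).continuous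
  rw [dist_eq_norm, dist_eq_norm, Real.coe_toNNReal _ (by positivity)]
  exact (C.diffu_sub_le y z).trans (mul_le_mul_of_nonneg_left (min_le_right _ _) (by positivity))

/-- The solution is adapted to `M_t`. -/
theorem mX (C : Ctx P ν q α βt K w wt x X η) {t : ℝ} (ht : 0 ≤ t) :
    Measurable[MF w wt η t] (X t) :=
  (C.sol.adapted t ht).mono (MFilt_le_MF ht) le_rfl

/-- The Riemann sums of both integrals along the grid `k h`, `i ≤ k < i + m`. -/
def _root_.riem (ν : E) (q : ℝ) (α : E → E) (βt : E → E →L[ℝ] E) (X ζ : ℝ → Ω → E)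
    (η : ℝ → Ω → ℝ) (h : ℝ) (m : ℕ) (ω : Ω) : E :=
  ∑ k ∈ Finset.range m, ((η (((k:ℝ) + 1) * h) ω - η ((k:ℝ) * h) ω) • drift ν q α (X ((k:ℝ) * h) ω)
    + diffu ν βt (X ((k:ℝ) * h) ω) (ζ (((k:ℝ) + 1) * h) ω - ζ ((k:ℝ) * h) ω))

/-- The solution minus its starting point and `w` is the limit in probability of the Riemann sums. -/
theorem riem_tendsto (C : Ctx P ν q α βt K w wt x X η) {δ : ℝ} (hδ : 0 ≤ δ) (κ : ℕ) :
    TendstoInMeasure P (fun (L : ℕ) => riem ν q α βt X (fun u ω => wt (η u ω) ω) η (δ / L) (κ * L))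
      atTop (fun ω => X (κ * δ) ω - x - (w (κ * δ) ω - w 0 ω)) := by
  rcases Nat.eq_zero_or_pos κ with rfl | hκ
  · refine TendstoInMeasure.congr (f := fun _ _ => (0:E)) (g := fun _ => 0)
      (fun n => Eventually.of_forall fun ω => ?_) ?_ ?_
    · simp [riem]
    · filter_upwards [C.sol.init] with ω h
      simp [h]
    · exact tendstoInMeasure_of_tendsto_ae (fun n => aestronglyMeasurable_const)
        (Eventually.of_forall fun _ => tendsto_const_nhds)
  · obtain ⟨A, M, hA, hM, he⟩ := C.sol.eqn (κ * δ) (by positivity)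
    have hk : Tendsto (fun L => κ * L) atTop atTop := tendsto_id.const_mul_atTop' hκ
    have h1 := tendstoInMeasure_add (hA.comp hk) (hM.comp hk)
    refine h1.congr (fun L => Eventually.of_forall fun ω => ?_) ?_
    · have hp : ∀ y : ℝ, 0 + y * (κ * δ - 0) / ((κ * L : ℕ) : ℝ) = y * (δ / L) := fun y => by
        push_cast
        rw [sub_zero, zero_add, mul_div_assoc, mul_div_mul_left _ _ (by positivity)]
      simp only [riem, Finset.sum_add_distrib, Function.comp_apply, hp, drift, diffu]
    · filter_upwards [he] with ω h
      rw [h]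
      abel

end Ctx

/-! ### The increment of the solution -/

namespace Ctx

variable {E : Type} [NormedAddCommGroup E] [InnerProductSpace ℝ E]
    [MeasurableSpace E] [BorelSpace E] [FiniteDimensional ℝ E]
    {P : Measure Ω} [IsProbabilityMeasure P] {ν : E} {q : ℝ}
    {α : E → E} {βt : E → E →L[ℝ] E} {K : ℝ} {w wt : ℝ → Ω → E} {x : E}
    {X : ℝ → Ω → E} {η : ℝ → Ω → ℝ}

/-- On a single interval `[κδ, (κ+1)δ]` the increment of the solution is, along a subsequence, the
almost sure limit of Riemann sums. -/
theorem fine_tendsto (C : Ctx P ν q α βt K w wt x X η) {δ u v : ℝ} (hδ : 0 ≤ δ) {κ : ℕ}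
    (hu : u = κ * δ) (hv : v = (κ + 1) * δ) :
    ∃ ns : ℕ → ℕ, (∀ n, 0 < ns n) ∧ ∀ᵐ ω ∂P, Tendsto (fun n => ∑ j ∈ Finset.range (ns n),
      ((η (grid u v (ns n) (j + 1)) ω - η (grid u v (ns n) j) ω)
          • drift ν q α (X (grid u v (ns n) j) ω)
        + diffu ν βt (X (grid u v (ns n) j) ω)
          (zet wt η (grid u v (ns n) (j + 1)) ω - zet wt η (grid u v (ns n) j) ω)))
      atTop (nhds (X v ω - X u ω - (w v ω - w u ω))) := by
  have h1 := tendstoInMeasure_add (C.riem_tendsto hδ (κ + 1))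
    (tendstoInMeasure_neg (C.riem_tendsto hδ κ))
  obtain ⟨ns, hns, hlim⟩ := h1.exists_seq_tendsto_ae
  refine ⟨fun n => ns (n + 1), fun n => (Nat.zero_le _).trans_lt (hns (Nat.lt_succ_self n)), ?_⟩
  filter_upwards [hlim, C.good] with ω h ⟨_, _, _, hz⟩
  have h2 := h.comp (tendsto_add_atTop_nat 1)
  have hu0 : 0 ≤ u := by rw [hu]; positivity
  have huv : u ≤ v := by rw [hu, hv]; nlinarith
  have hvu : v - u = δ := by rw [hu, hv]; ring
  have e : ((κ + 1 : ℕ) : ℝ) * δ = v := by rw [hv]; push_cast; ring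
  rw [e, ← hu] at h2
  have e2 : X v ω - X u ω - (w v ω - w u ω)
    = X v ω - x - (w v ω - w 0 ω) + -(X u ω - x - (w u ω - w 0 ω)) := by abel
  rw [e2]
  refine h2.congr fun n => ?_
  have hn : (0:ℝ) < ns (n + 1) := by
    exact_mod_cast (Nat.zero_le _).trans_lt (hns (Nat.lt_succ_self n))
  have hg : ∀ j : ℕ, ((κ * ns (n + 1) + j : ℕ) : ℝ) * (δ / ns (n + 1)) = grid u v (ns (n + 1)) j :=
    fun j => by
      rw [grid, hvu, hu]
      push_cast
      field_simp
  have hg' : ∀ j : ℕ, (((κ * ns (n + 1) + j : ℕ) : ℝ) + 1) * (δ / ns (n + 1))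
      = grid u v (ns (n + 1)) (j + 1) := fun j => by
    rw [← hg]
    push_cast
    ring
  simp only [Function.comp_apply, riem]
  rw [add_mul κ, one_mul, Finset.sum_range_add, add_neg_cancel_comm]
  refine Finset.sum_congr rfl fun j hj => ?_
  simp only [hg, hg']
  rw [hz _ (hu0.trans (le_grid huv)), hz _ (hu0.trans (le_grid huv))]

end Ctx

/-! ### One step of the Euler scheme: the drift -/

/-- The weight `exp (-λ η_t)`, kept bounded on the null event where `η_t < 0`. -/
def wl (lam : ℝ) (η : ℝ → Ω → ℝ) (t : ℝ) (ω : Ω) : ℝ := Real.exp (-(lam * max (η t ω) 0))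

theorem wl_pos (lam : ℝ) (η : ℝ → Ω → ℝ) (t : ℝ) (ω : Ω) : 0 < wl lam η t ω := Real.exp_pos _

theorem wl_le_one {lam : ℝ} (h : 0 ≤ lam) (η : ℝ → Ω → ℝ) (t : ℝ) (ω : Ω) : wl lam η t ω ≤ 1 :=
  Real.exp_le_one_iff.2 (neg_nonpos.2 (mul_nonneg h (le_max_right _ _)))

theorem wgt_le_one (η : ℝ → Ω → ℝ) (t : ℝ) (ω : Ω) : wgt η t ω ≤ 1 :=
  Real.exp_le_one_iff.2 (neg_nonpos.2 (le_max_right _ _))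

/-- One step of the Euler scheme over `[u, v]`, started from `Y`. -/
def eulStep {E : Type} [NormedAddCommGroup E] [InnerProductSpace ℝ E] (ν : E) (q : ℝ) (α : E → E)
    (βt : E → E →L[ℝ] E) (w wt : ℝ → Ω → E) (η : ℝ → Ω → ℝ) (u v : ℝ) (Y : Ω → E) (ω : Ω) : E :=
  Y ω + (η v ω - η u ω) • drift ν q α (Y ω) + diffu ν βt (Y ω) (zet wt η v ω - zet wt η u ω)
    + (w v ω - w u ω)

/-- The exponent making the weight absorb the Gronwall factor. -/
def lamC (K R : ℝ) (n : ℕ) : ℝ := 2 * (2 * (1 + K)) ^ 2 * (1 + R + n)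

namespace Ctx

variable {E : Type} [NormedAddCommGroup E] [InnerProductSpace ℝ E]
    [MeasurableSpace E] [BorelSpace E] [FiniteDimensional ℝ E]
    {P : Measure Ω} [IsProbabilityMeasure P] {ν : E} {q : ℝ}
    {α : E → E} {βt : E → E →L[ℝ] E} {K : ℝ} {w wt : ℝ → Ω → E} {x : E}
    {X : ℝ → Ω → E} {η : ℝ → Ω → ℝ}

/-- The squared truncated distance to a later position is controlled by the current error `a` and the
oscillation `o`. -/
theorem min_sq_le {a b c o : ℝ} (ha : 0 ≤ a) (h : min 1 b ≤ o) (ho : 0 ≤ o) (hc : c ≤ a + b) (hc0 : 0 ≤ c) :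
    (min 1 c) ^ 2 ≤ 2 * (a ^ 2 + o ^ 2) := by
  have h1 : min 1 c ≤ a + o := by
    rcases min_le_iff.1 h with h' | h'
    · exact (min_le_left _ _).trans (by linarith)
    · exact (min_le_right _ _).trans (by linarith)
  have h0 : 0 ≤ min 1 c := le_min zero_le_one hc0
  nlinarith [sq_nonneg (a - o)]

/-- One Gronwall factor is absorbed by the decrease of the weight. -/
theorem exp_gron {lam a b : ℝ} : Real.exp (-(lam * b)) * (1 + lam * (b - a)) ≤ Real.exp (-(lam * a)) := by
  have h := Real.add_one_le_exp (lam * (b - a))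
  calc _ ≤ Real.exp (-(lam * b)) * Real.exp (lam * (b - a)) :=
        mul_le_mul_of_nonneg_left (by linarith) (Real.exp_pos _).le
    _ = _ := by rw [← Real.exp_add]; congr 1; ring

/-- The error of a step frozen at `Y`, measured along the grid `r`: started from `e0`, it collects the
differences of the coefficients at `X` and at `Y`. -/
def _root_.fineErr {E : Type} [NormedAddCommGroup E] [InnerProductSpace ℝ E] (ν : E) (q : ℝ)
    (α : E → E) (βt : E → E →L[ℝ] E) (wt : ℝ → Ω → E) (X : ℝ → Ω → E) (η : ℝ → Ω → ℝ)
    (r : ℕ → ℝ) (Y : Ω → E) (e0 : Ω → E) (j : ℕ) (ω : Ω) : E :=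
  e0 ω + ∑ i ∈ Finset.range j, ((η (r (i + 1)) ω - η (r i) ω)
      • (drift ν q α (X (r i) ω) - drift ν q α (Y ω))
    + (diffu ν βt (X (r i) ω) - diffu ν βt (Y ω)) (zet wt η (r (i + 1)) ω - zet wt η (r i) ω))

theorem fineErr_zero {r : ℕ → ℝ} {Y e0 : Ω → E} : fineErr ν q α βt wt X η r Y e0 0 = e0 := by
  funext ω
  simp [fineErr]

theorem _root_.BM.min_norm {A : Type} {m : MeasurableSpace A} {V : A → E} (hV : Measurable[m] V) :
    BM m (fun a => min 1 ‖V a‖) := by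
  refine ⟨measurable_const.min hV.norm, 1, fun ω => ?_⟩
  rw [abs_of_nonneg (le_min zero_le_one (norm_nonneg _))]
  exact min_le_left _ _

/-- Energy estimate for the fine recursion over one coarse cell. The coefficients differ by at most a
multiple of `min 1 ‖X_r - Y‖`, hence by the error at time `u` and the oscillation `O` of `X`; the
former is absorbed by the weight `wl`. -/
theorem fine_bound (C : Ctx P ν q α βt K w wt x X η) {T R u v : ℝ} (hR : 0 ≤ R) (hu : 0 ≤ u)
    (huv : u ≤ v) (hvT : v ≤ T) {Y : Ω → E} (mY : Measurable[GF w wt η u] Y)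
    (l : MemLp (fun ω => X u ω - Y ω) 2 (cutP P η T R)) {O : Ω → ℝ} (hO : Measurable O)
    (hO0 : ∀ ω, 0 ≤ O ω) (hO1 : ∀ ω, O ω ≤ 1)
    (hXO : ∀ᵐ ω ∂P, ∀ r ∈ Set.Icc u v, min 1 ‖X r ω - X u ω‖ ≤ O ω) {L : ℕ} (hL : 0 < L) :
    MemLp (fineErr ν q α βt wt X η (grid u v L) Y (fun ω => X u ω - Y ω) L) 2 (cutP P η T R) ∧
    ∫ ω, (wl (lamC K R (Module.finrank ℝ E)) η v ω * wgt η v ω)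
        * ‖fineErr ν q α βt wt X η (grid u v L) Y (fun ω => X u ω - Y ω) L ω‖ ^ 2 ∂(cutP P η T R)
      ≤ ∫ ω, (wl (lamC K R (Module.finrank ℝ E)) η u ω * wgt η u ω) * ‖X u ω - Y ω‖ ^ 2 ∂(cutP P η T R)
        + lamC K R (Module.finrank ℝ E) * ∫ ω, O ω ^ 2 * (η v ω - η u ω) ∂(cutP P η T R) := by
  set lam := lamC K R (Module.finrank ℝ E) with hlam
  set Q := cutP P η T R with hQ
  have hK := C.hK
  have hlam0 : 0 ≤ lam := by rw [hlam, lamC]; positivity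
  have hv0 := hu.trans huv
  have hr0 : ∀ j, 0 ≤ grid u v L j := fun j => hu.trans (le_grid huv)
  have hgm : ∀ j, GF w wt η u ≤ GF w wt η (grid u v L j) := fun j => GF_mono (le_grid huv)
  have mXr : ∀ j, Measurable[GF w wt η (grid u v L j)] (X (grid u v L j)) := fun j =>
    (C.mX (hr0 j)).mono (MF_le_GF _) le_rfl
  have mYr : ∀ j, Measurable[GF w wt η (grid u v L j)] Y := fun j => mY.mono (hgm j) le_rfl
  have bw : ∀ t, 0 ≤ t → BM (sigAll w) (wl lam η t) := fun t ht =>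
    BM.exp_neg (((C.mηs ht).max measurable_const).const_mul lam)
      fun _ => mul_nonneg hlam0 (le_max_right _ _)
  have bg : ∀ j, BM (GF w wt η (grid u v L j))
      (fun ω => 2 * (1 + K) * min 1 ‖X (grid u v L j) ω - Y ω‖) := fun j => by
    exact (BM.const (2 * (1 + K))).mul (BM.min_norm ((mXr j).sub (mYr j)))
  have me0 : Measurable[GF w wt η u] (fun ω => X u ω - Y ω) :=
    ((C.mX hu).mono (MF_le_GF _) le_rfl).sub mY
  obtain ⟨-, c1, c2⟩ := C.chain (T := T) (R := R) (L := L) (r := grid u v L) (grid_mono huv)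
    (hr0 0) ((grid_le huv le_rfl).trans hvT)
    (e := fineErr ν q α βt wt X η (grid u v L) Y (fun ω => X u ω - Y ω))
    (a := fun j ω => drift ν q α (X (grid u v L j) ω) - drift ν q α (Y ω))
    (B := fun j ω => diffu ν βt (X (grid u v L j) ω) - diffu ν βt (Y ω))
    (g := fun j ω => 2 * (1 + K) * min 1 ‖X (grid u v L j) ω - Y ω‖)
    (fun j _ ω => by simp only [fineErr, Finset.sum_range_succ]; abel)
    (fun j _ => (C.drift_cont.measurable.comp (mXr j)).sub (C.drift_cont.measurable.comp (mYr j)))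
    (fun j _ y => by
      have hc : Continuous fun z => diffu ν βt z y := C.diffu_cont.clm_apply continuous_const
      simp only [sub_apply]
      exact (hc.measurable.comp (mXr j)).sub (hc.measurable.comp (mYr j)))
    (fun j _ => bg j) (fun j _ ω => C.drift_sub_le _ _) (fun j _ ω => C.diffu_sub_le _ _)
    (bw v hv0) (fun ω => (wl_pos _ _ _ _).le)
    (by rw [grid_zero, fineErr_zero]; exact me0)
    (by rw [fineErr_zero]; exact l) L le_rfl
  rw [← hQ] at c1 c2
  refine ⟨c1, ?_⟩
  rw [grid_zero, grid_last hL] at c2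
  refine c2.trans ?_
  simp only [fineErr_zero]
  have mm : ∀ {f : Ω → ℝ}, BM (sigAll w) f → Measurable f := fun h =>
    h.1.mono (sigAll_le C.hw.meas) le_rfl
  -- almost sure bounds on the increment of `η` under `Q`
  have S := C.condGauss (R := R) hu huv hvT
  have mD : Measurable (fun ω => η v ω - η u ω) := (C.mη0 hv0).sub (C.mη0 hu)
  have i0 : Integrable (fun ω => ‖X u ω - Y ω‖ ^ 2) Q := (memLp_two_iff_integrable_sq_norm l.1).1 l
  have iO : Integrable (fun ω => O ω ^ 2 * (η v ω - η u ω)) Q := by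
    have h1 : BM inferInstance (fun ω => O ω ^ 2) := ⟨hO.pow_const 2, 1, fun ω => by
      rw [abs_of_nonneg (sq_nonneg _)]
      exact pow_le_one₀ (hO0 ω) (hO1 ω)⟩
    refine Integrable.bdd_mul (c := 1) ?_ h1.1.aestronglyMeasurable (Eventually.of_forall fun ω => ?_)
    · simpa using S.intτ (BM.const 1)
    · rw [Real.norm_eq_abs, abs_of_nonneg (sq_nonneg _)]
      exact pow_le_one₀ (hO0 ω) (hO1 ω)
  have i1 : Integrable (fun ω => ‖X u ω - Y ω‖ ^ 2 * (η v ω - η u ω)) Q := by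
    refine i0.mul_bdd (c := R) mD.aestronglyMeasurable ?_
    filter_upwards [S.τ0, S.τR] with ω h1 h2
    rwa [Real.norm_eq_abs, abs_of_nonneg h1]
  have i2 : Integrable (fun ω => ‖X u ω - Y ω‖ ^ 2 * (η v ω - η u ω)
      + O ω ^ 2 * (η v ω - η u ω)) Q := i1.add iO
  have bW : ∀ s t, 0 ≤ s → 0 ≤ t → BM (sigAll w) (fun ω => wl lam η s ω * wgt η t ω) :=
    fun s t hs ht => (bw s hs).mul (C.wgt_bm ht)
  have nW : ∀ s t ω, ‖wl lam η s ω * wgt η t ω‖ ≤ 1 := fun s t ω => by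
    rw [norm_mul, Real.norm_eq_abs, Real.norm_eq_abs, abs_of_pos (wl_pos _ _ _ _),
      abs_of_pos (wgt_pos _ _ _)]
    exact mul_le_one₀ (wl_le_one hlam0 _ _ _) (wgt_pos _ _ _).le (wgt_le_one _ _ _)
  have iW : ∀ s t, 0 ≤ s → 0 ≤ t → ∀ f : Ω → ℝ, Integrable f Q →
      Integrable (fun ω => (wl lam η s ω * wgt η t ω) * f ω) Q := fun s t hs ht f hf =>
    hf.bdd_mul (mm (bW s t hs ht)).aestronglyMeasurable (Eventually.of_forall (nW s t))
  -- the sum of the local contributions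
  have hsum : ∑ i ∈ Finset.range L, ∫ ω, ((wl lam η v ω * wgt η (grid u v L i) ω)
        * (2 * (1 + K) * min 1 ‖X (grid u v L i) ω - Y ω‖) ^ 2)
        * (η (grid u v L (i + 1)) ω - η (grid u v L i) ω) ∂Q
      ≤ ∫ ω, (2 * (2 * (1 + K)) ^ 2) * ((wl lam η v ω * wgt η u ω)
          * (‖X u ω - Y ω‖ ^ 2 * (η v ω - η u ω) + O ω ^ 2 * (η v ω - η u ω))) ∂Q := by
    rw [← integral_finsetSum]
    swap
    · intro i hi
      have hi' := Finset.mem_range.1 hi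
      refine (C.condGauss (R := R) (hr0 i) (grid_le_succ huv)
        ((grid_le huv hi').trans hvT)).intτ ?_
      refine ((bW v _ hv0 (hr0 i)).le le_sup_left).mul ?_
      simp only [sq]
      exact (bg i).mul (bg i)
    refine integral_mono_of_nonneg ?_ ((iW v u hv0 hu _ (i2)).const_mul _) ?_
    · filter_upwards [cutP_ae C.skew.mono] with ω hm
      refine Finset.sum_nonneg fun i _ => ?_
      refine mul_nonneg (mul_nonneg (mul_nonneg (wl_pos _ _ _ _).le (wgt_pos _ _ _).le)
        (sq_nonneg _)) (sub_nonneg.2 (hm (grid_le_succ huv)))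
    · filter_upwards [cutP_ae C.good, cutP_ae hXO] with ω ⟨h0, hm, _⟩ hx
      have hs := sum_incr (u := u) (v := v) (N := fun t => η t ω) hL
      have e : (2 * (2 * (1 + K)) ^ 2) * ((wl lam η v ω * wgt η u ω)
          * (‖X u ω - Y ω‖ ^ 2 * (η v ω - η u ω) + O ω ^ 2 * (η v ω - η u ω)))
          = ∑ i ∈ Finset.range L, ((wl lam η v ω * wgt η u ω) * ((2 * (1 + K)) ^ 2
            * (2 * (‖X u ω - Y ω‖ ^ 2 + O ω ^ 2)))) *
              (η (grid u v L (i + 1)) ω - η (grid u v L i) ω) := by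
        rw [← Finset.mul_sum, hs]
        ring
      rw [e]
      refine Finset.sum_le_sum fun i hi => ?_
      have hi' := Finset.mem_range.1 hi
      refine mul_le_mul_of_nonneg_right ?_ (sub_nonneg.2 (hm (grid_le_succ huv)))
      refine mul_le_mul ?_ ?_ (sq_nonneg _) (mul_nonneg (wl_pos _ _ _ _).le (wgt_pos _ _ _).le)
      · refine mul_le_mul_of_nonneg_left ?_ (wl_pos _ _ _ _).le
        rw [wgt, wgt, Real.exp_le_exp]
        exact neg_le_neg (max_le_max (hm (le_grid huv)) le_rfl)
      · rw [mul_pow]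
        refine mul_le_mul_of_nonneg_left ?_ (sq_nonneg _)
        refine min_sq_le (norm_nonneg _) (hx _ (grid_mem huv hi'.le)) (hO0 ω) ?_ (norm_nonneg _)
        rw [add_comm]
        refine (norm_add_le _ _).trans' (le_of_eq ?_)
        congr 1
        abel
  have hn : (0:ℝ) ≤ 1 + R + Module.finrank ℝ E := by positivity
  refine (add_le_add le_rfl (mul_le_mul_of_nonneg_left hsum hn)).trans ?_
  rw [← integral_const_mul, ← integral_const_mul, ← integral_add (iW v u hv0 hu _ i0)
    (((iW v u hv0 hu _ (i2)).const_mul _).const_mul _),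
    ← integral_add (iW u u hu hu _ i0) (iO.const_mul _)]
  refine integral_mono_ae ((iW v u hv0 hu _ i0).add
    (((iW v u hv0 hu _ (i2)).const_mul _).const_mul _))
    ((iW u u hu hu _ i0).add (iO.const_mul _)) ?_
  filter_upwards [cutP_ae C.good] with ω ⟨h0, hm, _⟩
  have hΔ : 0 ≤ η v ω - η u ω := sub_nonneg.2 (hm huv)
  have a1 : wl lam η v ω * (1 + lam * (η v ω - η u ω)) ≤ wl lam η u ω := by
    rw [wl, wl, max_eq_left (h0 v hv0), max_eq_left (h0 u hu)]
    exact exp_gron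
  have a2 : wl lam η v ω * wgt η u ω ≤ 1 := (le_abs_self _).trans (nW v u ω)
  have a3 : 0 ≤ O ω ^ 2 * (η v ω - η u ω) := mul_nonneg (sq_nonneg _) hΔ
  have a4 := mul_le_mul_of_nonneg_right (mul_le_mul_of_nonneg_right a1 (wgt_pos η u ω).le)
    (sq_nonneg ‖X u ω - Y ω‖)
  have a5 := mul_le_mul_of_nonneg_left (mul_le_mul_of_nonneg_right a2 a3) hlam0
  have e : (1 + R + (Module.finrank ℝ E : ℝ)) * (2 * (2 * (1 + K)) ^ 2) = lam := by
    rw [hlam, lamC]; ring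
  rw [← mul_assoc (1 + R + (Module.finrank ℝ E : ℝ)), e]
  linarith

end Ctx

/-! ### One step of the Euler scheme: the energy inequality -/

namespace Ctx

variable {E : Type} [NormedAddCommGroup E] [InnerProductSpace ℝ E]
    [MeasurableSpace E] [BorelSpace E] [FiniteDimensional ℝ E]
    {P : Measure Ω} [IsProbabilityMeasure P] {ν : E} {q : ℝ}
    {α : E → E} {βt : E → E →L[ℝ] E} {K : ℝ} {w wt : ℝ → Ω → E} {x : E}
    {X : ℝ → Ω → E} {η : ℝ → Ω → ℝ}

theorem lamC_nonneg {K R : ℝ} {n : ℕ} (hR : 0 ≤ R) : 0 ≤ lamC K R n := by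
  unfold lamC; positivity

theorem eulStep_meas (C : Ctx P ν q α βt K w wt x X η) {u v : ℝ} (hu : 0 ≤ u) (huv : u ≤ v)
    {Y : Ω → E} (mY : Measurable[MF w wt η u] Y) :
    Measurable[MF w wt η v] (eulStep ν q α βt w wt η u v Y) := by
  have hv := hu.trans huv
  have hle : MF w wt η u ≤ MF w wt η v := MF_mono huv
  have mY' : Measurable[MF w wt η v] Y := mY.mono hle le_rfl
  have hn : natFilt w v ≤ MF w wt η v := le_sup_left
  unfold eulStep
  have m1 : Measurable[MF w wt η v] (fun ω => η v ω - η u ω) :=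
    ((C.mη hv).mono hn le_rfl).sub (((C.mη hu).mono (natFilt_mono huv) le_rfl).mono hn le_rfl)
  have m2 : Measurable[MF w wt η v] (fun ω => zet wt η v ω - zet wt η u ω) :=
    (zet_measurable hv (C.mη hv)).sub ((zet_measurable hu (C.mη hu)).mono hle le_rfl)
  have m3 : Measurable[MF w wt η v] (fun ω => w v ω - w u ω) :=
    ((measurable_natFilt hv le_rfl).sub (measurable_natFilt hu huv)).mono hn le_rfl
  refine ((mY'.add (m1.smul (C.drift_cont.measurable.comp mY'))).add ?_).add m3
  refine CondGauss.clm_meas (fun y => ?_) m2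
  have hc : Continuous fun z => diffu ν βt z y := C.diffu_cont.clm_apply continuous_const
  exact hc.measurable.comp mY'

/-- One coarse step: the weighted squared error grows at most by the squared modulus of continuity
integrated against the local time. -/
theorem coarse (C : Ctx P ν q α βt K w wt x X η) {T R δ u v : ℝ} (hR : 0 ≤ R) (hδ : 0 ≤ δ)
    {κ : ℕ} (hκu : u = κ * δ) (hκv : v = (κ + 1) * δ) (hvT : v ≤ T)
    {Y : Ω → E} (mY : Measurable[MF w wt η u] Y)
    (l : MemLp (fun ω => X u ω - Y ω) 2 (cutP P η T R)) {O : Ω → ℝ} (hO : Measurable O)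
    (hO0 : ∀ ω, 0 ≤ O ω) (hO1 : ∀ ω, O ω ≤ 1)
    (hXO : ∀ᵐ ω ∂P, ∀ r ∈ Set.Icc u v, min 1 ‖X r ω - X u ω‖ ≤ O ω) :
    MemLp (fun ω => X v ω - eulStep ν q α βt w wt η u v Y ω) 2 (cutP P η T R) ∧
    ∫ ω, (wl (lamC K R (Module.finrank ℝ E)) η v ω * wgt η v ω)
        * ‖X v ω - eulStep ν q α βt w wt η u v Y ω‖ ^ 2 ∂(cutP P η T R)
      ≤ ∫ ω, (wl (lamC K R (Module.finrank ℝ E)) η u ω * wgt η u ω) * ‖X u ω - Y ω‖ ^ 2 ∂(cutP P η T R)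
        + lamC K R (Module.finrank ℝ E) * ∫ ω, O ω ^ 2 * (η v ω - η u ω) ∂(cutP P η T R) := by
  have hlam0 : 0 ≤ lamC K R (Module.finrank ℝ E) := lamC_nonneg hR
  have hu : 0 ≤ u := by rw [hκu]; positivity
  have huv : u ≤ v := by rw [hκu, hκv]; nlinarith
  have hv := hu.trans huv
  obtain ⟨ns, hns, hlim⟩ := C.fine_tendsto hδ hκu hκv
  have fb := fun n => C.fine_bound hR hu huv hvT (mY.mono (MF_le_GF u) le_rfl) l hO hO0 hO1 hXO (hns n)
  have mw : Measurable (fun ω => wl (lamC K R (Module.finrank ℝ E)) η v ω * wgt η v ω) := by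
    have h0 := C.mη0 hv
    unfold wl wgt
    fun_prop
  have hw1 : ∀ ω, ‖wl (lamC K R (Module.finrank ℝ E)) η v ω * wgt η v ω‖ ≤ 1 := fun ω => by
    rw [norm_mul, Real.norm_eq_abs, Real.norm_eq_abs, abs_of_pos (wl_pos _ _ _ _),
      abs_of_pos (wgt_pos _ _ _)]
    exact mul_le_one₀ (wl_le_one hlam0 _ _ _) (wgt_pos _ _ _).le (wgt_le_one _ _ _)
  have hlim' : ∀ᵐ ω ∂P, Tendsto (fun n => fineErr ν q α βt wt X η (grid u v (ns n)) Y
      (fun ω => X u ω - Y ω) (ns n) ω) atTop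
      (nhds (X v ω - eulStep ν q α βt w wt η u v Y ω)) := by
    filter_upwards [hlim] with ω h
    have h2 := (h.const_add (X u ω - Y ω)).sub_const ((η v ω - η u ω) • drift ν q α (Y ω)
      + diffu ν βt (Y ω) (zet wt η v ω - zet wt η u ω))
    have e : X u ω - Y ω + (X v ω - X u ω - (w v ω - w u ω)) - ((η v ω - η u ω) • drift ν q α (Y ω)
      + diffu ν βt (Y ω) (zet wt η v ω - zet wt η u ω))
      = X v ω - eulStep ν q α βt w wt η u v Y ω := by
      unfold eulStep
      abel
    rw [e] at h2
    refine h2.congr fun n => ?_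
    have s1 := sum_incr (u := u) (v := v) (N := fun t => η t ω) (hns n)
    have s2 := Finset.sum_range_sub (fun k => zet wt η (grid u v (ns n) k) ω) (ns n)
    rw [grid_zero, grid_last (hns n)] at s2
    rw [← s1, ← s2, Finset.sum_smul, map_sum, ← Finset.sum_add_distrib, add_sub_assoc,
      ← Finset.sum_sub_distrib, fineErr]
    congr 1
    refine Finset.sum_congr rfl fun i _ => ?_
    rw [smul_sub, sub_apply]
    abel
  obtain ⟨hi, hb⟩ := integrable_of_fatou (Q := cutP P η T R)
    (f := fun n ω => (wl (lamC K R (Module.finrank ℝ E)) η v ω * wgt η v ω)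
      * ‖fineErr ν q α βt wt X η (grid u v (ns n)) Y (fun ω => X u ω - Y ω) (ns n) ω‖ ^ 2)
    (g := fun ω => (wl (lamC K R (Module.finrank ℝ E)) η v ω * wgt η v ω)
      * ‖X v ω - eulStep ν q α βt w wt η u v Y ω‖ ^ 2)
    (fun n => ((memLp_two_iff_integrable_sq_norm (fb n).1.1).1 (fb n).1).bdd_mul
      mw.aestronglyMeasurable (Eventually.of_forall hw1))
    (fun n => Eventually.of_forall fun ω => mul_nonneg
      (mul_nonneg (wl_pos _ _ _ _).le (wgt_pos _ _ _).le) (sq_nonneg _))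
    (fun n => (fb n).2)
    (cutP_ae (hlim'.mono fun ω h => (h.norm.pow 2).const_mul _))
  refine ⟨?_, hb⟩
  have me : Measurable (fun ω => X v ω - eulStep ν q α βt w wt η u v Y ω) :=
    ((C.mX hv).sub (C.eulStep_meas hu huv mY)).mono (C.MF_le v) le_rfl
  rw [memLp_two_iff_integrable_sq_norm me.aestronglyMeasurable]
  refine Integrable.mono' (hi.const_mul (Real.exp ((lamC K R (Module.finrank ℝ E) + 1) * R)))
    (me.norm.pow_const 2).aestronglyMeasurable ?_
  have mD0 : MeasurableSet {ω | η T ω ≤ R} := measurableSet_le (C.mη0 (hv.trans hvT)) measurable_const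
  refine (ae_restrict_iff' mD0).2 ?_
  filter_upwards [C.good] with ω ⟨h0, hm, _⟩ hD
  have hD' : η T ω ≤ R := hD
  have h1 : η v ω ≤ R := (hm hvT).trans hD'
  rw [Real.norm_eq_abs, abs_of_nonneg (sq_nonneg _), ← mul_assoc]
  refine le_mul_of_one_le_left (sq_nonneg _) ?_
  rw [wl, wgt, max_eq_left (h0 v hv), ← Real.exp_add, ← Real.exp_add]
  refine Real.one_le_exp ?_
  nlinarith

end Ctx

/-! ### The Euler scheme and the modulus of continuity -/

/-- The Euler scheme of mesh `δ`, started on the solution at time `k0 δ`. -/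
def scheme {E : Type} [NormedAddCommGroup E] [InnerProductSpace ℝ E] (ν : E) (q : ℝ) (α : E → E)
    (βt : E → E →L[ℝ] E) (w wt : ℝ → Ω → E) (X : ℝ → Ω → E) (η : ℝ → Ω → ℝ) (δ : ℝ) (k0 : ℕ) :
    ℕ → Ω → E
  | 0 => X (k0 * δ)
  | i + 1 => eulStep ν q α βt w wt η ((k0 + i : ℕ) * δ) ((k0 + (i + 1) : ℕ) * δ)
      (scheme ν q α βt w wt X η δ k0 i)

/-- The modulus of continuity of the path of `X` on `[0, T + 1]` at scale `2δ`, truncated at `1` and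
computed on rational times. -/
def modX {E : Type} [NormedAddCommGroup E] (X : ℝ → Ω → E) (T δ : ℝ) (ω : Ω) : ℝ :=
  ⨆ p : ℚ × ℚ, if (p.1 : ℝ) ∈ Set.Icc 0 (T + 1) ∧ (p.2 : ℝ) ∈ Set.Icc 0 (T + 1)
    ∧ |(p.1 : ℝ) - p.2| ≤ 2 * δ then min 1 ‖X p.1 ω - X p.2 ω‖ else 0

section Modulus

variable {E : Type} [NormedAddCommGroup E] {X : ℝ → Ω → E} {T δ : ℝ}

theorem modX_term (p : ℚ × ℚ) (ω : Ω) : (if (p.1 : ℝ) ∈ Set.Icc 0 (T + 1)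
    ∧ (p.2 : ℝ) ∈ Set.Icc 0 (T + 1) ∧ |(p.1 : ℝ) - p.2| ≤ 2 * δ
    then min 1 ‖X p.1 ω - X p.2 ω‖ else 0) ∈ Set.Icc (0:ℝ) 1 := by
  split_ifs
  · exact ⟨le_min zero_le_one (norm_nonneg _), min_le_left _ _⟩
  · exact ⟨le_rfl, zero_le_one⟩

theorem modX_bdd (ω : Ω) : BddAbove (Set.range fun p : ℚ × ℚ => if (p.1 : ℝ) ∈ Set.Icc 0 (T + 1)
    ∧ (p.2 : ℝ) ∈ Set.Icc 0 (T + 1) ∧ |(p.1 : ℝ) - p.2| ≤ 2 * δ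
    then min 1 ‖X p.1 ω - X p.2 ω‖ else 0) :=
  ⟨1, by rintro _ ⟨p, rfl⟩; exact (modX_term p ω).2⟩

theorem modX_nonneg (ω : Ω) : 0 ≤ modX X T δ ω :=
  (modX_term (0, 0) ω).1.trans (le_ciSup (modX_bdd ω) (0, 0))

theorem modX_le_one (ω : Ω) : modX X T δ ω ≤ 1 := ciSup_le fun p => (modX_term p ω).2

theorem modX_meas [MeasurableSpace E] [BorelSpace E] [SecondCountableTopology E]
    (hX : ∀ t, 0 ≤ t → Measurable (X t)) : Measurable (modX X T δ) := by
  refine Measurable.iSup fun p => ?_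
  by_cases h : (p.1 : ℝ) ∈ Set.Icc 0 (T + 1) ∧ (p.2 : ℝ) ∈ Set.Icc 0 (T + 1)
    ∧ |(p.1 : ℝ) - p.2| ≤ 2 * δ
  · simp only [if_pos h]
    exact measurable_const.min ((hX _ h.1.1).sub (hX _ h.2.1.1)).norm
  · simp only [if_neg h]
    exact measurable_const

/-- A real number is a limit of larger rationals that stay below a given bound. -/
theorem exists_rat_seq {r T : ℝ} (h : r < T) : ∃ p : ℕ → ℚ, (∀ n, r < p n ∧ (p n : ℝ) < T) ∧
    Tendsto (fun n => (p n : ℝ)) atTop (nhds r) := by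
  have : ∀ n : ℕ, ∃ p : ℚ, r < p ∧ (p : ℝ) < min T (r + 1 / ((n:ℝ) + 1)) := fun n =>
    exists_rat_btwn (lt_min h (by have : (0:ℝ) < 1 / ((n:ℝ) + 1) := by positivity
                                  linarith))
  choose p hp using this
  refine ⟨p, fun n => ⟨(hp n).1, (hp n).2.trans_le (min_le_left _ _)⟩, ?_⟩
  have h2 := (tendsto_one_div_add_atTop_nhds_zero_nat (𝕜 := ℝ)).const_add r
  rw [add_zero] at h2
  exact tendsto_of_tendsto_of_tendsto_of_le_of_le tendsto_const_nhds h2 (fun n => (hp n).1.le)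
    fun n => ((hp n).2.trans_le (min_le_right _ _)).le

/-- By continuity the rational modulus at scale `2δ` bounds the oscillation at real times at scale
`δ`; the room from `T` to `T + 1` allows rational approximation from above. -/
theorem le_modX {ω : Ω} (hc : ContinuousOn (fun t => X t ω) (Set.Ici 0)) (hδ : 0 < δ) {r r' : ℝ}
    (hr : r ∈ Set.Icc 0 T) (hr' : r' ∈ Set.Icc 0 T) (h : |r - r'| ≤ δ) :
    min 1 ‖X r ω - X r' ω‖ ≤ modX X T δ ω := by
  obtain ⟨p, hp, hpl⟩ := exists_rat_seq (show r < T + 1 by linarith [hr.2])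
  obtain ⟨p', hp', hpl'⟩ := exists_rat_seq (show r' < T + 1 by linarith [hr'.2])
  have hx : ∀ {r : ℝ} {p : ℕ → ℚ}, 0 ≤ r → (∀ n, r < p n ∧ (p n : ℝ) < T + 1) →
      Tendsto (fun n => (p n : ℝ)) atTop (nhds r) →
      Tendsto (fun n => X (p n) ω) atTop (nhds (X r ω)) := fun h0 h1 h2 =>
    (hc _ h0).tendsto.comp (tendsto_nhdsWithin_iff.2 ⟨h2, Eventually.of_forall fun n =>
      h0.trans (h1 n).1.le⟩)
  have hl := (tendsto_const_nhds (x := (1:ℝ))).min ((hx hr.1 hp hpl).sub (hx hr'.1 hp' hpl')).norm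
  refine le_of_tendsto hl ?_
  have hd : ∀ᶠ n in atTop, |(p n : ℝ) - p' n| < 2 * δ :=
    (hpl.sub hpl').abs.eventually (gt_mem_nhds (by linarith))
  filter_upwards [hd] with n hn
  have hcond : (p n : ℝ) ∈ Set.Icc 0 (T + 1) ∧ (p' n : ℝ) ∈ Set.Icc 0 (T + 1)
      ∧ |(p n : ℝ) - p' n| ≤ 2 * δ :=
    ⟨⟨hr.1.trans (hp n).1.le, (hp n).2.le⟩, ⟨hr'.1.trans (hp' n).1.le, (hp' n).2.le⟩, hn.le⟩
  have := le_ciSup (modX_bdd (X := X) (T := T) (δ := δ) ω) (p n, p' n)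
  simp only at this
  rwa [if_pos hcond] at this

theorem modX_tendsto {ω : Ω} (hc : ContinuousOn (fun t => X t ω) (Set.Ici 0)) {δs : ℕ → ℝ}
    (hδ : Tendsto δs atTop (nhds 0)) : Tendsto (fun n => modX X T (δs n) ω) atTop (nhds 0) := by
  have huc := isCompact_Icc.uniformContinuousOn_of_continuous
    (hc.mono (fun r (hr : r ∈ Set.Icc 0 (T + 1)) => hr.1))
  rw [Metric.uniformContinuousOn_iff] at huc
  rw [Metric.tendsto_atTop]
  intro ε hε
  obtain ⟨d, hd, h⟩ := huc (ε / 2) (half_pos hε)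
  obtain ⟨N, hN⟩ := eventually_atTop.1 (hδ.eventually (gt_mem_nhds (half_pos hd)))
  refine ⟨N, fun n hn => ?_⟩
  rw [Real.dist_eq, sub_zero, abs_of_nonneg (modX_nonneg ω)]
  refine lt_of_le_of_lt (ciSup_le fun p => ?_) (half_lt_self hε)
  split_ifs with hp
  · refine (min_le_right _ _).trans ?_
    rw [← dist_eq_norm]
    refine (h _ hp.1 _ hp.2.1 ?_).le
    rw [Real.dist_eq]
    have := hN n hn
    linarith [hp.2.2]
  · exact (half_pos hε).le

end Modulus

namespace Ctx

variable {E : Type} [NormedAddCommGroup E] [InnerProductSpace ℝ E]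
    [MeasurableSpace E] [BorelSpace E] [FiniteDimensional ℝ E]
    {P : Measure Ω} [IsProbabilityMeasure P] {ν : E} {q : ℝ}
    {α : E → E} {βt : E → E →L[ℝ] E} {K : ℝ} {w wt : ℝ → Ω → E} {x : E}
    {X : ℝ → Ω → E} {η : ℝ → Ω → ℝ}

theorem mX0 (C : Ctx P ν q α βt K w wt x X η) {t : ℝ} (ht : 0 ≤ t) : Measurable (X t) :=
  (C.mX ht).mono (C.MF_le t) le_rfl

theorem scheme_meas (C : Ctx P ν q α βt K w wt x X η) {δ : ℝ} (hδ : 0 ≤ δ) (k0 : ℕ) : ∀ i : ℕ,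
    Measurable[MF w wt η ((k0 + i : ℕ) * δ)] (scheme ν q α βt w wt X η δ k0 i)
  | 0 => C.mX (t := (k0 + 0 : ℕ) * δ) (by positivity)
  | i + 1 => C.eulStep_meas (by positivity)
      (mul_le_mul_of_nonneg_right (by exact_mod_cast Nat.le_succ _) hδ) (C.scheme_meas hδ k0 i)

/-- Summing the one-step estimate `coarse` along the scheme. -/
theorem scheme_bound (C : Ctx P ν q α βt K w wt x X η) {T R δ : ℝ} (hR : 0 ≤ R) (hδ : 0 < δ)
    (k0 : ℕ) : ∀ N : ℕ, ((k0 + N : ℕ) : ℝ) * δ ≤ T →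
    MemLp (fun ω => X ((k0 + N : ℕ) * δ) ω - scheme ν q α βt w wt X η δ k0 N ω) 2 (cutP P η T R) ∧
    ∫ ω, (wl (lamC K R (Module.finrank ℝ E)) η ((k0 + N : ℕ) * δ) ω * wgt η ((k0 + N : ℕ) * δ) ω)
        * ‖X ((k0 + N : ℕ) * δ) ω - scheme ν q α βt w wt X η δ k0 N ω‖ ^ 2 ∂(cutP P η T R)
      ≤ lamC K R (Module.finrank ℝ E) * ∫ ω, modX X T δ ω ^ 2
        * (η ((k0 + N : ℕ) * δ) ω - η (k0 * δ) ω) ∂(cutP P η T R)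
  | 0 => fun _ => by simp [scheme]
  | N + 1 => fun hT => by
    have h1 : ((k0 + N : ℕ) : ℝ) * δ ≤ ((k0 + (N + 1) : ℕ) : ℝ) * δ :=
      mul_le_mul_of_nonneg_right (by exact_mod_cast Nat.le_succ _) hδ.le
    have h00 : (0:ℝ) ≤ k0 * δ := by positivity
    have h01 : (k0:ℝ) * δ ≤ ((k0 + N : ℕ) : ℝ) * δ :=
      mul_le_mul_of_nonneg_right (by exact_mod_cast Nat.le_add_right _ _) hδ.le
    have h0 := h00.trans h01
    obtain ⟨l, b⟩ := C.scheme_bound hR hδ k0 N (h1.trans hT)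
    have hv : ((k0 + (N + 1) : ℕ) : ℝ) * δ = (((k0 + N : ℕ) : ℝ) + 1) * δ := by push_cast; ring
    obtain ⟨l', b'⟩ := C.coarse (O := modX X T δ) hR hδ.le rfl hv hT (C.scheme_meas hδ.le k0 N) l
      (modX_meas fun t ht => C.mX0 ht) modX_nonneg modX_le_one (by
        filter_upwards [C.sol.cont] with ω hc r hr
        refine le_modX hc hδ ⟨h0.trans hr.1, hr.2.trans hT⟩ ⟨h0, h1.trans hT⟩ ?_
        rw [abs_of_nonneg (sub_nonneg.2 hr.1)]
        have := hr.2
        rw [hv] at this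
        linarith)
    refine ⟨l', b'.trans ((add_le_add b le_rfl).trans (le_of_eq ?_))⟩
    have hi : ∀ a c, 0 ≤ a → a ≤ c → c ≤ T → Integrable (fun ω => modX X T δ ω ^ 2
        * (η c ω - η a ω)) (cutP P η T R) := fun a c ha hac hcT => by
      have i := (C.condGauss (R := R) ha hac hcT).intτ (BM.const 1)
      simp only [one_mul] at i
      refine i.bdd_mul (c := 1) ((modX_meas fun t ht => C.mX0 ht).pow_const 2).aestronglyMeasurable
        (Eventually.of_forall fun ω => ?_)
      rw [Real.norm_eq_abs, abs_of_nonneg (sq_nonneg _)]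
      exact pow_le_one₀ (modX_nonneg ω) (modX_le_one ω)
    rw [← mul_add, ← integral_add (hi _ _ h00 h01 (h1.trans hT)) (hi _ _ h0 h1 hT)]
    congr 1
    refine integral_congr_ae (Eventually.of_forall fun ω => ?_)
    dsimp only
    ring

end Ctx

/-! ### Convergence of the scheme -/

namespace Ctx

variable {E : Type} [NormedAddCommGroup E] [InnerProductSpace ℝ E]
    [MeasurableSpace E] [BorelSpace E] [FiniteDimensional ℝ E]
    {P : Measure Ω} [IsProbabilityMeasure P] {ν : E} {q : ℝ}
    {α : E → E} {βt : E → E →L[ℝ] E} {K : ℝ} {w wt : ℝ → Ω → E} {x : E}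
    {X : ℝ → Ω → E} {η : ℝ → Ω → ℝ}

theorem eta_cut (C : Ctx P ν q α βt K w wt x X η) {T R : ℝ} (hT : 0 ≤ T) :
    ∀ᵐ ω ∂(cutP P η T R), η T ω ≤ R := by
  have : MeasurableSet {ω | η T ω ≤ R} := measurableSet_le (C.mη0 hT) measurable_const
  exact (ae_restrict_iff' this).2 (Eventually.of_forall fun ω h => h)

/-- On `{η_T ≤ R}` the weights are bounded below, so that the plain squared error is controlled by the
modulus of continuity. -/
theorem scheme_L2 (C : Ctx P ν q α βt K w wt x X η) {T R δ : ℝ} (hR : 0 ≤ R) (hδ : 0 < δ)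
    (k0 N : ℕ) (hT : ((k0 + N : ℕ) : ℝ) * δ ≤ T) :
    Integrable (fun ω => ‖X ((k0 + N : ℕ) * δ) ω - scheme ν q α βt w wt X η δ k0 N ω‖ ^ 2)
      (cutP P η T R) ∧
    (Real.exp (-(lamC K R (Module.finrank ℝ E) * R)) * Real.exp (-R)) *
      ∫ ω, ‖X ((k0 + N : ℕ) * δ) ω - scheme ν q α βt w wt X η δ k0 N ω‖ ^ 2 ∂(cutP P η T R)
      ≤ lamC K R (Module.finrank ℝ E) * (∫ ω, modX X T δ ω ^ 2 * R ∂(cutP P η T R)) := by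
  have h0 : (0:ℝ) ≤ ((k0 + N : ℕ) : ℝ) * δ := by positivity
  have h00 : (0:ℝ) ≤ k0 * δ := by positivity
  have h01 : (k0:ℝ) * δ ≤ ((k0 + N : ℕ) : ℝ) * δ :=
    mul_le_mul_of_nonneg_right (by exact_mod_cast Nat.le_add_right _ _) hδ.le
  have hT0 : 0 ≤ T := h0.trans hT
  have hl : 0 ≤ lamC K R (Module.finrank ℝ E) := lamC_nonneg hR
  obtain ⟨l, b⟩ := C.scheme_bound hR hδ k0 N hT
  have i := l.integrable_norm_pow (by norm_num)
  refine ⟨i, ?_⟩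
  have hη : ∀ᵐ ω ∂(cutP P η T R), 0 ≤ η (k0 * δ) ω ∧ 0 ≤ η ((k0 + N : ℕ) * δ) ω ∧
      η ((k0 + N : ℕ) * δ) ω ≤ R := by
    filter_upwards [cutP_ae C.good, C.eta_cut (R := R) hT0] with ω ⟨a, m, _⟩ h
    have h2 : η ((k0 + N : ℕ) * δ) ω ≤ η T ω := m hT
    exact ⟨a _ h00, a _ h0, h2.trans h⟩
  have mw : Measurable (wl (lamC K R (Module.finrank ℝ E)) η ((k0 + N : ℕ) * δ)) :=
    Real.measurable_exp.comp (((C.mη0 h0).max measurable_const).const_mul _).neg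
  have mg : Measurable (wgt η ((k0 + N : ℕ) * δ)) :=
    Real.measurable_exp.comp ((C.mη0 h0).max measurable_const).neg
  have iw : Integrable (fun ω => (wl (lamC K R (Module.finrank ℝ E)) η ((k0 + N : ℕ) * δ) ω
      * wgt η ((k0 + N : ℕ) * δ) ω)
      * ‖X ((k0 + N : ℕ) * δ) ω - scheme ν q α βt w wt X η δ k0 N ω‖ ^ 2) (cutP P η T R) := by
    refine i.bdd_mul (c := 1) (mw.mul mg).aestronglyMeasurable (Eventually.of_forall fun ω => ?_)
    rw [Real.norm_eq_abs, abs_of_nonneg (mul_nonneg (wl_pos _ _ _ _).le (wgt_pos _ _ _).le)]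
    exact mul_le_one₀ (wl_le_one hl _ _ _) (wgt_pos _ _ _).le (wgt_le_one _ _ _)
  have mm : Measurable (modX X T δ) := modX_meas fun t ht => C.mX0 ht
  have im : Integrable (fun ω => modX X T δ ω ^ 2 * R) (cutP P η T R) := by
    refine (integrable_const R).bdd_mul (c := 1) (mm.pow_const 2).aestronglyMeasurable
      (Eventually.of_forall fun ω => ?_)
    rw [Real.norm_eq_abs, abs_of_nonneg (sq_nonneg _)]
    exact pow_le_one₀ (modX_nonneg ω) (modX_le_one ω)
  calc _ = ∫ ω, (Real.exp (-(lamC K R (Module.finrank ℝ E) * R)) * Real.exp (-R)) *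
        ‖X ((k0 + N : ℕ) * δ) ω - scheme ν q α βt w wt X η δ k0 N ω‖ ^ 2 ∂(cutP P η T R) :=
        (integral_const_mul _ _).symm
    _ ≤ _ := by
        refine integral_mono_ae (i.const_mul _) iw ?_
        filter_upwards [hη] with ω ⟨_, h1, h2⟩
        refine mul_le_mul_of_nonneg_right ?_ (sq_nonneg _)
        rw [wl, wgt, max_eq_left h1]
        gcongr
    _ ≤ _ := b
    _ ≤ _ := by
        refine mul_le_mul_of_nonneg_left ?_ hl
        refine integral_mono_of_nonneg ?_ im ?_
        · filter_upwards [cutP_ae C.good] with ω ⟨_, m, _⟩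
          exact mul_nonneg (sq_nonneg _) (sub_nonneg.2 (m h01))
        · filter_upwards [hη] with ω ⟨a, h1, h2⟩
          exact mul_le_mul_of_nonneg_left (by linarith) (sq_nonneg _)

theorem modX_int_tendsto (C : Ctx P ν q α βt K w wt x X η) {T R : ℝ} {δs : ℕ → ℝ}
    (hδ : Tendsto δs atTop (nhds 0)) :
    Tendsto (fun n => ∫ ω, modX X T (δs n) ω ^ 2 * R ∂(cutP P η T R)) atTop (nhds 0) := by
  have : Tendsto (fun n => ∫ ω, modX X T (δs n) ω ^ 2 * R ∂(cutP P η T R)) atTop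
      (nhds (∫ _, (0:ℝ) ∂(cutP P η T R))) := by
    refine tendsto_integral_of_dominated_convergence (fun _ => |R|)
      (fun n => (((modX_meas fun t ht => C.mX0 ht).pow_const 2).mul_const R).aestronglyMeasurable)
      (integrable_const _) (fun n => Eventually.of_forall fun ω => ?_) ?_
    · rw [norm_mul, Real.norm_eq_abs, Real.norm_eq_abs, abs_of_nonneg (sq_nonneg _)]
      exact mul_le_of_le_one_left (abs_nonneg _) (pow_le_one₀ (modX_nonneg ω) (modX_le_one ω))
    · filter_upwards [cutP_ae C.sol.cont] with ω hc
      simpa using ((modX_tendsto (T := T) hc hδ).pow 2).mul_const R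
  rwa [integral_zero] at this

/-- Convergence in probability on `{η_T ≤ R}`, by Chebyshev's inequality. -/
theorem scheme_cut (C : Ctx P ν q α βt K w wt x X η) {T R : ℝ} (hR : 0 ≤ R) {δs : ℕ → ℝ}
    {k0 N : ℕ → ℕ} (hδ : ∀ n, 0 < δs n) (hδ0 : Tendsto δs atTop (nhds 0))
    (hT : ∀ n, ((k0 n + N n : ℕ) : ℝ) * δs n ≤ T) {ε : ℝ} (hε : 0 < ε) :
    Tendsto (fun n => (cutP P η T R).real {ω | ε ≤ ‖X ((k0 n + N n : ℕ) * δs n) ω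
      - scheme ν q α βt w wt X η (δs n) (k0 n) (N n) ω‖}) atTop (nhds 0) := by
  set c := Real.exp (-(lamC K R (Module.finrank ℝ E) * R)) * Real.exp (-R) with hc
  have hc0 : 0 < c := by positivity
  have h := ((C.modX_int_tendsto (T := T) (R := R) hδ0).const_mul
    (lamC K R (Module.finrank ℝ E))).const_mul (1 / (c * ε ^ 2))
  rw [mul_zero, mul_zero] at h
  refine squeeze_zero (fun _ => measureReal_nonneg) (fun n => ?_) h
  obtain ⟨i, b⟩ := C.scheme_L2 hR (hδ n) (k0 n) (N n) (hT n)
  have m := mul_meas_ge_le_integral_of_nonneg (Eventually.of_forall fun ω => sq_nonneg _) i (ε ^ 2)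
  have e : {ω | ε ^ 2 ≤ ‖X ((k0 n + N n : ℕ) * δs n) ω
      - scheme ν q α βt w wt X η (δs n) (k0 n) (N n) ω‖ ^ 2} = {ω | ε ≤ ‖X ((k0 n + N n : ℕ) * δs n) ω
      - scheme ν q α βt w wt X η (δs n) (k0 n) (N n) ω‖} := by
    ext ω
    exact pow_le_pow_iff_left₀ hε.le (norm_nonneg _) two_ne_zero
  rw [e] at m
  rw [one_div, inv_mul_eq_div, le_div_iff₀ (by positivity)]
  refine le_trans ?_ b
  rw [← hc, mul_comm, mul_assoc]
  exact mul_le_mul_of_nonneg_left m hc0.le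

/-- The Euler scheme started on the solution converges to the solution in probability. -/
theorem scheme_tendsto (C : Ctx P ν q α βt K w wt x X η) {T : ℝ} (hT0 : 0 ≤ T) {δs : ℕ → ℝ}
    {k0 N : ℕ → ℕ} (hδ : ∀ n, 0 < δs n) (hδ0 : Tendsto δs atTop (nhds 0))
    (hT : ∀ n, ((k0 n + N n : ℕ) : ℝ) * δs n ≤ T) :
    TendstoInMeasure P (fun n ω => X ((k0 n + N n : ℕ) * δs n) ω
      - scheme ν q α βt w wt X η (δs n) (k0 n) (N n) ω) atTop (fun _ => 0) := by
  rw [tendstoInMeasure_iff_norm]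
  intro ε hε
  simp only [sub_zero]
  have hD : Tendsto (fun R : ℕ => P {ω | (R:ℝ) < η T ω}) atTop (nhds 0) := by
    have := tendsto_measure_iInter_atTop (μ := P) (s := fun R : ℕ => {ω | (R:ℝ) < η T ω})
      (fun R => (measurableSet_lt measurable_const (C.mη0 hT0)).nullMeasurableSet)
      (fun R R' h ω (hω : (R':ℝ) < η T ω) => show (R:ℝ) < η T ω from
        lt_of_le_of_lt (Nat.cast_le.2 h) hω) ⟨0, measure_ne_top _ _⟩
    have e : ⋂ R : ℕ, {ω | (R:ℝ) < η T ω} = ∅ := by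
      ext ω
      simp only [Set.mem_iInter, Set.mem_ofPred_eq, Set.mem_empty_iff_false, iff_false, not_forall,
        not_lt]
      exact exists_nat_ge _
    rwa [e, measure_empty] at this
  rw [ENNReal.tendsto_nhds_zero] at hD ⊢
  intro d hd
  have hd2 : 0 < d / 2 := ENNReal.half_pos hd.ne'
  obtain ⟨R, hR⟩ := (hD (d / 2) hd2).exists
  have h1 := C.scheme_cut (T := T) (Nat.cast_nonneg R) hδ hδ0 hT hε
  have h2 := ENNReal.tendsto_ofReal h1
  rw [ENNReal.ofReal_zero] at h2
  rw [ENNReal.tendsto_nhds_zero] at h2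
  filter_upwards [h2 (d / 2) hd2] with n hn
  rw [← ENNReal.add_halves d]
  have hm : MeasurableSet {ω | η T ω ≤ R} := measurableSet_le (C.mη0 hT0) measurable_const
  rw [ofReal_measureReal, cutP, Measure.restrict_apply' hm] at hn
  refine le_trans (measure_mono ?_) ((measure_union_le _ _).trans (add_le_add hR hn))
  intro ω hω
  by_cases h : η T ω ≤ R
  · exact Or.inr ⟨hω, h⟩
  · exact Or.inl (not_le.1 h)

end Ctx

/-! ### Propagation of orthogonality along the solution -/

namespace Ctx

variable {E : Type} [NormedAddCommGroup E] [InnerProductSpace ℝ E]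
    [MeasurableSpace E] [BorelSpace E] [FiniteDimensional ℝ E]
    {P : Measure Ω} [IsProbabilityMeasure P] {ν : E} {q : ℝ}
    {α : E → E} {βt : E → E →L[ℝ] E} {K : ℝ} {w wt : ℝ → Ω → E} {x : E}
    {X : ℝ → Ω → E} {η : ℝ → Ω → ℝ}

/-- One Euler step preserves orthogonality to the pair formed by the scheme and `x¹`. -/
theorem orth_step (C : Ctx P ν q α βt K w wt x X η) {u v : ℝ} (hu : 0 ≤ u) (huv : u ≤ v)
    {ξ : Ω → ℝ} (hξ : BM (MF w wt η u) ξ) {Y : Ω → E} (mY : Measurable[MF w wt η u] Y)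
    (h : Orth P ξ (fun ω => (Y ω, ⟪X u ω, ν⟫))) :
    Orth P ξ (fun ω => (eulStep ν q α βt w wt η u v Y ω, ⟪X v ω, ν⟫)) := by
  have hv := hu.trans huv
  have m1 : Measurable[MF w wt η u] (fun ω => ⟪X u ω, ν⟫) := (C.mX1 hu).mono le_sup_left le_rfl
  have mH : Measurable[MF w wt η u] (fun ω => (Y ω, ⟪X u ω, ν⟫)) := mY.prodMk m1
  have mN : Measurable (fun ω => (η v ω - η u ω, zet wt η v ω - zet wt η u ω, w v ω - w u ω)) :=
    ((C.mη0 hv).sub (C.mη0 hu)).prodMk (((C.mzet0 hv).sub (C.mzet0 hu)).prodMk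
      ((C.hw.meas v).sub (C.hw.meas u)))
  have key := Orth.pair (hξ.le (C.MF_le u)) (mH.mono (C.MF_le u) le_rfl) mN fun A hA => by
    have bA : BM inferInstance (A.indicator (fun _ => (1:ℝ))) := BM.indicator hA
    refine C.orth_incr hu huv (hξ.mul (bA.comp mH)) ?_
    exact (h.mul bA).comp measurable_snd
  let g : (E × ℝ) × (ℝ × E × E) → E × ℝ := fun p =>
    (p.1.1 + p.2.1 • drift ν q α p.1.1 + diffu ν βt p.1.1 p.2.2.1 + p.2.2.2,
      p.1.2 + q * p.2.1 + ⟪p.2.2.2, ν⟫)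
  have hg : Continuous g := by
    have h1 := C.drift_cont
    have h2 := C.diffu_cont
    have h3 : Continuous fun p : (E × ℝ) × (ℝ × E × E) => diffu ν βt p.1.1 p.2.2.1 :=
      (h2.comp (continuous_fst.comp continuous_fst)).clm_apply
        (continuous_fst.comp (continuous_snd.comp continuous_snd))
    have h4 : Continuous fun p : (E × ℝ) × (ℝ × E × E) => ⟪p.2.2.2, ν⟫ :=
      Continuous.inner (by fun_prop) continuous_const
    fun_prop
  refine (key.comp hg.measurable).congr ?_
  filter_upwards [C.skew.eqn u hu, C.skew.eqn v hv] with ω e1 e2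
  simp only [g, eulStep, Prod.mk.injEq, true_and]
  rw [e1, e2, inner_sub_left]
  ring

/-- The scheme started on the solution, paired with `x¹`, stays orthogonal to `ξ`. -/
theorem orth_scheme (C : Ctx P ν q α βt K w wt x X η) {δ : ℝ} (hδ : 0 ≤ δ) (k0 : ℕ)
    {ξ : Ω → ℝ} (hξ : BM (MF w wt η (k0 * δ)) ξ) (h : Orth P ξ (X (k0 * δ))) : ∀ i : ℕ,
    Orth P ξ (fun ω => (scheme ν q α βt w wt X η δ k0 i ω, ⟪X ((k0 + i : ℕ) * δ) ω, ν⟫))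
  | 0 => by
    have hg : Continuous fun y : E => (y, ⟪y, ν⟫) :=
      continuous_id.prodMk (continuous_id.inner continuous_const)
    exact h.comp hg.measurable
  | i + 1 => by
    have h0 : (0:ℝ) ≤ ((k0 + i : ℕ) : ℝ) * δ := by positivity
    have h1 : ((k0 + i : ℕ) : ℝ) * δ ≤ ((k0 + (i + 1) : ℕ) : ℝ) * δ :=
      mul_le_mul_of_nonneg_right (by exact_mod_cast Nat.le_succ _) hδ
    have h2 : (k0 : ℝ) * δ ≤ ((k0 + i : ℕ) : ℝ) * δ :=
      mul_le_mul_of_nonneg_right (by exact_mod_cast Nat.le_add_right _ _) hδ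
    exact C.orth_step h0 h1 (hξ.le (MF_mono h2)) (C.scheme_meas hδ k0 i)
      (C.orth_scheme hδ k0 hξ h i)

/-- Orthogonality propagates from time `s` to time `t` whenever the two times can be approximated
by grids through `s`. -/
theorem orth_limit (C : Ctx P ν q α βt K w wt x X η) {s t T : ℝ} (hT0 : 0 ≤ T) (ht : 0 ≤ t)
    {ξ : Ω → ℝ} (hξ : BM (MF w wt η s) ξ) (h : Orth P ξ (X s))
    {δs : ℕ → ℝ} {k0 N : ℕ → ℕ} (hδ : ∀ n, 0 < δs n) (hδ0 : Tendsto δs atTop (nhds 0))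
    (hT : ∀ n, ((k0 n + N n : ℕ) : ℝ) * δs n ≤ T) (hk : ∀ n, (k0 n : ℝ) * δs n = s)
    (hlim : Tendsto (fun n => ((k0 n + N n : ℕ) : ℝ) * δs n) atTop (nhds t)) :
    Orth P ξ (X t) := by
  have h0 : ∀ n, (0:ℝ) ≤ ((k0 n + N n : ℕ) : ℝ) * δs n := fun n => by
    have := hδ n
    positivity
  have hX : TendstoInMeasure P (fun n => X (((k0 n + N n : ℕ) : ℝ) * δs n)) atTop (X t) := by
    refine tendstoInMeasure_of_tendsto_ae (fun n => (C.mX0 (h0 n)).aestronglyMeasurable) ?_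
    filter_upwards [C.sol.cont] with ω hc
    exact (hc t ht).tendsto.comp (tendsto_nhdsWithin_iff.2 ⟨hlim, Eventually.of_forall h0⟩)
  have hS := tendstoInMeasure_add hX (tendstoInMeasure_neg
    (C.scheme_tendsto hT0 hδ hδ0 hT))
  refine Orth.of_tendstoInMeasure (hξ.le (C.MF_le s))
    (V := fun n => scheme ν q α βt w wt X η (δs n) (k0 n) (N n))
    (fun n => (C.scheme_meas (hδ n).le (k0 n) (N n)).mono (C.MF_le _) le_rfl) (C.mX0 ht)
    (fun n => ?_) ?_
  · exact (C.orth_scheme (hδ n).le (k0 n) (by rw [hk]; exact hξ) (by rw [hk]; exact h)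
      (N n)).comp measurable_fst
  · simpa using hS

/-- A bounded `M_s`-measurable variable that is orthogonal to `X_s` is orthogonal to `X_t`. -/
theorem orth_sol (C : Ctx P ν q α βt K w wt x X η) {s t : ℝ} (hs : 0 ≤ s) (hst : s ≤ t)
    {ξ : Ω → ℝ} (hξ : BM (MF w wt η s) ξ) (h : Orth P ξ (X s)) : Orth P ξ (X t) := by
  have ht := hs.trans hst
  rcases hst.eq_or_lt with rfl | hlt
  · exact h
  have hn : ∀ n : ℕ, (0:ℝ) < (n:ℝ) + 1 := fun n => by positivity
  have hz : ∀ c : ℝ, Tendsto (fun n : ℕ => c / ((n:ℝ) + 1)) atTop (nhds 0) := fun c => by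
    simpa [div_eq_mul_inv] using (tendsto_one_div_add_atTop_nhds_zero_nat (𝕜 := ℝ)).const_mul c
  rcases hs.eq_or_lt with rfl | hs0
  · have e : ∀ n : ℕ, ((0 + (n + 1) : ℕ) : ℝ) * (t / ((n:ℝ) + 1)) = t := fun n => by
      have := (hn n).ne'
      push_cast
      field_simp
      ring
    refine C.orth_limit (T := t) (δs := fun n => t / ((n:ℝ) + 1)) (k0 := fun _ => 0)
      (N := fun n => n + 1) ht ht hξ h (fun n => div_pos hlt (hn n)) (hz t) (fun n => (e n).le)
      (fun n => by simp) ?_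
    simp only [e]
    exact tendsto_const_nhds
  · have hd : ∀ n : ℕ, 0 < s / ((n:ℝ) + 1) := fun n => div_pos hs0 (hn n)
    have hk : ∀ n : ℕ, ((n + 1 : ℕ) : ℝ) * (s / ((n:ℝ) + 1)) = s := fun n => by
      have := (hn n).ne'
      push_cast
      field_simp
    -- the end points are the smallest grid points above `t`
    have e : ∀ n : ℕ, ((n + 1 + ⌈(t - s) / (s / ((n:ℝ) + 1))⌉₊ : ℕ) : ℝ) * (s / ((n:ℝ) + 1))
        = s + (⌈(t - s) / (s / ((n:ℝ) + 1))⌉₊ : ℝ) * (s / ((n:ℝ) + 1)) := fun n => by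
      rw [Nat.cast_add, add_mul, hk]
    have l : ∀ n : ℕ, t ≤ s + (⌈(t - s) / (s / ((n:ℝ) + 1))⌉₊ : ℝ) * (s / ((n:ℝ) + 1)) :=
      fun n => by
        have := (div_le_iff₀ (hd n)).1 (Nat.le_ceil ((t - s) / (s / ((n:ℝ) + 1))))
        linarith
    have r : ∀ n : ℕ, s + (⌈(t - s) / (s / ((n:ℝ) + 1))⌉₊ : ℝ) * (s / ((n:ℝ) + 1))
        ≤ t + s / ((n:ℝ) + 1) := fun n => by
      have h1 := Nat.ceil_lt_add_one (div_nonneg (sub_nonneg.2 hst) (hd n).le)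
      have h2 := mul_le_mul_of_nonneg_right h1.le (hd n).le
      rw [add_mul, div_mul_cancel₀ _ (hd n).ne', one_mul] at h2
      linarith
    have hds : ∀ n : ℕ, s / ((n:ℝ) + 1) ≤ s := fun n =>
      div_le_self hs (by linarith [Nat.cast_nonneg (α := ℝ) n])
    refine C.orth_limit (T := t + s) (δs := fun n => s / ((n:ℝ) + 1)) (k0 := fun n => n + 1)
      (N := fun n => ⌈(t - s) / (s / ((n:ℝ) + 1))⌉₊) (add_nonneg ht hs) ht hξ h hd (hz s)
      (fun n => ?_) hk ?_
    · rw [e]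
      linarith [r n, hds n]
    · simp only [e]
      have := (hz s).const_add t
      rw [add_zero] at this
      exact tendsto_of_tendsto_of_tendsto_of_le_of_le tendsto_const_nhds this l r

end Ctx

/-! ### Regression functions and the Markov property -/

/-- A bounded version of the regression function `E[f | V = ·]`. -/
theorem exists_regression {A F : Type} [MeasurableSpace F] {m0 : MeasurableSpace A} {P : Measure A}
    [IsProbabilityMeasure P] {V : A → F} (hV : Measurable V) {f : A → ℝ} (hf : BM m0 f) :
    ∃ h : F → ℝ, BM inferInstance h ∧
      ∀ g : F → ℝ, BM inferInstance g → ∫ a, (f a - h (V a)) * g (V a) ∂P = 0 := by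
  obtain ⟨mf, C, hC⟩ := hf
  have hC0 : 0 ≤ |C| := abs_nonneg C
  have hm : MeasurableSpace.comap V inferInstance ≤ m0 := hV.comap_le
  obtain ⟨h, mh, eh⟩ := Measurable.exists_eq_measurable_comp
    (stronglyMeasurable_condExp (m := MeasurableSpace.comap V inferInstance)
      (μ := P) (f := f)).measurable
  have fi : Integrable f P := BM.int ⟨mf, C, hC⟩
  have hb : ∀ᵐ a ∂P, |P[f|MeasurableSpace.comap V inferInstance] a| ≤ |C| :=
    ae_bdd_abs_condExp_of_ae_bdd_abs (R := |C|)
      (Eventually.of_forall fun a => (hC a).trans (le_abs_self C))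
  have hcut : BM inferInstance (fun y => max (-|C|) (min |C| (h y))) :=
    ⟨measurable_const.max (measurable_const.min mh), |C|, fun y =>
      abs_le.2 ⟨le_max_left _ _, max_le (by linarith) (min_le_left _ _)⟩⟩
  refine ⟨_, hcut, fun g hg => ?_⟩
  have mg : StronglyMeasurable[MeasurableSpace.comap V inferInstance] (fun a => g (V a)) :=
    (hg.1.comp (comap_measurable V)).stronglyMeasurable
  have i1 : Integrable (fun a => f a * g (V a)) P := (BM.mul ⟨mf, C, hC⟩ (hg.comp hV)).int
  have i2 : Integrable (fun a => max (-|C|) (min |C| (h (V a))) * g (V a)) P :=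
    ((hcut.comp hV).mul (hg.comp hV)).int
  have e := condExp_mul_of_stronglyMeasurable_right mg i1 fi
  have e2 : ∫ a, f a * g (V a) ∂P = ∫ a, max (-|C|) (min |C| (h (V a))) * g (V a) ∂P := by
    rw [← integral_condExp hm]
    refine integral_congr_ae ?_
    filter_upwards [e, hb] with a ha hba
    refine ha.trans ?_
    rw [Pi.mul_apply]
    rw [eh, Function.comp_apply] at hba ⊢
    rw [min_eq_right (abs_le.1 hba).2, max_eq_right (abs_le.1 hba).1]
  simp only [sub_mul]
  rw [integral_sub i1 i2, e2, sub_self]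

/-- Markov property of the strong solution: for all `0 ≤ s ≤ t` and Borel
`Γ ⊆ E` there is a measurable `Φ_{t-s}(·, Γ)` with
`E[1_{x(t,x) ∈ Γ} ξ] = E[Φ_{t-s}(x(s,x), Γ) ξ]` for every bounded `M_s`-measurable `ξ`. -/
theorem sde_markov_property
    {E : Type} [NormedAddCommGroup E] [InnerProductSpace ℝ E] [MeasurableSpace E] [BorelSpace E]
    (P : Measure Ω) [IsProbabilityMeasure P]
    (ν : E) (hν : ‖ν‖ = 1) (q : ℝ) (hq : q ∈ Set.Icc (-1 : ℝ) 1)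
    (α : E → E) (βt : E → E →L[ℝ] E)
    (hαS : ∀ v, ⟪α v, ν⟫ = 0) (hβS : ∀ v u, ⟪βt v u, ν⟫ = 0)
    (K : ℝ) (hK : 0 < K)
    (hbd : ∀ v : E, ⟪v, ν⟫ = 0 → ‖α v‖ + ‖βt v‖ ≤ K)
    (hlip : ∀ v v' : E, ⟪v, ν⟫ = 0 → ⟪v', ν⟫ = 0 →
      ‖α v - α v'‖ ^ 2 + ‖βt v - βt v'‖ ^ 2 ≤ K * ‖v - v'‖ ^ 2)
    (w : ℝ → Ω → E) (hw : IsWiener P w)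
    (wt : ℝ → Ω → E) (hwt : IsWienerIn P ν wt) (hind : IndepProc P w wt)
    (X : E → ℝ → Ω → E) (η : E → ℝ → Ω → ℝ)
    (hXmeas : ∀ t : ℝ, 0 ≤ t → Measurable fun p : E × Ω => X p.1 t p.2)
    (hskew : ∀ z : E, IsSkewLT P q (fun t ω => ⟪w t ω, ν⟫) ⟪z, ν⟫
      (fun t ω => ⟪X z t ω, ν⟫) (η z))
    (hsol : ∀ z : E, SolvesFrom P (MFilt w wt (η z)) ν q α βt w (η z)
      (fun u ω => wt (η z u ω) ω) 0 (fun _ => z) (X z))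
    (x : E) (s t : ℝ) (hs : 0 ≤ s) (hst : s ≤ t)
    (Γ : Set E) (hΓ : MeasurableSet Γ) :
    ∃ Φ : E → ℝ, Measurable Φ ∧
      ∀ ξ : Ω → ℝ, Measurable[MFilt w wt (η x) s] ξ → (∃ C, ∀ ω, |ξ ω| ≤ C) →
        ∫ ω, Set.indicator {ω | X x t ω ∈ Γ} (fun _ => (1 : ℝ)) ω * ξ ω ∂P
          = ∫ ω, Φ (X x s ω) * ξ ω ∂P := by
  have := hw.finiteDimensional
  have C : Ctx P ν q α βt K w wt x (X x) (η x) :=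
    ⟨hν, hK, hbd, hlip, hαS, hβS, hw, hwt, hind, hskew x, hsol x⟩
  have ht := hs.trans hst
  have bΓ : BM inferInstance (Γ.indicator fun _ => (1:ℝ)) := BM.indicator hΓ
  obtain ⟨Φ, hΦ, oΦ⟩ := exists_regression (P := P) (C.mX0 hs) (bΓ.comp (C.mX0 ht))
  refine ⟨Φ, hΦ.1, fun ξ mξ hξb => ?_⟩
  have hξ : BM (MF w wt (η x) s) ξ := ⟨mξ.mono (MFilt_le_MF hs) le_rfl, hξb⟩
  have hξ0 : BM inferInstance ξ := hξ.le (C.MF_le s)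
  obtain ⟨h, hh, oh⟩ := exists_regression (P := P) (C.mX0 hs) hξ0
  have os : Orth P (fun ω => ξ ω - h (X x s ω)) (X x s) := oh
  have ot := C.orth_sol hs hst (hξ.sub (hh.comp (C.mX hs))) os _ bΓ
  have b1 := bΓ.comp (C.mX0 ht)
  have b2 := hh.comp (C.mX0 hs)
  have b3 := hΦ.comp (C.mX0 hs)
  have e1 : ∫ ω, Γ.indicator (fun _ => (1:ℝ)) (X x t ω) * ξ ω ∂P
      = ∫ ω, Γ.indicator (fun _ => (1:ℝ)) (X x t ω) * h (X x s ω) ∂P := by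
    rw [← sub_eq_zero, ← integral_sub (b1.mul hξ0).int (b1.mul b2).int, ← ot]
    refine integral_congr_ae (Eventually.of_forall fun ω => ?_)
    dsimp only
    ring
  have e2 : ∫ ω, Γ.indicator (fun _ => (1:ℝ)) (X x t ω) * h (X x s ω) ∂P
      = ∫ ω, Φ (X x s ω) * h (X x s ω) ∂P := by
    rw [← sub_eq_zero, ← integral_sub (b1.mul b2).int (b3.mul b2).int, ← oΦ h hh]
    refine integral_congr_ae (Eventually.of_forall fun ω => ?_)
    dsimp only
    ring
  have e3 : ∫ ω, Φ (X x s ω) * ξ ω ∂P = ∫ ω, Φ (X x s ω) * h (X x s ω) ∂P := by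
    rw [← sub_eq_zero, ← integral_sub (b3.mul hξ0).int (b3.mul b2).int, ← oh Φ hΦ]
    refine integral_congr_ae (Eventually.of_forall fun ω => ?_)
    dsimp only
    ring
  exact e1.trans (e2.trans e3.symm)
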